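/- Let f(n) = (1/6)·#{(x,y) ∈ ℤ² : x² + xy + y² = n} for positive integers n and f(0) = 1. Then, as x → ∞, max_{n ≤ x} log f(f(n)) = (√(log x)/log₂ x)·( c/√2 + O(log₃ x / log₂ x) ), where c = (8·∑_{l=1}^∞ (log(1 + 1/l))²)^{1/2}. -/

import Mathlib

open Filter

/-- The normalized representation-counting function of the binary quadratic form `x² + xy + y²`,
with the convention `f(0) = 1`. -/
noncomputable def fForm (n : ℕ) : ℕ :=
  if n = 0 then 1 else Nat.card {p : ℤ × ℤ // p.1 ^ 2 + p.1 * p.2 + p.2 ^ 2 = (n : ℤ)} / 6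

/-- The constant `c = (8·∑_{l=1}^∞ (log(1 + 1/l))²)^{1/2}`. -/
noncomputable def cBEFS : ℝ :=
  Real.sqrt (8 * ∑' l : ℕ, (Real.log (1 + 1 / ((l : ℝ) + 1))) ^ 2)


lemma aux_cpow_diff {a b : ℝ} (ha : 1 ≤ a) (hab : a ≤ b) (hb : b ≤ a + 1) {s : ℂ} (hs : 0 < s.re) :
    ‖(a : ℂ) ^ (-s) - (b : ℂ) ^ (-s)‖ ≤ 2 * (1 + ‖s‖) ^ (1/20 : ℝ) * a ^ (-(s.re + 1/20)) := by
  have ha0 : 0 < a := by linarith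
  have h1 : ‖(a : ℂ) ^ (-s) - (b : ℂ) ^ (-s)‖ ≤ 2 * a ^ (-s.re) := by
    refine (norm_sub_le _ _).trans ?_
    rw [Complex.norm_cpow_eq_rpow_re_of_pos ha0, Complex.norm_cpow_eq_rpow_re_of_pos (by linarith)]
    have : b ^ (-s).re ≤ a ^ (-s).re :=
      Real.rpow_le_rpow_of_nonpos ha0 hab (by simp [hs.le])
    simp only [Complex.neg_re] at *
    linarith
  have h2 : ‖(a : ℂ) ^ (-s) - (b : ℂ) ^ (-s)‖ ≤ ‖s‖ * a ^ (-s.re - 1) := by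
    have hs0 : -s ≠ 0 := by
      intro h
      have : s = 0 := by simpa using h
      simp [this] at hs
    have := Convex.norm_image_sub_le_of_norm_hasDerivWithin_le (𝕜 := ℝ) (f := fun y : ℝ => (y : ℂ) ^ (-s))
      (f' := fun y : ℝ => (-s) * (y : ℂ) ^ (-s - 1)) (s := Set.Icc a b) (x := b) (y := a)
      (C := ‖s‖ * a ^ (-s.re - 1))
      (fun x hx => (hasDerivAt_ofReal_cpow_const (by linarith [hx.1]) hs0).hasDerivWithinAt)
      (fun x hx => by
        rw [norm_mul, norm_neg, Complex.norm_cpow_eq_rpow_re_of_pos (by linarith [hx.1])]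
        simp only [Complex.sub_re, Complex.neg_re, Complex.one_re]
        exact mul_le_mul_of_nonneg_left (Real.rpow_le_rpow_of_nonpos ha0 hx.1 (by linarith)) (norm_nonneg _))
      (convex_Icc a b) (Set.right_mem_Icc.2 hab) (Set.left_mem_Icc.2 hab)
    refine this.trans ?_
    have h3 : ‖a - b‖ ≤ 1 := by rw [Real.norm_eq_abs, abs_le]; constructor <;> linarith
    have h4 : 0 ≤ ‖s‖ * a ^ (-s.re - 1) := by positivity
    nlinarith
  set D := ‖(a : ℂ) ^ (-s) - (b : ℂ) ^ (-s)‖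
  have hD : 0 ≤ D := norm_nonneg _
  have e : D = D ^ (19/20 : ℝ) * D ^ (1/20 : ℝ) := by
    rw [← Real.rpow_add_of_nonneg hD (by norm_num) (by norm_num)]; norm_num
  rw [e]
  have i1 : D ^ (19/20 : ℝ) ≤ (2 * a ^ (-s.re)) ^ (19/20 : ℝ) :=
    Real.rpow_le_rpow hD h1 (by norm_num)
  have i2 : D ^ (1/20 : ℝ) ≤ ((1 + ‖s‖) * a ^ (-s.re - 1)) ^ (1/20 : ℝ) :=
    Real.rpow_le_rpow hD (h2.trans (by gcongr; linarith)) (by norm_num)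
  refine (mul_le_mul i1 i2 (by positivity) (by positivity)).trans ?_
  rw [Real.mul_rpow (by norm_num) (by positivity), Real.mul_rpow (by positivity) (by positivity),
    ← Real.rpow_mul ha0.le, ← Real.rpow_mul ha0.le]
  have h5 : (2:ℝ) ^ (19/20 : ℝ) ≤ 2 := by
    calc (2:ℝ) ^ (19/20 : ℝ) ≤ 2 ^ (1 : ℝ) := Real.rpow_le_rpow_of_exponent_le (by norm_num) (by norm_num)
      _ = 2 := by simp
  have h6 : a ^ (-(s.re + 1/20)) = a ^ (-s.re * (19/20)) * a ^ ((-s.re - 1) * (1/20)) := by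
    rw [← Real.rpow_add ha0]; congr 1; ring
  rw [h6]
  calc (2:ℝ) ^ (19/20 : ℝ) * a ^ (-s.re * (19/20)) * ((1 + ‖s‖) ^ (1/20 : ℝ) * a ^ ((-s.re - 1) * (1/20)))
      = (2:ℝ) ^ (19/20 : ℝ) * ((1 + ‖s‖) ^ (1/20 : ℝ) * (a ^ (-s.re * (19/20)) * a ^ ((-s.re - 1) * (1/20)))) := by ring
    _ ≤ 2 * ((1 + ‖s‖) ^ (1/20 : ℝ) * (a ^ (-s.re * (19/20)) * a ^ ((-s.re - 1) * (1/20)))) := by gcongr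
    _ = _ := by ring

lemma aux_summable : Summable (fun n : ℕ => ((n : ℝ) + 1) ^ (-(41/40 : ℝ))) := by
  have := (summable_nat_add_iff 1).2 (Real.summable_nat_rpow.2 (show -(41/40 : ℝ) < -1 by norm_num))
  simpa using this

lemma aux_gen {G : ℂ → ℂ} (hG : Differentiable ℂ G) {F : ℕ → ℂ → ℂ} (hF : ∀ n, Differentiable ℂ (F n))
    {B : ℂ → ℝ} (hB : ∀ s, B s ≤ 4 * (1 + ‖s‖) ^ 2)
    (hFB : ∀ n s, 39/40 < s.re → ‖F n s‖ ≤ B s * ((n : ℝ) + 1) ^ (-(41/40 : ℝ)))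
    (hsum : ∀ s, 1 < s.re → ∑' n, F n s = G s) {s : ℂ} (hs : 39/40 < s.re) :
    ‖G s‖ ≤ B s * ∑' n : ℕ, ((n : ℝ) + 1) ^ (-(41/40 : ℝ)) := by
  set U : Set ℂ := {s | 39/40 < s.re} with hU
  have hUo : IsOpen U := isOpen_lt continuous_const Complex.continuous_re
  have hUc : Convex ℝ U := convex_halfSpace_re_gt _
  have hd : DifferentiableOn ℂ (fun s => ∑' n, F n s) U := by
    intro z hz
    set V := U ∩ Metric.ball 0 (‖z‖ + 1)
    have hVo : IsOpen V := hUo.inter Metric.isOpen_ball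
    have hzV : z ∈ V := ⟨hz, by simp⟩
    have := Complex.differentiableOn_tsum_of_summable_norm (F := F) (U := V)
      (u := fun n : ℕ => (4 * (1 + (‖z‖ + 1)) ^ 2) * ((n : ℝ) + 1) ^ (-(41/40 : ℝ)))
      (aux_summable.mul_left _) (fun i => (hF i).differentiableOn) hVo
      (fun n w hw => by
        refine (hFB n w hw.1).trans ?_
        have h1 : ‖w‖ ≤ ‖z‖ + 1 := by have := hw.2; simp at this; exact this.le
        gcongr
        exact (hB w).trans (by gcongr))
    exact ((this z hzV).differentiableAt (hVo.mem_nhds hzV)).differentiableWithinAt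
  have heq : Set.EqOn (fun s => ∑' n, F n s) G U := by
    refine AnalyticOnNhd.eqOn_of_preconnected_of_eventuallyEq (z₀ := 2) (hd.analyticOnNhd hUo)
      (hG.differentiableOn.analyticOnNhd hUo) hUc.isPreconnected (by simp [hU]; norm_num) ?_
    have : {s : ℂ | 1 < s.re} ∈ nhds (2 : ℂ) :=
      (isOpen_lt continuous_const Complex.continuous_re).mem_nhds (by simp)
    filter_upwards [this] with w hw using hsum w hw
  rw [← heq hs, ← tsum_mul_left]
  exact tsum_of_norm_bounded (aux_summable.mul_left _).hasSum (fun n => hFB n s hs)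

/-- the bound for the regularised zeta function -/
lemma zeta0_bound : ∃ C : ℝ, 0 < C ∧ ∀ s : ℂ, 39/40 < s.re → ‖riemannZeta₀ s‖ ≤ C * (1 + ‖s‖) ^ (1/20 : ℝ) := by
  set K := ∑' n : ℕ, ((n : ℝ) + 1) ^ (-(41/40 : ℝ))
  set F : ℕ → ℂ → ℂ := fun n s => (s - 1) * ((n + 1 : ℝ) : ℂ) ^ (-s) -
    (((n + 1 : ℝ) : ℂ) ^ (1 - s) - ((n + 2 : ℝ) : ℂ) ^ (1 - s)) with hFdef
  have hne : ∀ n : ℕ, ((n + 1 : ℝ) : ℂ) ≠ 0 := fun n => by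
    exact_mod_cast (by positivity : (n + 1 : ℝ) ≠ 0)
  have hne2 : ∀ n : ℕ, ((n + 2 : ℝ) : ℂ) ≠ 0 := fun n => by
    exact_mod_cast (by positivity : (n + 2 : ℝ) ≠ 0)
  have key : ∀ s : ℂ, 39/40 < s.re → ‖riemannZeta₁ s - 1‖ ≤ (2 * ‖s - 1‖ * (1 + ‖s‖) ^ (1/20 : ℝ)) * K := by
    intro s hs
    refine aux_gen (G := fun s => riemannZeta₁ s - 1) (F := F)
      (B := fun s => 2 * ‖s - 1‖ * (1 + ‖s‖) ^ (1/20 : ℝ)) (by fun_prop) ?_ ?_ ?_ ?_ hs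
    · intro n
      have h1 : Differentiable ℂ (fun s : ℂ => ((n + 1 : ℝ) : ℂ) ^ (-s)) :=
        (differentiable_id.neg).const_cpow (Or.inl (hne n))
      have h2 : Differentiable ℂ (fun s : ℂ => ((n + 1 : ℝ) : ℂ) ^ (1 - s)) :=
        ((differentiable_const 1).sub differentiable_id).const_cpow (Or.inl (hne n))
      have h3 : Differentiable ℂ (fun s : ℂ => ((n + 2 : ℝ) : ℂ) ^ (1 - s)) :=
        ((differentiable_const 1).sub differentiable_id).const_cpow (Or.inl (hne2 n))
      exact ((differentiable_id.sub (differentiable_const 1)).mul h1).sub (h2.sub h3)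
    · intro s
      have h1 : ‖s - 1‖ ≤ 1 + ‖s‖ := by
        have := norm_sub_le s 1; simp at this; linarith
      have h2 : (1 + ‖s‖) ^ (1/20 : ℝ) ≤ 1 + ‖s‖ := by
        calc (1 + ‖s‖) ^ (1/20 : ℝ) ≤ (1 + ‖s‖) ^ (1 : ℝ) :=
              Real.rpow_le_rpow_of_exponent_le (by linarith [norm_nonneg s]) (by norm_num)
          _ = _ := Real.rpow_one _
      have h3 := norm_nonneg s
      have h4 : ‖s - 1‖ * (1 + ‖s‖) ^ (1/20 : ℝ) ≤ (1 + ‖s‖) * (1 + ‖s‖) := by gcongr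
      nlinarith
    · intro n s hs
      by_cases h1 : s = 1
      · simp [hFdef, h1]
      have e : F n s = (s - 1) * ∫ x in (n + 1 : ℝ)..(n + 2 : ℝ), (((n + 1 : ℝ) : ℂ) ^ (-s) - (x : ℂ) ^ (-s)) := by
        have h0 : (0 : ℝ) ∉ Set.uIcc (n + 1 : ℝ) (n + 2 : ℝ) := by
          rw [Set.uIcc_of_le (by linarith)]
          intro h; have := h.1; linarith [(Nat.cast_nonneg n : (0:ℝ) ≤ n)]
        have hii : IntervalIntegrable (fun x : ℝ => (x : ℂ) ^ (-s)) MeasureTheory.volume (n + 1 : ℝ) (n + 2 : ℝ) :=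
          intervalIntegral.intervalIntegrable_cpow (Or.inr h0)
        rw [intervalIntegral.integral_sub intervalIntegrable_const hii,
          integral_cpow (Or.inr ⟨by intro h; apply h1; simpa using h, h0⟩),
          intervalIntegral.integral_const]
        have h2 : (-s + 1) ≠ 0 := by
          intro h; apply h1; linear_combination -h
        rw [hFdef]
        have e1 : (n + 2 - (n + 1) : ℝ) = 1 := by ring
        have e2 : (-s + 1) = 1 - s := by ring
        rw [e1, one_smul, mul_sub, mul_div_assoc', e2]
        rw [e2] at h2
        congr 1
        field_simp
        ring
      rw [e, norm_mul]
      have hb := intervalIntegral.norm_integral_le_of_norm_le_const (a := (n + 1 : ℝ)) (b := (n + 2 : ℝ))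
        (f := fun x : ℝ => (((n + 1 : ℝ) : ℂ) ^ (-s) - (x : ℂ) ^ (-s)))
        (C := 2 * (1 + ‖s‖) ^ (1/20 : ℝ) * (n + 1 : ℝ) ^ (-(s.re + 1/20))) (fun x hx => by
          rw [Set.uIoc_of_le (by linarith)] at hx
          have hn : (0 : ℝ) ≤ n := n.cast_nonneg
          exact aux_cpow_diff (by linarith) hx.1.le (by linarith [hx.2]) (by linarith))
      have e1 : |(n + 2 - (n + 1) : ℝ)| = 1 := by
        rw [show (n + 2 - (n + 1) : ℝ) = 1 by ring]; simp
      rw [e1, mul_one] at hb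
      have hp : (n + 1 : ℝ) ^ (-(s.re + 1/20)) ≤ (n + 1 : ℝ) ^ (-(41/40 : ℝ)) :=
        Real.rpow_le_rpow_of_exponent_le (by linarith [(Nat.cast_nonneg n : (0:ℝ) ≤ n)]) (by linarith)
      calc ‖s - 1‖ * _ ≤ ‖s - 1‖ * (2 * (1 + ‖s‖) ^ (1/20 : ℝ) * (n + 1 : ℝ) ^ (-(41/40 : ℝ))) := by
            gcongr; exact hb.trans (by gcongr)
        _ = _ := by ring
    · intro s hs
      have h1 : s ≠ 1 := by rintro rfl; simp at hs
      have hz : HasSum (fun n : ℕ => (s - 1) * ((n + 1 : ℝ) : ℂ) ^ (-s)) ((s - 1) * riemannZeta s) := by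
        rw [zeta_eq_tsum_one_div_nat_add_one_cpow hs]
        have hsm : Summable (fun n : ℕ => 1 / ((n : ℂ) + 1) ^ s) := by
          have := (summable_nat_add_iff 1).2 (Complex.summable_one_div_nat_cpow.2 hs)
          simpa using this
        have := (hsm.hasSum.mul_left (s - 1))
        convert! this using 2 with n
        push_cast
        rw [Complex.cpow_neg, one_div]
      have ht : HasSum (fun n : ℕ => (((n + 1 : ℝ) : ℂ) ^ (1 - s) - ((n + 2 : ℝ) : ℂ) ^ (1 - s))) 1 := by
        have hs1 : Summable (fun n : ℕ => (((n + 1 : ℝ) : ℂ) ^ (1 - s) - ((n + 2 : ℝ) : ℂ) ^ (1 - s))) := by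
          refine Summable.of_norm_bounded (g := fun n : ℕ => (‖s - 1‖) * ((n : ℝ) + 1) ^ (-s.re)) ?_ ?_
          · refine Summable.mul_left _ ?_
            have := (summable_nat_add_iff 1).2 (Real.summable_nat_rpow.2 (show -s.re < -1 by linarith))
            simpa using this
          · intro n
            have hn : (0 : ℝ) ≤ n := n.cast_nonneg
            have h10 : 1 - s ≠ 0 := sub_ne_zero.2 (Ne.symm h1)
            have := Convex.norm_image_sub_le_of_norm_hasDerivWithin_le (𝕜 := ℝ) (f := fun y : ℝ => (y : ℂ) ^ (1 - s))
              (f' := fun y : ℝ => (1 - s) * (y : ℂ) ^ (1 - s - 1)) (s := Set.Icc (n + 1 : ℝ) (n + 2))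
              (x := (n + 2 : ℝ)) (y := (n + 1 : ℝ))
              (C := ‖s - 1‖ * ((n : ℝ) + 1) ^ (-s.re))
              (fun x hx => (hasDerivAt_ofReal_cpow_const (by linarith [hx.1]) h10).hasDerivWithinAt)
              (fun x hx => by
                rw [norm_mul, norm_sub_rev, Complex.norm_cpow_eq_rpow_re_of_pos (by linarith [hx.1])]
                have : (1 - s - 1).re = -s.re := by simp
                rw [this]
                exact mul_le_mul_of_nonneg_left
                  (Real.rpow_le_rpow_of_nonpos (by linarith) hx.1 (by linarith)) (norm_nonneg _))
              (convex_Icc _ _) ⟨by linarith, le_rfl⟩ ⟨le_rfl, by linarith⟩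
            have e1 : ‖((n:ℝ) + 1 - (n + 2))‖ = 1 := by
              rw [show ((n:ℝ) + 1 - (n + 2)) = -1 by ring]; simp
            rw [e1, mul_one] at this
            exact this
        have hlim := hs1.hasSum.tendsto_sum_nat
        have hpart : ∀ N : ℕ, ∑ n ∈ Finset.range N, (((n + 1 : ℝ) : ℂ) ^ (1 - s) - ((n + 2 : ℝ) : ℂ) ^ (1 - s))
            = 1 - ((N + 1 : ℝ) : ℂ) ^ (1 - s) := by
          intro N
          induction N with
          | zero => simp
          | succ k ih => rw [Finset.sum_range_succ, ih]; push_cast; ring_nf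
        have hlim2 : Tendsto (fun N : ℕ => 1 - ((N + 1 : ℝ) : ℂ) ^ (1 - s)) atTop (nhds (1 - 0)) := by
          refine tendsto_const_nhds.sub ?_
          rw [tendsto_zero_iff_norm_tendsto_zero]
          have : ∀ N : ℕ, ‖((N + 1 : ℝ) : ℂ) ^ (1 - s)‖ = (N + 1 : ℝ) ^ (-(s.re - 1)) := by
            intro N
            rw [Complex.norm_cpow_eq_rpow_re_of_pos (by positivity)]
            congr 1; simp
          simp_rw [this]
          exact (tendsto_rpow_neg_atTop (by linarith)).comp
            (tendsto_atTop_add_const_right _ _ tendsto_natCast_atTop_atTop)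
        simp_rw [hpart] at hlim
        have := tendsto_nhds_unique hlim hlim2
        rw [sub_zero] at this
        have h := hs1.hasSum
        rw [this] at h; exact h
      rw [(hz.sub ht).tsum_eq, riemannZeta_eq_inv_sub_mul h1, mul_inv_cancel_left₀ (sub_ne_zero.2 h1)]
  have hK : 0 < K := by
    refine aux_summable.tsum_pos (fun n => by positivity) 0 (by simp)
  refine ⟨2 * K + ‖riemannZeta₀ 1‖, by positivity, fun s hs => ?_⟩
  have hN : 1 ≤ (1 + ‖s‖) ^ (1/20 : ℝ) := Real.one_le_rpow (by linarith [norm_nonneg s]) (by norm_num)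
  by_cases h1 : s = 1
  · subst h1
    nlinarith [norm_nonneg (riemannZeta₀ 1)]
  have := key s hs
  rw [riemannZeta₁, add_sub_cancel_left, norm_mul] at this
  have hp : 0 < ‖s - 1‖ := norm_pos_iff.2 (sub_ne_zero.2 h1)
  have h2 : ‖riemannZeta₀ s‖ ≤ 2 * K * (1 + ‖s‖) ^ (1/20 : ℝ) := by
    refine le_of_mul_le_mul_left ?_ hp
    linarith
  nlinarith [norm_nonneg (riemannZeta₀ 1)]

/-- The nontrivial character mod 3. -/
noncomputable def chi3 : DirichletCharacter ℂ 3 :=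
  (quadraticChar (ZMod 3)).ringHomComp (Int.castRingHom ℂ)

lemma chi3_zero : chi3 0 = 0 := by
  have : quadraticChar (ZMod 3) 0 = 0 := by decide
  simp [chi3, MulChar.ringHomComp_apply, this]

lemma chi3_one : chi3 1 = 1 := by simp

lemma chi3_two : chi3 2 = -1 := by
  have : quadraticChar (ZMod 3) 2 = -1 := by decide
  simp [chi3, MulChar.ringHomComp_apply, this]

lemma chi3_ne_one : chi3 ≠ 1 := by
  intro h
  have h2 := chi3_two
  rw [h, MulChar.one_apply (by decide)] at h2
  norm_num at h2

lemma chi3_sq : chi3 ^ 2 = 1 := by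
  ext u
  rw [MulChar.pow_apply_coe, MulChar.one_apply_coe]
  have h : ∀ u : (ZMod 3)ˣ, (u : ZMod 3) = 1 ∨ (u : ZMod 3) = 2 := by decide
  rcases h u with h | h <;> rw [h]
  · simp
  · rw [chi3_two]; norm_num

lemma Lchi_bound : ∃ C : ℝ, 0 < C ∧ ∀ s : ℂ, 39/40 < s.re →
    ‖chi3.LFunction s‖ ≤ C * (1 + ‖s‖) ^ (1/20 : ℝ) := by
  set K := ∑' n : ℕ, ((n : ℝ) + 1) ^ (-(41/40 : ℝ))
  have hK : 0 < K := by
    refine aux_summable.tsum_pos (fun n => by positivity) 0 (by simp)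
  set F : ℕ → ℂ → ℂ := fun n s => ((3 * n + 1 : ℝ) : ℂ) ^ (-s) - ((3 * n + 2 : ℝ) : ℂ) ^ (-s) with hFdef
  refine ⟨2 * K, by positivity, fun s hs => ?_⟩
  have := aux_gen (G := chi3.LFunction) (F := F) (B := fun s => 2 * (1 + ‖s‖) ^ (1/20 : ℝ))
    (DirichletCharacter.differentiable_LFunction chi3_ne_one) ?_ ?_ ?_ ?_ hs
  · linarith
  · intro n
    have hne : ((3 * n + 1 : ℝ) : ℂ) ≠ 0 := by exact_mod_cast (by positivity : (3 * n + 1 : ℝ) ≠ 0)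
    have hne2 : ((3 * n + 2 : ℝ) : ℂ) ≠ 0 := by exact_mod_cast (by positivity : (3 * n + 2 : ℝ) ≠ 0)
    exact ((differentiable_id.neg).const_cpow (Or.inl hne)).sub
      ((differentiable_id.neg).const_cpow (Or.inl hne2))
  · intro s
    have h2 : (1 + ‖s‖) ^ (1/20 : ℝ) ≤ 1 + ‖s‖ := by
      calc (1 + ‖s‖) ^ (1/20 : ℝ) ≤ (1 + ‖s‖) ^ (1 : ℝ) :=
            Real.rpow_le_rpow_of_exponent_le (by linarith [norm_nonneg s]) (by norm_num)
        _ = _ := Real.rpow_one _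
    have h3 := norm_nonneg s
    nlinarith
  · intro n s hs
    have hn : (0 : ℝ) ≤ n := n.cast_nonneg
    refine (aux_cpow_diff (a := 3 * n + 1) (b := 3 * n + 2) (by linarith) (by linarith) (by linarith) (by linarith)).trans ?_
    gcongr 2 * (1 + ‖s‖) ^ (1/20 : ℝ) * ?_
    calc (3 * n + 1 : ℝ) ^ (-(s.re + 1/20)) ≤ (n + 1 : ℝ) ^ (-(s.re + 1/20)) :=
          Real.rpow_le_rpow_of_nonpos (by linarith) (by linarith) (by linarith)
      _ ≤ _ := Real.rpow_le_rpow_of_exponent_le (by linarith) (by linarith)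
  · intro s hs
    rw [DirichletCharacter.LFunction_eq_LSeries _ hs, LSeries]
    have hsum : Summable (LSeries.term (fun n => chi3 n) s) :=
      DirichletCharacter.LSeriesSummable_of_one_lt_re chi3 hs
    rw [Nat.sumByResidueClasses hsum 3]
    have hinj : ∀ j : ℕ, Function.Injective (fun m : ℕ => j + 3 * m) := fun j a b h => by
      simp only at h; omega
    have hu : (Finset.univ : Finset (ZMod 3)) = {0, 1, 2} := by decide
    have v0 : (0 : ZMod 3).val = 0 := rfl
    have v1 : (1 : ZMod 3).val = 1 := rfl
    have v2 : (2 : ZMod 3).val = 2 := rfl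
    rw [hu, Finset.sum_insert (by decide), Finset.sum_insert (by decide), Finset.sum_singleton, v0, v1, v2]
    have t3 : (3 : ZMod 3) = 0 := by decide
    have e0 : ∀ m : ℕ, LSeries.term (fun n => chi3 n) s (0 + 3 * m) = 0 := by
      intro m
      rw [LSeries.term_def]
      split_ifs
      · rfl
      · push_cast; rw [t3]; simp [chi3_zero]
    have e1 : ∀ m : ℕ, LSeries.term (fun n => chi3 n) s (1 + 3 * m) = ((3 * m + 1 : ℝ) : ℂ) ^ (-s) := by
      intro m
      rw [LSeries.term_def, if_neg (by omega)]
      push_cast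
      rw [t3, Complex.cpow_neg, add_comm (1 : ℂ)]; simp
    have e2 : ∀ m : ℕ, LSeries.term (fun n => chi3 n) s (2 + 3 * m) = -((3 * m + 2 : ℝ) : ℂ) ^ (-s) := by
      intro m
      rw [LSeries.term_def, if_neg (by omega)]
      push_cast
      rw [t3, Complex.cpow_neg, add_comm (2 : ℂ)]
      simp [chi3_two, div_eq_mul_inv]
    have s1 := hsum.comp_injective (hinj 1)
    have s2 := hsum.comp_injective (hinj 2)
    simp only [Function.comp_def] at s1 s2
    rw [← s1.tsum_add s2]
    simp_rw [e0, e1, e2]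
    simp [hFdef, sub_eq_add_neg]

lemma low_abs {g : ℝ → ℂ} {c C w : ℝ} (hc : 0 < c) (hC : 0 < C) (hw : 0 < w) (hw1 : w ≤ 1)
    (h1 : ∀ x, 0 < x → x ≤ 1 → c ^ 4 * x ^ 3 * w ≤ ‖g x‖ ^ 4)
    (h2 : ∀ x y, 0 < x → x ≤ y → y ≤ 1 → ‖g y - g x‖ ≤ C * (y - x) / w) (x : ℝ) (hx : 0 < x) (hx1 : x ≤ 1) :
    c * (min 1 (c / (2 * C))) ^ 3 / 2 * w ^ 4 ≤ ‖g x‖ := by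
  set d := min 1 (c / (2 * C)) with hd
  have hd0 : 0 < d := lt_min one_pos (by positivity)
  have hd1 : d ≤ 1 := min_le_left _ _
  have hd2 : C * d ≤ c / 2 := by
    have : d ≤ c / (2 * C) := min_le_right _ _
    rw [le_div_iff₀ (by positivity)] at this
    linarith
  set η := d ^ 4 * w ^ 5 with hη
  have hη0 : 0 < η := by positivity
  have hη1 : η ≤ 1 := mul_le_one₀ (pow_le_one₀ hd0.le hd1) (by positivity) (pow_le_one₀ hw.le hw1)
  have hbig : ∀ x, η ≤ x → x ≤ 1 → c * d ^ 3 * w ^ 4 ≤ ‖g x‖ := by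
    intro x hx hx1
    refine le_of_pow_le_pow_left₀ (n := 4) (by norm_num) (norm_nonneg _) ?_
    refine le_trans ?_ (h1 x (hη0.trans_le hx) hx1)
    calc (c * d ^ 3 * w ^ 4) ^ 4 = c ^ 4 * η ^ 3 * w := by rw [hη]; ring
      _ ≤ _ := by gcongr
  have hp : 0 < c * d ^ 3 * w ^ 4 := by positivity
  rcases le_total η x with h | h
  · have := hbig x h hx1
    linarith
  · have a1 := hbig η le_rfl hη1
    have a2 := h2 x η hx h hη1
    have a3 : C * (η - x) / w ≤ c / 2 * d ^ 3 * w ^ 4 := by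
      rw [div_le_iff₀ hw]
      calc C * (η - x) ≤ C * η := by gcongr; linarith
        _ = (C * d) * d ^ 3 * w ^ 5 := by rw [hη]; ring
        _ ≤ (c / 2) * d ^ 3 * w ^ 5 := by gcongr
        _ = _ := by ring
    have a4 := norm_sub_norm_le (g η) (g x)
    linarith

lemma cauchy_step {F : ℂ → ℂ} (hF : Differentiable ℂ F) {a C k : ℝ} (hC : 0 < C) (hk : 0 ≤ k) (hk2 : k ≤ 2)
    (h : ∀ s : ℂ, a < s.re → ‖F s‖ ≤ C * (1 + ‖s‖) ^ k) :
    ∀ s : ℂ, a + 1/100 < s.re → ‖deriv F s‖ ≤ (400 * C) * (1 + ‖s‖) ^ k := by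
  intro s hs
  have := Complex.norm_deriv_le_of_forall_mem_sphere_norm_le (c := s) (R := 1/100) (f := F)
    (C := 4 * C * (1 + ‖s‖) ^ k) (by norm_num) hF.diffContOnCl ?_
  · refine this.trans (le_of_eq (by ring))
  · intro z hz
    have h1 : ‖z - s‖ = 1/100 := by simpa [dist_eq_norm] using hz
    have h2 : |(z - s).re| ≤ 1/100 := h1 ▸ Complex.abs_re_le_norm _
    rw [Complex.sub_re, abs_le] at h2
    refine (h z (by linarith [h2.1])).trans ?_
    have h3 : ‖z‖ ≤ ‖s‖ + 1/100 := by
      have := norm_add_le (z - s) s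
      rw [sub_add_cancel, h1] at this; linarith
    have h0 := norm_nonneg s
    have h4 : (1 + ‖z‖) ^ k ≤ 4 * (1 + ‖s‖) ^ k := by
      calc (1 + ‖z‖) ^ k ≤ (2 * (1 + ‖s‖)) ^ k := by gcongr; linarith
        _ = 2 ^ k * (1 + ‖s‖) ^ k := Real.mul_rpow (by norm_num) (by linarith)
        _ ≤ 2 ^ (2 : ℝ) * (1 + ‖s‖) ^ k := by
          gcongr
          norm_num
        _ = _ := by norm_num
    nlinarith

lemma N_le {s : ℂ} {t : ℝ} (h1 : 1 ≤ s.re) (h2 : s.re ≤ 2) (h3 : |s.im| ≤ 2 * |t|) :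
    (1 + ‖s‖) ^ (1/20 : ℝ) ≤ 3 * (1 + |t|) ^ (1/20 : ℝ) := by
  have h4 := Complex.norm_le_abs_re_add_abs_im s
  rw [abs_of_nonneg (by linarith : 0 ≤ s.re)] at h4
  have h0 := abs_nonneg t
  calc (1 + ‖s‖) ^ (1/20 : ℝ) ≤ (3 * (1 + |t|)) ^ (1/20 : ℝ) := by gcongr; linarith
    _ = 3 ^ (1/20 : ℝ) * (1 + |t|) ^ (1/20 : ℝ) := Real.mul_rpow (by norm_num) (by linarith)
    _ ≤ 3 ^ (1 : ℝ) * (1 + |t|) ^ (1/20 : ℝ) := by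
      gcongr <;> norm_num
    _ = _ := by norm_num

lemma diff_line {F : ℂ → ℂ} {t D : ℝ} 
    (hF : ∀ s : ℂ, 1 ≤ s.re → s.re ≤ 2 → s.im = t → DifferentiableAt ℂ F s ∧ ‖deriv F s‖ ≤ D) :
    ∀ x y : ℝ, 0 < x → x ≤ y → y ≤ 1 → ‖F (1 + y + Complex.I * t) - F (1 + x + Complex.I * t)‖ ≤ D * (y - x) := by
  intro x y hx hxy hy
  have := Convex.norm_image_sub_le_of_norm_deriv_le (𝕜 := ℂ) (f := F)
    (s := {s : ℂ | 1 ≤ s.re ∧ s.re ≤ 2 ∧ s.im = t}) (C := D) (x := 1 + x + Complex.I * t)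
    (y := 1 + y + Complex.I * t)
    (fun s hs => (hF s hs.1 hs.2.1 hs.2.2).1) (fun s hs => (hF s hs.1 hs.2.1 hs.2.2).2) ?_ ?_ ?_
  · have e : (1 + (y:ℂ) + Complex.I * t) - (1 + x + Complex.I * t) = ((y - x : ℝ) : ℂ) := by
      push_cast; ring
    rw [e, Complex.norm_real, Real.norm_of_nonneg (by linarith)] at this
    exact this
  · have : {s : ℂ | 1 ≤ s.re ∧ s.re ≤ 2 ∧ s.im = t} = {s : ℂ | 1 ≤ s.re} ∩ {s : ℂ | s.re ≤ 2} ∩ ({s : ℂ | s.im ≤ t} ∩ {s | t ≤ s.im}) := by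
      ext s; simp only [Set.mem_ofPred_eq, Set.mem_inter_iff]
      constructor
      · rintro ⟨a, b, c⟩; exact ⟨⟨a, b⟩, c.le, c.ge⟩
      · rintro ⟨⟨a, b⟩, c, d⟩; exact ⟨a, b, le_antisymm c d⟩
    rw [this]
    exact ((convex_halfSpace_re_ge _).inter (convex_halfSpace_re_le _)).inter
      ((convex_halfSpace_im_le _).inter (convex_halfSpace_im_ge _))
  · simp; constructor <;> linarith
  · simp; constructor <;> linarith

/-- bound for zeta on the line -/
lemma zeta_bds : ∃ C : ℝ, 0 < C ∧ (∀ x : ℝ, 0 < x → x ≤ 1 → ‖riemannZeta (1 + x)‖ ≤ C / x) ∧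
    (∀ (x t : ℝ), 0 < x → x ≤ 1 → 1 ≤ |t| →
      ‖riemannZeta (1 + x + 2 * Complex.I * t)‖ ≤ C * (1 + |t|) ^ (1/20 : ℝ)) ∧
    (∀ (t : ℝ) (s : ℂ), 1 ≤ |t| → 1 ≤ s.re → s.re ≤ 2 → s.im = t → DifferentiableAt ℂ riemannZeta s ∧ 
      ‖deriv riemannZeta s‖ ≤ C * (1 + |t|) ^ (1/20 : ℝ)) := by
  obtain ⟨C, hC, h⟩ := zeta0_bound
  have h' := cauchy_step differentiable_riemannZeta₀ hC (by norm_num) (by norm_num) h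
  refine ⟨1 + 3 * (400 * C), by positivity, ?_, ?_, ?_⟩
  · intro x hx hx1
    rw [riemannZeta_eq_inv_sub_add (by simpa using hx.ne')]
    have e : (1 + (x:ℂ) - 1)⁻¹ = ((x⁻¹ : ℝ) : ℂ) := by push_cast; ring
    rw [e]
    refine (norm_add_le _ _).trans ?_
    rw [Complex.norm_real, Real.norm_of_nonneg (by positivity)]
    have h1 := h (1 + x) (by simp; linarith)
    have h2 := N_le (s := 1 + x) (t := 0) (by simp; linarith) (by simp; linarith) (by simp)
    simp at h2
    rw [le_div_iff₀ hx, add_mul, inv_mul_cancel₀ hx.ne']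
    have : ‖riemannZeta₀ (1 + x)‖ ≤ 3 * C := by
      refine h1.trans ?_
      rw [one_div]
      nlinarith
    nlinarith [norm_nonneg (riemannZeta₀ (1 + x))]
  · intro x t hx hx1 ht
    set s : ℂ := 1 + x + 2 * Complex.I * t with hs
    have him : s.im = 2 * t := by simp [hs]
    have hre : s.re = 1 + x := by simp [hs]
    have hT : 1 ≤ (1 + |t|) ^ (1/20 : ℝ) := Real.one_le_rpow (by linarith) (by norm_num)
    have hn : 1 ≤ ‖s - 1‖ := by
      have := Complex.abs_im_le_norm (s - 1)
      rw [Complex.sub_im, him, Complex.one_im, sub_zero, abs_mul] at this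
      norm_num at this; linarith
    have hs1 : s ≠ 1 := by intro h; rw [h] at hn; norm_num at hn
    rw [riemannZeta_eq_inv_sub_add hs1]
    refine (norm_add_le _ _).trans ?_
    rw [norm_inv]
    have h0 : ‖s - 1‖⁻¹ ≤ 1 := inv_le_one_of_one_le₀ hn
    have h1 := h s (by rw [hre]; linarith)
    have h2 := N_le (s := s) (t := t) (by rw [hre]; linarith) (by rw [hre]; linarith) (by rw [him, abs_mul]; norm_num)
    nlinarith
  · intro t s ht h1 h2 h3
    have hT : 1 ≤ (1 + |t|) ^ (1/20 : ℝ) := Real.one_le_rpow (by linarith) (by norm_num)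
    have hn : 1 ≤ ‖s - 1‖ := by
      have := Complex.abs_im_le_norm (s - 1)
      rw [Complex.sub_im, h3, Complex.one_im, sub_zero] at this
      linarith
    have hs1 : s ≠ 1 := by intro h; rw [h] at hn; norm_num at hn
    refine ⟨differentiableAt_riemannZeta hs1, ?_⟩
    have e : riemannZeta =ᶠ[nhds s] fun s => (s - 1)⁻¹ + riemannZeta₀ s := by
      filter_upwards [isOpen_ne.mem_nhds hs1] with z hz using riemannZeta_eq_inv_sub_add hz
    rw [e.deriv_eq]
    have hd : HasDerivAt (fun s : ℂ => (s - 1)⁻¹ + riemannZeta₀ s) (-1 / (s - 1) ^ 2 + deriv riemannZeta₀ s) s :=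
      (((hasDerivAt_id s).sub_const 1).inv (sub_ne_zero.2 hs1)).add (differentiable_riemannZeta₀ s).hasDerivAt
    rw [hd.deriv]
    refine (norm_add_le _ _).trans ?_
    have h0 : ‖-1 / (s - 1) ^ 2‖ ≤ 1 := by
      rw [norm_div, norm_pow, norm_neg, norm_one]
      exact div_le_one_of_le₀ (one_le_pow₀ hn) (by positivity)
    have h5 := h' s (by linarith)
    have h6 := N_le (s := s) (t := t) h1 h2 (by rw [h3]; linarith [abs_nonneg t])
    nlinarith

lemma low_common {F : ℂ → ℂ} {C D : ℝ} (hC : 0 < C) (hD : 0 < D)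
    (h1 : ∀ (x t : ℝ), 0 < x → x ≤ 1 → 1 ≤ |t| → 
      1 ≤ (C / x) ^ 3 * ‖F (1 + x + Complex.I * t)‖ ^ 4 * (C * (1 + |t|) ^ (1/20 : ℝ)))
    (h2 : (∀ (t : ℝ) (s : ℂ), 1 ≤ |t| → 1 ≤ s.re → s.re ≤ 2 → s.im = t → DifferentiableAt ℂ F s ∧ 
      ‖deriv F s‖ ≤ D * (1 + |t|) ^ (1/20 : ℝ))) :
    ∃ c : ℝ, 0 < c ∧ ∀ s : ℂ, 1 < s.re → s.re ≤ 2 → 1 ≤ |s.im| → c * (1 + ‖s‖) ^ (-(1/5) : ℝ) ≤ ‖F s‖ := by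
  refine ⟨C⁻¹ * (min 1 (C⁻¹ / (2 * D))) ^ 3 / 2, by positivity, ?_⟩
  intro s hs1 hs2 ht
  set T := 1 + |s.im| with hT
  have hT0 : 0 < T := by positivity
  set w := T ^ (-(1/20) : ℝ) with hw
  have hw0 : 0 < w := by positivity
  have hw1 : w ≤ 1 := Real.rpow_le_one_of_one_le_of_nonpos (by linarith) (by norm_num)
  have hwi : T ^ (1/20 : ℝ) = w⁻¹ := by rw [hw, Real.rpow_neg hT0.le, inv_inv]
  have := low_abs (g := fun x : ℝ => F (1 + x + Complex.I * s.im)) (inv_pos.2 hC) hD hw0 hw1 ?_ ?_ (s.re - 1)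
    (by linarith) (by linarith)
  · have e : (1 + ((s.re - 1 : ℝ) : ℂ) + Complex.I * s.im) = s := by
      apply Complex.ext <;> simp
    simp only [e] at this
    refine le_trans ?_ this
    gcongr
    rw [hw, ← Real.rpow_natCast, ← Real.rpow_mul hT0.le]
    have : T ≤ 1 + ‖s‖ := by have := Complex.abs_im_le_norm s; linarith
    norm_num
    exact Real.rpow_le_rpow_of_nonpos hT0 this (by norm_num)
  · intro x hx hx1
    have := h1 x s.im hx hx1 ht
    rw [← hT, hwi] at this
    have e : (C / x) ^ 3 * ‖F (1 + x + Complex.I * s.im)‖ ^ 4 * (C * w⁻¹) = 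
      ‖F (1 + x + Complex.I * s.im)‖ ^ 4 * (C ^ 4 / (x ^ 3 * w)) := by field_simp
    rw [e, mul_div_assoc', le_div_iff₀ (by positivity), one_mul] at this
    show C⁻¹ ^ 4 * x ^ 3 * w ≤ _
    rw [inv_pow, mul_assoc, inv_mul_le_iff₀ (by positivity)]
    linarith
  · intro x y hx hxy hy
    have := diff_line (F := F) (t := s.im) (D := D * T ^ (1/20 : ℝ)) (fun z a b c => h2 s.im z ht a b c) x y hx hxy hy
    refine this.trans (le_of_eq ?_)
    rw [hwi]; field_simp

lemma zeta_low : ∃ c : ℝ, 0 < c ∧ ∀ s : ℂ, 1 < s.re → s.re ≤ 2 → 1 ≤ |s.im| → 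
    c * (1 + ‖s‖) ^ (-(1/5) : ℝ) ≤ ‖riemannZeta s‖ := by
  obtain ⟨C, hC, h1, h2, h3⟩ := zeta_bds
  refine low_common hC hC ?_ h3
  intro x t hx hx1 ht
  have := DirichletCharacter.norm_LFunction_product_ge_one (1 : DirichletCharacter ℂ 1) hx t
  rw [DirichletCharacter.LFunctionTrivChar, DirichletCharacter.LFunction_modOne_eq, DirichletCharacter.LFunction_modOne_eq,
    norm_mul, norm_mul, norm_pow, norm_pow] at this
  refine this.le.trans ?_
  gcongr
  · exact h1 x hx hx1
  · exact h2 x t hx hx1 ht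

lemma triv_le {s : ℂ} (hs : 1 < s.re) : ‖DirichletCharacter.LFunctionTrivChar 3 s‖ ≤ 2 * ‖riemannZeta s‖ := by
  have h1 : s ≠ 1 := by rintro rfl; simp at hs
  rw [DirichletCharacter.LFunctionTrivChar_eq_mul_riemannZeta h1, norm_mul]
  gcongr
  rw [Nat.Prime.primeFactors Nat.prime_three, Finset.prod_singleton]
  refine (norm_sub_le _ _).trans ?_
  rw [norm_one, Complex.norm_natCast_cpow_of_pos (by norm_num)]
  have : (3:ℝ) ^ (-s).re ≤ 1 := Real.rpow_le_one_of_one_le_of_nonpos (by norm_num) (by simp; linarith)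
  push_cast
  linarith

lemma L_low : ∃ c : ℝ, 0 < c ∧ ∀ s : ℂ, 1 < s.re → s.re ≤ 2 → 1 ≤ |s.im| → 
    c * (1 + ‖s‖) ^ (-(1/5) : ℝ) ≤ ‖chi3.LFunction s‖ := by
  obtain ⟨C, hC, h1, h2, h3⟩ := zeta_bds
  obtain ⟨D, hD, h4⟩ := Lchi_bound
  have h4' := cauchy_step (DirichletCharacter.differentiable_LFunction chi3_ne_one) hD (by norm_num) (by norm_num) h4
  refine low_common (C := 2 * C) (D := 1200 * D) (by positivity) (by positivity) ?_ ?_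
  · intro x t hx hx1 ht
    have := DirichletCharacter.norm_LFunction_product_ge_one chi3 hx t
    rw [chi3_sq, norm_mul, norm_mul, norm_pow, norm_pow] at this
    refine this.le.trans ?_
    have a1 := h1 x hx hx1
    have a2 := h2 x t hx hx1 ht
    gcongr
    · refine (triv_le (by simp; linarith)).trans ?_
      rw [mul_div_assoc]; linarith
    · refine (triv_le (by simp; linarith)).trans ?_
      linarith
  · intro t s ht a1 a2 a3
    refine ⟨DirichletCharacter.differentiable_LFunction chi3_ne_one s, ?_⟩
    have h5 := h4' s (by linarith)
    have h6 := N_le (s := s) (t := t) a1 a2 (by rw [a3]; linarith [abs_nonneg t])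
    nlinarith

lemma compact_low {F : ℂ → ℂ} (hF : Differentiable ℂ F) (h0 : ∀ s : ℂ, 1 ≤ s.re → F s ≠ 0) :
    ∃ c : ℝ, 0 < c ∧ ∀ s : ℂ, 1 < s.re → s.re ≤ 2 → |s.im| ≤ 1 → c ≤ ‖F s‖ := by
  have hK : IsCompact (Set.Icc (1:ℝ) 2 ×ℂ Set.Icc (-1:ℝ) 1) := isCompact_Icc.reProdIm isCompact_Icc
  obtain ⟨z, hz, hm⟩ := hK.exists_isMinOn ⟨1, by simp [Complex.mem_reProdIm]⟩ (hF.continuous.norm.continuousOn)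
  refine ⟨‖F z‖, norm_pos_iff.2 (h0 z (Complex.mem_reProdIm.1 hz).1.1), fun s a b c => hm ?_⟩
  exact Complex.mem_reProdIm.2 ⟨⟨a.le, b⟩, abs_le.1 c⟩

lemma zeta1_ne {s : ℂ} (hs : 1 ≤ s.re) : riemannZeta₁ s ≠ 0 := by
  by_cases h : s = 1
  · rw [h, riemannZeta₁_one]; norm_num
  · have h1 := riemannZeta_eq_inv_sub_add h
    have h2 := riemannZeta_ne_zero_of_one_le_re hs
    have h3 := sub_ne_zero.2 h
    have : riemannZeta₁ s = (s - 1) * riemannZeta s := by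
      rw [h1, riemannZeta₁]; field_simp
    rw [this]; exact mul_ne_zero h3 h2

lemma zeta1_low : ∃ c : ℝ, 0 < c ∧ ∀ s : ℂ, 1 < s.re → s.re ≤ 2 → 
    c * (1 + ‖s‖) ^ (4/5 : ℝ) ≤ ‖riemannZeta₁ s‖ := by
  obtain ⟨c, hc, h⟩ := zeta_low
  obtain ⟨d, hd, h'⟩ := compact_low differentiable_riemannZeta₁ (fun s hs => zeta1_ne hs)
  refine ⟨min (c / 4) (d / 4), by positivity, fun s h1 h2 => ?_⟩
  have hn := norm_nonneg s
  rcases le_total 1 |s.im| with h3 | h3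
  · have hs1 : s ≠ 1 := by rintro rfl; simp at h1
    have : riemannZeta₁ s = (s - 1) * riemannZeta s := by
      have h3 := sub_ne_zero.2 hs1
      rw [riemannZeta_eq_inv_sub_add hs1, riemannZeta₁]; field_simp
    rw [this, norm_mul]
    have e : (1 + ‖s‖) ^ (4/5 : ℝ) = (1 + ‖s‖) * (1 + ‖s‖) ^ (-(1/5) : ℝ) := by
      rw [← Real.rpow_one_add' (by positivity) (by norm_num)]; norm_num
    have h4 : (1 + ‖s‖) / 4 ≤ ‖s - 1‖ := by
      have a1 := Complex.abs_im_le_norm (s - 1)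
      have a2 := norm_add_le (s - 1) 1
      simp at a1 a2
      linarith
    calc _ ≤ c / 4 * (1 + ‖s‖) ^ (4/5 : ℝ) := by gcongr; exact min_le_left _ _
      _ = (1 + ‖s‖) / 4 * (c * (1 + ‖s‖) ^ (-(1/5) : ℝ)) := by rw [e]; ring
      _ ≤ _ := by gcongr; exact h s h1 h2 h3
  · refine le_trans ?_ (h' s h1 h2 h3)
    have h4 := Complex.norm_le_abs_re_add_abs_im s
    rw [abs_of_nonneg (by linarith : 0 ≤ s.re)] at h4
    calc _ ≤ d / 4 * (1 + ‖s‖) ^ (4/5 : ℝ) := by gcongr; exact min_le_right _ _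
      _ ≤ d / 4 * 4 := by
        gcongr
        calc (1 + ‖s‖) ^ (4/5 : ℝ) ≤ (1 + ‖s‖) ^ (1 : ℝ) := Real.rpow_le_rpow_of_exponent_le (by linarith) (by norm_num)
          _ ≤ _ := by rw [Real.rpow_one]; linarith
      _ = d := by ring

lemma Lchi_low : ∃ c : ℝ, 0 < c ∧ ∀ s : ℂ, 1 < s.re → s.re ≤ 2 → 
    c * (1 + ‖s‖) ^ (-(1/5) : ℝ) ≤ ‖chi3.LFunction s‖ := by
  obtain ⟨c, hc, h⟩ := L_low
  obtain ⟨d, hd, h'⟩ := compact_low (DirichletCharacter.differentiable_LFunction chi3_ne_one)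
    (fun s hs => DirichletCharacter.LFunction_ne_zero_of_one_le_re _ (Or.inl chi3_ne_one) hs)
  refine ⟨min c d, by positivity, fun s h1 h2 => ?_⟩
  have hn := norm_nonneg s
  rcases le_total 1 |s.im| with h3 | h3
  · refine le_trans ?_ (h s h1 h2 h3)
    gcongr; exact min_le_left _ _
  · refine le_trans ?_ (h' s h1 h2 h3)
    calc _ ≤ d * (1 + ‖s‖) ^ (-(1/5) : ℝ) := by gcongr; exact min_le_right _ _
      _ ≤ d * 1 := by
        gcongr
        exact Real.rpow_le_one_of_one_le_of_nonpos (by linarith) (by norm_num)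
      _ = d := by ring

lemma logd {F : ℂ → ℂ} (hF : Differentiable ℂ F) {C c k : ℝ} (hC : 0 < C) (hc : 0 < c) (hk : 0 ≤ k) (hk2 : k ≤ 1)
    (h : ∀ s : ℂ, 39/40 < s.re → ‖F s‖ ≤ C * (1 + ‖s‖) ^ (k + 1/20)) 
    (h0 : ∀ s : ℂ, 1 < s.re → s.re ≤ 2 → c * (1 + ‖s‖) ^ (k - 1/5) ≤ ‖F s‖) :
    ∃ K : ℝ, 0 < K ∧ ∀ s : ℂ, 1 < s.re → s.re ≤ 2 → ‖deriv F s / F s‖ ≤ K * (1 + ‖s‖) ^ (1/2 : ℝ) ∧ 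
      DifferentiableAt ℂ (fun s => deriv F s / F s) s ∧
      ‖deriv (fun s => deriv F s / F s) s‖ ≤ K * (1 + ‖s‖) ^ (1/2 : ℝ) := by
  have h1 := cauchy_step hF hC (by linarith) (by linarith) h
  have hF' : Differentiable ℂ (deriv F) := by
    have := hF.contDiff (n := 2)
    exact (this.iterate_deriv' 1 1).differentiable (by norm_num)
  have h2 := cauchy_step hF' (by positivity) (by linarith) (by linarith) h1
  refine ⟨400 * C / c + (400 * (400 * C)) / c + (400 * C / c) ^ 2, by positivity, fun s hs hs2 => ?_⟩
  have hn := norm_nonneg s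
  have hN : 1 ≤ 1 + ‖s‖ := by linarith
  set N := 1 + ‖s‖
  have hN0 : 0 < N := by linarith
  have hl := h0 s hs hs2
  have hp : 0 < c * N ^ (k - 1/5) := by positivity
  have hFs : F s ≠ 0 := norm_pos_iff.1 (hp.trans_le hl)
  have e1 : N ^ (k + 1/20) = N ^ (1/4 : ℝ) * N ^ (k - 1/5) := by
    rw [← Real.rpow_add hN0]; congr 1; ring
  have quot : ∀ (z : ℂ) (M : ℝ), 0 < M → ‖z‖ ≤ M * N ^ (k + 1/20) → ‖z / F s‖ ≤ M / c * N ^ (1/4 : ℝ) := by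
    intro z M hM hz
    rw [norm_div, div_le_iff₀ (hp.trans_le hl)]
    calc ‖z‖ ≤ M * N ^ (k + 1/20) := hz
      _ = M / c * N ^ (1/4 : ℝ) * (c * N ^ (k - 1/5)) := by rw [e1]; field_simp
      _ ≤ _ := by gcongr
  have q1 := quot _ _ (by positivity) (h1 s (by linarith))
  have q2 := quot _ _ (by positivity) (h2 s (by linarith))
  have e2 : N ^ (1/2 : ℝ) = (N ^ (1/4 : ℝ)) ^ 2 := by
    rw [← Real.rpow_natCast, ← Real.rpow_mul hN0.le]; norm_num
  have hM1 : 1 ≤ N ^ (1/4 : ℝ) := Real.one_le_rpow hN (by norm_num)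
  set M := N ^ (1/4 : ℝ)
  have hMM : M ≤ M ^ 2 := by nlinarith
  have p1 : 0 < 400 * C / c := by positivity
  have p2 : 0 < 400 * (400 * C) / c := by positivity
  have p3 : 0 < (400 * C / c) ^ 2 := by positivity
  have hd : HasDerivAt (fun s => deriv F s / F s) ((deriv (deriv F) s * F s - deriv F s * deriv F s) / F s ^ 2) s :=
    (hF' s).hasDerivAt.div (hF s).hasDerivAt hFs
  refine ⟨?_, hd.differentiableAt, ?_⟩
  · rw [e2]; nlinarith
  · rw [hd.deriv]
    have : (deriv (deriv F) s * F s - deriv F s * deriv F s) / F s ^ 2 = deriv (deriv F) s / F s - (deriv F s / F s) ^ 2 := by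
      field_simp
    rw [this, e2]
    refine (norm_sub_le _ _).trans ?_
    rw [norm_pow]
    have : ‖deriv F s / F s‖ ^ 2 ≤ (400 * C / c * M) ^ 2 := by gcongr
    nlinarith

/-- The function `-(ζ'/ζ) - L'/L - 1/(s-1)`. -/
noncomputable def Hfun (s : ℂ) : ℂ := -(deriv riemannZeta₁ s / riemannZeta₁ s) - deriv chi3.LFunction s / chi3.LFunction s

lemma Hfun_bound : ∃ K : ℝ, 0 < K ∧ ∀ s : ℂ, 1 < s.re → s.re ≤ 2 → ‖Hfun s‖ ≤ K * (1 + ‖s‖) ^ (1/2 : ℝ) ∧ 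
    DifferentiableAt ℂ Hfun s ∧ ‖deriv Hfun s‖ ≤ K * (1 + ‖s‖) ^ (1/2 : ℝ) := by
  obtain ⟨C, hC, h1⟩ := zeta0_bound
  obtain ⟨c, hc, h2⟩ := zeta1_low
  obtain ⟨C', hC', h1'⟩ := Lchi_bound
  obtain ⟨c', hc', h2'⟩ := Lchi_low
  obtain ⟨K, hK, h3⟩ := logd (F := riemannZeta₁) differentiable_riemannZeta₁ (C := 1 + C) (c := c) (k := 1) (by positivity) hc
    (by norm_num) (by norm_num) (fun s hs => by
      have hn := norm_nonneg s
      have a1 := h1 s hs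
      rw [riemannZeta₁]
      have a2 : 1 ≤ (1 + ‖s‖) ^ (1 + 1/20 : ℝ) := Real.one_le_rpow (by linarith) (by norm_num)
      have a3 : (1 + ‖s‖) ^ (1 + 1/20 : ℝ) = (1 + ‖s‖) * (1 + ‖s‖) ^ (1/20 : ℝ) := by
        rw [Real.rpow_one_add' (by positivity) (by norm_num)]
      have a4 : ‖s - 1‖ ≤ 1 + ‖s‖ := by
        have := norm_sub_le s 1; simp at this; linarith
      calc _ ≤ ‖(1:ℂ)‖ + ‖s - 1‖ * ‖riemannZeta₀ s‖ := by rw [← norm_mul]; exact norm_add_le _ _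
        _ ≤ 1 + (1 + ‖s‖) * (C * (1 + ‖s‖) ^ (1/20 : ℝ)) := by rw [norm_one]; gcongr
        _ = 1 + C * (1 + ‖s‖) ^ (1 + 1/20 : ℝ) := by rw [a3]; ring
        _ ≤ _ := by nlinarith) 
    (fun s a b => by have := h2 s a b; norm_num at this ⊢; exact this)
  obtain ⟨K', hK', h3'⟩ := logd (DirichletCharacter.differentiable_LFunction chi3_ne_one) (C := C') (c := c') (k := 0) hC' hc'
    (by norm_num) (by norm_num) (fun s hs => by simpa using h1' s hs) 
    (fun s a b => by simpa using h2' s a b)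
  refine ⟨K + K', by positivity, fun s a b => ?_⟩
  obtain ⟨b1, b2, b3⟩ := h3 s a b
  obtain ⟨b1', b2', b3'⟩ := h3' s a b
  have hd := (b2.hasDerivAt.neg).sub b2'.hasDerivAt
  have e : Hfun = (-(fun s => deriv riemannZeta₁ s / riemannZeta₁ s)) - fun s => deriv chi3.LFunction s / chi3.LFunction s := rfl
  rw [← e] at hd
  refine ⟨?_, hd.differentiableAt, ?_⟩
  · rw [Hfun]
    refine (norm_sub_le _ _).trans ?_
    rw [norm_neg]; linarith
  · rw [hd.deriv]
    refine (norm_sub_le _ _).trans ?_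
    rw [norm_neg]; linarith

open Complex MeasureTheory in
lemma ker_gen {f : ℝ → ℂ} {F : ℂ → ℂ} {σ : ℝ} (h : ∀ t : ℝ, HasMellin f (σ + t * I) (F (σ + t * I)))
    (hint : Integrable (fun t : ℝ => F (σ + t * I))) {y : ℝ} (hy : 0 < y) (hc : ContinuousAt f y⁻¹) :
    ∫ t : ℝ, (y : ℂ) ^ ((σ : ℂ) + t * I) * F (σ + t * I) = 2 * Real.pi * f y⁻¹ := by
  have h0 := (h 0).1
  simp only [ofReal_zero, zero_mul, add_zero] at h0
  have e : ∀ t : ℝ, mellin f (σ + t * I) = F (σ + t * I) := fun t => (h t).2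
  have hv : VerticalIntegrable (mellin f) σ := by
    unfold VerticalIntegrable
    simpa only [e] using hint
  have := mellinInv_mellin_eq σ f (inv_pos.2 hy) h0 hv hc
  rw [mellinInv] at this
  simp only [e, smul_eq_mul] at this
  rw [← this, Complex.real_smul]
  have e2 : ∀ t : ℝ, ((y⁻¹ : ℝ) : ℂ) ^ (-((σ : ℂ) + t * I)) = (y : ℂ) ^ ((σ : ℂ) + t * I) := by
    intro t
    rw [Complex.ofReal_inv, Complex.inv_cpow _ _ (by rw [Complex.arg_ofReal_of_nonneg hy.le]; exact Real.pi_pos.ne), Complex.cpow_neg, inv_inv]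
  simp only [e2]
  push_cast
  have : (Real.pi : ℂ) ≠ 0 := by exact_mod_cast Real.pi_ne_zero
  rw [← mul_assoc, mul_one_div_cancel (by simp), one_mul]

lemma sN {σ : ℝ} (hσ : 1 ≤ σ) (t : ℝ) : (1 + ‖(σ + t * Complex.I : ℂ)‖) ^ 2 / 4 ≤ 
      ‖((σ + t * Complex.I : ℂ)) * ((σ + t * Complex.I : ℂ) + 1)‖ ∧ 1 + |t| ≤ 1 + ‖(σ + t * Complex.I : ℂ)‖ ∧
      ‖(2 * (σ + t * Complex.I : ℂ) + 1) / ((σ + t * Complex.I : ℂ) * ((σ + t * Complex.I : ℂ) + 1))‖ ≤ 2 := by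
  set s : ℂ := σ + t * Complex.I with hs
  have hre : s.re = σ := by simp [hs]
  have him : s.im = t := by simp [hs]
  have h1 : 1 ≤ ‖s‖ := by
    have := Complex.abs_re_le_norm s; rw [hre] at this; linarith [le_abs_self σ]
  have h1' : 1 ≤ ‖s + 1‖ := by
    have := Complex.abs_re_le_norm (s+1); rw [Complex.add_re, hre, Complex.one_re] at this; linarith [le_abs_self (σ + 1)]
  have h2 : (1 + ‖s‖) / 2 ≤ ‖s‖ := by linarith
  have h3 : (1 + ‖s‖) / 2 ≤ ‖s + 1‖ := by
    have : ‖s‖ ≤ ‖s + 1‖ := by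
      rw [← sq_le_sq₀ (norm_nonneg _) (norm_nonneg _), Complex.sq_norm, Complex.sq_norm, Complex.normSq_apply, Complex.normSq_apply]
      simp [hre]; nlinarith
    linarith
  refine ⟨?_, ?_, ?_⟩
  · rw [norm_mul]; nlinarith
  · have := Complex.abs_im_le_norm s; rw [him] at this; linarith
  · have n1 : s ≠ 0 := by intro h; rw [h] at h1; norm_num at h1
    have n2 : s + 1 ≠ 0 := by intro h; rw [h] at h1'; norm_num at h1'
    have : (2 * s + 1) / (s * (s + 1)) = s⁻¹ + (s + 1)⁻¹ := by field_simp; ring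
    rw [this]
    refine (norm_add_le _ _).trans ?_
    rw [norm_inv, norm_inv]
    linarith [inv_le_one_of_one_le₀ h1, inv_le_one_of_one_le₀ h1']

lemma s_ne {σ : ℝ} (hσ : 1 < σ) (t : ℝ) : (σ + t * Complex.I : ℂ) ≠ 0 ∧ (σ + t * Complex.I : ℂ) + 1 ≠ 0 ∧ (σ + t * Complex.I : ℂ) - 1 ≠ 0 := by
  refine ⟨?_, ?_, ?_⟩ <;> intro h <;> have := congrArg Complex.re h <;> simp at this <;> linarith

lemma w_norm {σ : ℝ} (hσ : 1 < σ) (t : ℝ) : ‖1 / ((σ + t * Complex.I : ℂ) * ((σ + t * Complex.I : ℂ) + 1))‖ ≤ 4 * (1 + ‖(σ + t * Complex.I : ℂ)‖) ^ (-2 : ℝ) := by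
  obtain ⟨h1, h2, -⟩ := sN hσ.le t
  have h0 := norm_nonneg (σ + t * Complex.I : ℂ)
  rw [norm_div, norm_one, Real.rpow_neg (by positivity), Real.rpow_two, one_div,
    ← div_eq_mul_inv, inv_le_comm₀ (by refine lt_of_lt_of_le ?_ h1; positivity) (by positivity), inv_div]
  exact h1

open MeasureTheory in
lemma w_int {σ : ℝ} (hσ : 1 < σ) : Integrable (fun t : ℝ => 1 / ((σ + t * Complex.I : ℂ) * ((σ + t * Complex.I : ℂ) + 1))) := by
  have hi := (integrable_one_add_norm (E := ℝ) (μ := volume) (r := 2) (by simp)).const_mul 4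
  refine hi.mono' ?_ (Eventually.of_forall fun t => ?_)
  · refine Continuous.aestronglyMeasurable ?_
    refine Continuous.div continuous_const (by fun_prop) (fun t => mul_ne_zero (s_ne hσ t).1 (s_ne hσ t).2.1)
  · refine (w_norm hσ t).trans ?_
    have := (sN hσ.le t).2.1
    gcongr 4 * ?_
    exact Real.rpow_le_rpow_of_nonpos (by positivity) this (by norm_num)

open MeasureTheory in
lemma w1_int {σ : ℝ} (hσ : 1 < σ) : Integrable (fun t : ℝ => 1 / (((σ + t * Complex.I : ℂ) - 1) * ((σ + t * Complex.I : ℂ) * ((σ + t * Complex.I : ℂ) + 1)))) := by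
  refine ((w_int hσ).norm.const_mul (σ - 1)⁻¹).mono' ?_ (Eventually.of_forall fun t => ?_)
  · refine Continuous.aestronglyMeasurable ?_
    refine Continuous.div continuous_const (by fun_prop) (fun t => mul_ne_zero (s_ne hσ t).2.2 (mul_ne_zero (s_ne hσ t).1 (s_ne hσ t).2.1))
  · rw [one_div, mul_inv, ← one_div (_ * _), norm_mul, norm_inv]
    have h1 : σ - 1 ≤ ‖(σ + t * Complex.I : ℂ) - 1‖ := by
      have := Complex.abs_re_le_norm ((σ + t * Complex.I : ℂ) - 1)
      simp at this
      exact (le_abs_self _).trans this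
    exact mul_le_mul_of_nonneg_right (inv_anti₀ (by linarith) h1) (norm_nonneg _)

open Complex MeasureTheory in
lemma ker1 {σ : ℝ} (hσ : 1 < σ) {y : ℝ} (hy : 0 < y) :
    ∫ t : ℝ, (y : ℂ) ^ ((σ : ℂ) + t * I) * (1 / ((σ + t * I : ℂ) * ((σ + t * I : ℂ) + 1))) = 2 * Real.pi * ((max (1 - y⁻¹) 0 : ℝ) : ℂ) := by
  have key : (fun t : ℝ => (Set.Ioc (0:ℝ) 1).indicator (fun t => (t:ℂ) ^ (0:ℂ)) t - (Set.Ioc (0:ℝ) 1).indicator (fun t => (t:ℂ) ^ (1:ℂ)) t) 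
      =ᶠ[nhds y⁻¹] fun u => ((max (1 - u) 0 : ℝ) : ℂ) := by
    filter_upwards [lt_mem_nhds (inv_pos.2 hy)] with u hu
    by_cases h : u ≤ 1
    · have hm : u ∈ Set.Ioc (0:ℝ) 1 := ⟨hu, h⟩
      rw [Set.indicator_of_mem hm, Set.indicator_of_mem hm, max_eq_left (by linarith)]
      simp
    · have hm : u ∉ Set.Ioc (0:ℝ) 1 := fun h' => h h'.2
      rw [Set.indicator_of_notMem hm, Set.indicator_of_notMem hm, max_eq_right (by linarith)]
      simp
  rw [← key.eq_of_nhds]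
  refine ker_gen (f := (fun t : ℝ => (Set.Ioc (0:ℝ) 1).indicator (fun t => (t:ℂ) ^ (0:ℂ)) t - (Set.Ioc (0:ℝ) 1).indicator (fun t => (t:ℂ) ^ (1:ℂ)) t))
    (F := fun s => 1 / (s * (s + 1))) (fun t => ?_) (w_int hσ) hy ?_
  · have h1 := hasMellin_cpow_Ioc 0 (s := σ + t * I) (by simp; linarith)
    have h2 := hasMellin_cpow_Ioc 1 (s := σ + t * I) (by simp; linarith)
    have h3 := hasMellin_sub h1.1 h2.1
    rw [h1.2, h2.2] at h3
    convert! h3 using 1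
    obtain ⟨a, b, c⟩ := s_ne hσ t
    rw [add_zero]; field_simp; ring
  · refine ContinuousAt.congr ?_ key.symm
    fun_prop

open Complex MeasureTheory in
lemma ker2 {σ : ℝ} (hσ : 1 < σ) {y : ℝ} (hy : 1 < y) :
    ∫ t : ℝ, (y : ℂ) ^ ((σ : ℂ) + t * I) * (1 / (((σ + t * I : ℂ) - 1) * ((σ + t * I : ℂ) * ((σ + t * I : ℂ) + 1)))) = 
      2 * Real.pi * (((y / 2 - 1 + y⁻¹ / 2) : ℝ) : ℂ) := by
  have hy0 : 0 < y := by linarith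
  have hyi : y⁻¹ < 1 := inv_lt_one_of_one_lt₀ hy
  have key : (fun t : ℝ => (1/2 : ℂ) • (Set.Ioc (0:ℝ) 1).indicator (fun t => (t:ℂ) ^ (-1:ℂ)) t - (Set.Ioc (0:ℝ) 1).indicator (fun t => (t:ℂ) ^ (0:ℂ)) t + 
      (1/2 : ℂ) • (Set.Ioc (0:ℝ) 1).indicator (fun t => (t:ℂ) ^ (1:ℂ)) t) 
      =ᶠ[nhds y⁻¹] fun u : ℝ => ((u⁻¹ / 2 - 1 + u / 2 : ℝ) : ℂ) := by
    filter_upwards [lt_mem_nhds (inv_pos.2 hy0), gt_mem_nhds hyi] with u hu hu1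
    have hm : u ∈ Set.Ioc (0:ℝ) 1 := ⟨hu, hu1.le⟩
    rw [Set.indicator_of_mem hm, Set.indicator_of_mem hm, Set.indicator_of_mem hm]
    simp [Complex.cpow_neg_one]; ring
  have := key.eq_of_nhds
  rw [inv_inv] at this
  rw [← this]
  refine ker_gen (f := (fun t : ℝ => (1/2 : ℂ) • (Set.Ioc (0:ℝ) 1).indicator (fun t => (t:ℂ) ^ (-1:ℂ)) t - (Set.Ioc (0:ℝ) 1).indicator (fun t => (t:ℂ) ^ (0:ℂ)) t + 
      (1/2 : ℂ) • (Set.Ioc (0:ℝ) 1).indicator (fun t => (t:ℂ) ^ (1:ℂ)) t))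
    (F := fun s => 1 / ((s - 1) * (s * (s + 1)))) (fun t => ?_) (w1_int hσ) hy0 ?_
  · have h0 := hasMellin_cpow_Ioc (-1) (s := σ + t * I) (by simp; linarith)
    have h1 := hasMellin_cpow_Ioc 0 (s := σ + t * I) (by simp; linarith)
    have h2 := hasMellin_cpow_Ioc 1 (s := σ + t * I) (by simp; linarith)
    have h0' := hasMellin_const_smul h0.1 (1/2 : ℂ)
    have h2' := hasMellin_const_smul h2.1 (1/2 : ℂ)
    have h3 := hasMellin_sub h0'.1 h1.1
    have h4 := hasMellin_add h3.1 h2'.1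
    rw [h3.2, h0'.2, h2'.2, h0.2, h1.2, h2.2] at h4
    convert! h4 using 1
    obtain ⟨a, b, c⟩ := s_ne hσ t
    rw [add_zero, ← sub_eq_add_neg, smul_eq_mul, smul_eq_mul]; field_simp; ring
  · refine ContinuousAt.congr ?_ key.symm
    have : ContinuousAt (fun u : ℝ => u⁻¹ / 2 - 1 + u / 2) y⁻¹ := by
      have : y⁻¹ ≠ 0 := (inv_pos.2 hy0).ne'
      fun_prop (disch := assumption)
    exact Complex.continuous_ofReal.continuousAt.comp this

/-- coefficients -/
noncomputable def aco (n : ℕ) : ℂ := (ArithmeticFunction.vonMangoldt n : ℂ) + chi3 n * (ArithmeticFunction.vonMangoldt n : ℂ)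

lemma aco_summable {s : ℂ} (hs : 1 < s.re) : LSeriesSummable aco s := 
  (ArithmeticFunction.LSeriesSummable_vonMangoldt hs).add (DirichletCharacter.LSeriesSummable_twist_vonMangoldt chi3 hs)

lemma aco_LSeries {s : ℂ} (hs : 1 < s.re) : LSeries aco s = Hfun s + (s - 1)⁻¹ := by
  have h1 := LSeries_add (ArithmeticFunction.LSeriesSummable_vonMangoldt hs) (DirichletCharacter.LSeriesSummable_twist_vonMangoldt chi3 hs)
  have e : aco = (fun n => (ArithmeticFunction.vonMangoldt n : ℂ)) + ((fun n : ℕ => chi3 n) * fun n => (ArithmeticFunction.vonMangoldt n : ℂ)) := rfl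
  rw [e, h1, ArithmeticFunction.LSeries_vonMangoldt_eq_deriv_riemannZeta_div hs, DirichletCharacter.LSeries_twist_vonMangoldt_eq chi3 hs,
    ← DirichletCharacter.deriv_LFunction_eq_deriv_LSeries chi3 hs, ← DirichletCharacter.LFunction_eq_LSeries chi3 hs, Hfun]
  have hs1 : s ≠ 1 := by rintro rfl; simp at hs
  have h3 := sub_ne_zero.2 hs1
  have ez : riemannZeta =ᶠ[nhds s] fun s => (s - 1)⁻¹ * riemannZeta₁ s := by
    filter_upwards [isOpen_ne.mem_nhds hs1] with z hz 
    have := sub_ne_zero.2 hz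
    rw [riemannZeta_eq_inv_sub_add hz, riemannZeta₁]; field_simp
  have hd : HasDerivAt (fun s : ℂ => (s - 1)⁻¹ * riemannZeta₁ s) 
      (-1 / (s - 1) ^ 2 * riemannZeta₁ s + (s - 1)⁻¹ * deriv riemannZeta₁ s) s :=
    (((hasDerivAt_id s).sub_const 1).inv (sub_ne_zero.2 hs1)).mul (differentiable_riemannZeta₁ s).hasDerivAt
  rw [ez.deriv_eq, hd.deriv, ez.eq_of_nhds]
  have h4 := zeta1_ne hs.le
  field_simp
  ring

open Complex MeasureTheory in
lemma perron {σ : ℝ} (hσ : 1 < σ) {x : ℝ} (hx : 1 < x) :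
    ∫ t : ℝ, (x : ℂ) ^ ((σ : ℂ) + t * I) * (LSeries aco (σ + t * I) * (1 / ((σ + t * I : ℂ) * ((σ + t * I : ℂ) + 1)))) = 
      2 * Real.pi * ∑' n : ℕ, aco n * ((max (1 - n / x) 0 : ℝ) : ℂ) := by
  have hx0 : 0 < x := by linarith
  set F : ℕ → ℝ → ℂ := fun n t => LSeries.term aco (σ + t * I) n * ((x : ℂ) ^ ((σ : ℂ) + t * I) * (1 / ((σ + t * I : ℂ) * ((σ + t * I : ℂ) + 1)))) with hF
  have hre : ∀ t : ℝ, ((σ : ℂ) + t * I).re = σ := by intro t; simp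
  have hFe : ∀ n : ℕ, n ≠ 0 → F n = fun t : ℝ => aco n * (((x / n : ℝ) : ℂ) ^ ((σ : ℂ) + t * I) * (1 / ((σ + t * I : ℂ) * ((σ + t * I : ℂ) + 1)))) := by
    intro n hn
    ext t
    rw [hF]
    simp only [LSeries.term_of_ne_zero hn]
    have hn' : (0:ℝ) < n := by positivity
    have hnc : (n : ℂ) ^ ((σ : ℂ) + t * I) ≠ 0 := by
      rw [Complex.cpow_ne_zero_iff]; left; exact_mod_cast hn
    have : ((x / n : ℝ) : ℂ) ^ ((σ : ℂ) + t * I) = (x : ℂ) ^ ((σ : ℂ) + t * I) / (n : ℂ) ^ ((σ : ℂ) + t * I) := by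
      rw [eq_div_iff hnc, ← ofReal_natCast, ← Complex.mul_cpow_ofReal_nonneg (by positivity) (by positivity), ← ofReal_mul, div_mul_cancel₀ _ hn'.ne']
    rw [this]
    field_simp
  have hF0 : F 0 = 0 := by ext t; simp [hF]
  have hnorm : ∀ n t, ‖F n t‖ = ‖LSeries.term aco σ n‖ * (x ^ σ * ‖1 / ((σ + t * I : ℂ) * ((σ + t * I : ℂ) + 1))‖) := by
    intro n t
    rw [hF]
    simp only [norm_mul]
    rw [LSeries.norm_term_eq, LSeries.norm_term_eq, Complex.norm_cpow_eq_rpow_re_of_pos hx0, hre, ofReal_re]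
  have hcont : ∀ n, Continuous (F n) := by
    intro n
    by_cases hn : n = 0
    · rw [hn, hF0]; exact continuous_const
    · rw [hFe n hn]
      refine continuous_const.mul (Continuous.mul ?_ ?_)
      · refine Continuous.const_cpow (by fun_prop) (Or.inl ?_)
        have : (0:ℝ) < x / n := by positivity
        exact_mod_cast this.ne'
      · refine Continuous.div continuous_const (by fun_prop) (fun t => mul_ne_zero (s_ne hσ t).1 (s_ne hσ t).2.1)
  have hint : ∀ n, Integrable (F n) := by
    intro n
    refine (((w_int hσ).norm.const_mul (x ^ σ)).const_mul ‖LSeries.term aco σ n‖).mono' (hcont n).aestronglyMeasurable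
      (Eventually.of_forall fun t => (hnorm n t).le)
  have hsum : Summable fun n => ∫ t, ‖F n t‖ := by
    simp only [hnorm]
    simp only [integral_const_mul]
    exact (aco_summable (s := σ) (by simpa using hσ)).norm.mul_right _
  have := hasSum_integral_of_summable_integral_norm hint hsum
  have e1 : ∀ t, ∑' n, F n t = (x : ℂ) ^ ((σ : ℂ) + t * I) * (LSeries aco (σ + t * I) * (1 / ((σ + t * I : ℂ) * ((σ + t * I : ℂ) + 1)))) := by
    intro t
    rw [hF]
    simp only [tsum_mul_right]
    rw [LSeries]; ring
  simp only [e1] at this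
  rw [← this.tsum_eq, ← tsum_mul_left]
  congr 1
  ext n
  by_cases hn : n = 0
  · rw [hn, hF0]; simp [aco]
  · rw [hFe n hn]
    simp only []
    rw [integral_const_mul, ker1 hσ (by positivity), inv_div]
    ring

open Complex MeasureTheory in
lemma perron2 {σ : ℝ} (hσ : 1 < σ) (hσ2 : σ ≤ 2) {x : ℝ} (hx : 1 < x) :
    ∫ t : ℝ, (x : ℂ) ^ ((σ : ℂ) + t * I) * (Hfun (σ + t * I) * (1 / ((σ + t * I : ℂ) * ((σ + t * I : ℂ) + 1)))) = 
      2 * Real.pi * (∑' n : ℕ, aco n * ((max (1 - n / x) 0 : ℝ) : ℂ) - (((x / 2 - 1 + x⁻¹ / 2) : ℝ) : ℂ)) := by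
  have hx0 : 0 < x := by linarith
  rw [mul_sub, ← perron hσ hx, ← ker2 hσ hx, eq_sub_iff_add_eq, ← integral_add]
  · congr 1
    ext t
    rw [aco_LSeries (by simpa using hσ)]
    obtain ⟨a, b, c⟩ := s_ne hσ t
    field_simp
  · obtain ⟨K, hK, h⟩ := Hfun_bound
    have hi := ((integrable_one_add_norm (E := ℝ) (μ := volume) (r := 3/2) (by simp; norm_num)).const_mul (4 * K)).const_mul (x ^ σ)
    refine hi.mono' ?_ (Eventually.of_forall fun t => ?_)
    · refine Continuous.aestronglyMeasurable ?_
      refine Continuous.mul ?_ (Continuous.mul ?_ ?_)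
      · refine Continuous.const_cpow (by fun_prop) (Or.inl ?_)
        exact_mod_cast hx0.ne'
      · refine continuous_iff_continuousAt.2 fun t => ?_
        refine ContinuousAt.comp (f := fun t : ℝ => (σ : ℂ) + t * I) (g := Hfun) ?_ (by fun_prop)
        exact (h _ (by simpa using hσ) (by simpa using hσ2)).2.1.continuousAt
      · refine Continuous.div continuous_const (by fun_prop) (fun t => mul_ne_zero (s_ne hσ t).1 (s_ne hσ t).2.1)
    · rw [norm_mul, Complex.norm_cpow_eq_rpow_re_of_pos hx0]
      have hre : ((σ : ℂ) + t * I).re = σ := by simp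
      rw [hre, norm_mul]
      refine mul_le_mul_of_nonneg_left ?_ (by positivity)
      have h0 := norm_nonneg (σ + t * I : ℂ)
      have h1 := (h (σ + t * I) (by simpa using hσ) (by simpa using hσ2)).1
      have h2 := w_norm hσ t
      have h3 := (sN hσ.le t).2.1
      calc _ ≤ (K * (1 + ‖(σ + t * I : ℂ)‖) ^ (1/2 : ℝ)) * (4 * (1 + ‖(σ + t * I : ℂ)‖) ^ (-2 : ℝ)) := by gcongr
        _ = 4 * K * (1 + ‖(σ + t * I : ℂ)‖) ^ (-(3/2) : ℝ) := by
          rw [show (-(3/2) : ℝ) = 1/2 + (-2) by norm_num, Real.rpow_add (by positivity)]; ring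
        _ ≤ _ := by
          refine mul_le_mul_of_nonneg_left ?_ (by positivity)
          exact Real.rpow_le_rpow_of_nonpos (by positivity) h3 (by norm_num)
  · have hi := (w1_int hσ).norm.const_mul (x ^ σ)
    refine hi.mono' ?_ (Eventually.of_forall fun t => ?_)
    · refine Continuous.aestronglyMeasurable ?_
      refine Continuous.mul ?_ ?_
      · refine Continuous.const_cpow (by fun_prop) (Or.inl ?_)
        exact_mod_cast hx0.ne'
      · refine Continuous.div continuous_const (by fun_prop) (fun t => mul_ne_zero (s_ne hσ t).2.2 (mul_ne_zero (s_ne hσ t).1 (s_ne hσ t).2.1))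
    · rw [norm_mul, Complex.norm_cpow_eq_rpow_re_of_pos hx0]
      have hre : ((σ : ℂ) + t * I).re = σ := by simp
      rw [hre]

open Complex MeasureTheory in
lemma phi_bound : ∃ K : ℝ, 0 < K ∧ ∀ (σ t : ℝ), 1 < σ → σ ≤ 2 → 
    ‖Hfun (σ + t * I) * (1 / ((σ + t * I : ℂ) * ((σ + t * I : ℂ) + 1)))‖ ≤ K * (1 + |t|) ^ (-(3/2) : ℝ) ∧
    ∃ d : ℂ, HasDerivAt (fun t : ℝ => Hfun (σ + t * I) * (1 / ((σ + t * I : ℂ) * ((σ + t * I : ℂ) + 1)))) d t ∧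
      ‖d‖ ≤ K * (1 + |t|) ^ (-(3/2) : ℝ) := by
  obtain ⟨K, hK, h⟩ := Hfun_bound
  refine ⟨12 * K, by positivity, fun σ t hσ hσ2 => ?_⟩
  obtain ⟨h1, h2, h3⟩ := h (σ + t * I) (by simpa using hσ) (by simpa using hσ2)
  have w1 := w_norm hσ t
  obtain ⟨w2, w3, w4⟩ := sN hσ.le t
  obtain ⟨n1, n2, -⟩ := s_ne hσ t
  have hline : HasDerivAt (fun t : ℝ => (σ : ℂ) + t * I) I t := by
    simpa using ((Complex.ofRealCLM.hasDerivAt (x := t)).mul_const I).const_add (σ : ℂ)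
  set s : ℂ := (σ : ℂ) + t * I with hs
  have h0 := norm_nonneg s
  have hN : (1 + ‖s‖) ^ (1/2 : ℝ) * (1 + ‖s‖) ^ (-2 : ℝ) ≤ (1 + |t|) ^ (-(3/2) : ℝ) := by
    rw [← Real.rpow_add (by positivity)]
    norm_num
    exact Real.rpow_le_rpow_of_nonpos (by positivity) w3 (by norm_num)
  have hT : 0 ≤ (1 + |t|) ^ (-(3/2) : ℝ) := by positivity
  have b1 : ‖Hfun s‖ * ‖1 / (s * (s + 1))‖ ≤ 4 * K * (1 + |t|) ^ (-(3/2) : ℝ) := by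
    calc _ ≤ (K * (1 + ‖s‖) ^ (1/2 : ℝ)) * (4 * (1 + ‖s‖) ^ (-2 : ℝ)) := by
          exact mul_le_mul h1 w1 (norm_nonneg _) (by positivity)
      _ = 4 * K * ((1 + ‖s‖) ^ (1/2 : ℝ) * (1 + ‖s‖) ^ (-2 : ℝ)) := by ring
      _ ≤ _ := mul_le_mul_of_nonneg_left hN (by positivity)
  have b2 : ‖deriv Hfun s‖ * ‖1 / (s * (s + 1))‖ ≤ 4 * K * (1 + |t|) ^ (-(3/2) : ℝ) := by
    calc _ ≤ (K * (1 + ‖s‖) ^ (1/2 : ℝ)) * (4 * (1 + ‖s‖) ^ (-2 : ℝ)) := by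
          exact mul_le_mul h3 w1 (norm_nonneg _) (by positivity)
      _ = 4 * K * ((1 + ‖s‖) ^ (1/2 : ℝ) * (1 + ‖s‖) ^ (-2 : ℝ)) := by ring
      _ ≤ _ := mul_le_mul_of_nonneg_left hN (by positivity)
  refine ⟨?_, ?_⟩
  · rw [norm_mul]
    nlinarith
  · have d1 : HasDerivAt (fun s : ℂ => s * (s + 1)) (1 * (s + 1) + s * 1) s :=
      (hasDerivAt_id s).mul ((hasDerivAt_id s).add_const 1)
    have d2 : HasDerivAt (fun s : ℂ => 1 / (s * (s + 1))) ((0 * (s * (s + 1)) - 1 * (1 * (s + 1) + s * 1)) / (s * (s + 1)) ^ 2) s :=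
      (hasDerivAt_const s (1:ℂ)).div d1 (mul_ne_zero n1 n2)
    have d3 := h2.hasDerivAt.mul d2
    have d4 := HasDerivAt.comp_of_eq (h := fun t : ℝ => (σ : ℂ) + t * I) t d3 hline hs.symm
    refine ⟨_, d4, ?_⟩
    have e : (0 * (s * (s + 1)) - 1 * (1 * (s + 1) + s * 1)) / (s * (s + 1)) ^ 2 = 
      -((2 * s + 1) / (s * (s + 1)) * (1 / (s * (s + 1)))) := by field_simp; ring
    rw [e, norm_mul, Complex.norm_I, mul_one]
    refine (norm_add_le _ _).trans ?_
    rw [norm_mul, norm_mul, norm_neg, norm_mul]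
    have : ‖Hfun s‖ * (‖(2 * s + 1) / (s * (s + 1))‖ * ‖1 / (s * (s + 1))‖) ≤ 2 * (4 * K * (1 + |t|) ^ (-(3/2) : ℝ)) := by
      calc _ = ‖(2 * s + 1) / (s * (s + 1))‖ * (‖Hfun s‖ * ‖1 / (s * (s + 1))‖) := by ring
        _ ≤ _ := mul_le_mul w4 b1 (by positivity) (by norm_num)
    linarith

open Complex MeasureTheory in
lemma J_bound : ∃ C : ℝ, 0 < C ∧ ∀ (σ x : ℝ), 1 < σ → σ ≤ 2 → 1 < x → 
   ‖∫ t : ℝ, (x : ℂ) ^ ((σ : ℂ) + t * I) * (Hfun (σ + t * I) * (1 / ((σ + t * I : ℂ) * ((σ + t * I : ℂ) + 1))))‖ ≤ 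
    C * x ^ σ / Real.log x := by
  obtain ⟨K, hK, h⟩ := phi_bound
  have hi0 := integrable_one_add_norm (E := ℝ) (μ := volume) (r := 3/2) (by simp; norm_num)
  set M := ∫ t : ℝ, (1 + ‖t‖) ^ (-(3/2) : ℝ) with hM
  have hM0 : 0 ≤ M := integral_nonneg fun t => by positivity
  refine ⟨K * M + 1, by positivity, fun σ x hσ hσ2 hx => ?_⟩
  have hx0 : 0 < x := by linarith
  have hl : 0 < Real.log x := Real.log_pos hx
  set u : ℝ → ℂ := fun t => Hfun (σ + t * I) * (1 / ((σ + t * I : ℂ) * ((σ + t * I : ℂ) + 1))) with hu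
  have hd : ∀ t, HasDerivAt u (deriv u t) t := fun t => by
    obtain ⟨d, hd, -⟩ := (h σ t hσ hσ2).2
    exact hd.differentiableAt.hasDerivAt
  have hdb : ∀ t, ‖deriv u t‖ ≤ K * (1 + ‖t‖) ^ (-(3/2) : ℝ) := fun t => by
    obtain ⟨d, hd, hb⟩ := (h σ t hσ hσ2).2
    rw [hd.deriv]; exact hb
  have hub : ∀ t, ‖u t‖ ≤ K * (1 + ‖t‖) ^ (-(3/2) : ℝ) := fun t => (h σ t hσ hσ2).1
  set v' : ℝ → ℂ := fun t => (x : ℂ) ^ ((σ : ℂ) + t * I) with hv'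
  set c : ℂ := (Real.log x * I)⁻¹ with hc
  have hlc : (Real.log x * I : ℂ) ≠ 0 := mul_ne_zero (by exact_mod_cast hl.ne') I_ne_zero
  set v : ℝ → ℂ := fun t => c * v' t with hv
  have hvd : ∀ t, HasDerivAt v (v' t) t := by
    intro t
    have hline : HasDerivAt (fun t : ℝ => (σ : ℂ) + t * I) I t := by
      simpa using ((Complex.ofRealCLM.hasDerivAt (x := t)).mul_const I).const_add (σ : ℂ)
    have h1 := (hasDerivAt_id ((σ : ℂ) + t * I)).const_cpow (c := (x : ℂ)) (Or.inl (by exact_mod_cast hx0.ne'))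
    have := (HasDerivAt.comp_of_eq (h := fun t : ℝ => (σ : ℂ) + t * I) t h1 hline rfl).const_mul c
    convert! this using 1
    rw [hv', hc, ← Complex.ofReal_log hx0.le]
    simp only [id]
    have : (Real.log x : ℂ) ≠ 0 := by exact_mod_cast hl.ne'
    field_simp
  have hnv' : ∀ t, ‖v' t‖ = x ^ σ := by
    intro t
    rw [hv']; simp only []
    rw [Complex.norm_cpow_eq_rpow_re_of_pos hx0]; simp
  have hnc : ‖c‖ = (Real.log x)⁻¹ := by
    rw [hc, norm_inv, norm_mul, norm_I, mul_one, Complex.norm_real, Real.norm_of_nonneg hl.le]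
  have hnv : ∀ t, ‖v t‖ = x ^ σ / Real.log x := by
    intro t; rw [hv]; simp only []; rw [norm_mul, hnv', hnc]; ring
  have cu : Continuous u := continuous_iff_continuousAt.2 fun t => (hd t).continuousAt
  have cv : Continuous v := continuous_iff_continuousAt.2 fun t => (hvd t).continuousAt
  have cv' : Continuous v' := by
    refine Continuous.const_cpow (by fun_prop) (Or.inl ?_)
    exact_mod_cast hx0.ne'
  have md : AEStronglyMeasurable (deriv u) volume := (stronglyMeasurable_deriv u).aestronglyMeasurable
  have I1 : Integrable (u * v') := by
    refine ((hi0.const_mul K).mul_const (x ^ σ)).mono' (cu.mul cv').aestronglyMeasurable (Eventually.of_forall fun t => ?_)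
    rw [Pi.mul_apply, norm_mul, hnv']
    exact mul_le_mul_of_nonneg_right (hub t) (by positivity)
  have I2 : Integrable (deriv u * v) := by
    refine ((hi0.const_mul K).mul_const (x ^ σ / Real.log x)).mono' (md.mul cv.aestronglyMeasurable) (Eventually.of_forall fun t => ?_)
    rw [Pi.mul_apply, norm_mul, hnv]
    exact mul_le_mul_of_nonneg_right (hdb t) (by positivity)
  have I3 : Integrable (u * v) := by
    refine ((hi0.const_mul K).mul_const (x ^ σ / Real.log x)).mono' (cu.mul cv).aestronglyMeasurable (Eventually.of_forall fun t => ?_)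
    rw [Pi.mul_apply, norm_mul, hnv]
    exact mul_le_mul_of_nonneg_right (hub t) (by positivity)
  have key := integral_mul_deriv_eq_deriv_mul_of_integrable (fun t _ => hd t) (fun t _ => hvd t) I1 I2 I3
  have e : ∫ t : ℝ, v' t * u t = ∫ t, u t * v' t := by simp only [mul_comm]
  rw [e, key, norm_neg]
  calc _ ≤ ∫ t : ℝ, K * (1 + ‖t‖) ^ (-(3/2) : ℝ) * (x ^ σ / Real.log x) := by
        refine norm_integral_le_of_norm_le ((hi0.const_mul K).mul_const _) (Eventually.of_forall fun t => ?_)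
        rw [norm_mul, hnv]
        exact mul_le_mul_of_nonneg_right (hdb t) (by positivity)
    _ = K * M * (x ^ σ / Real.log x) := by rw [integral_mul_const, integral_const_mul]
    _ ≤ _ := by
      rw [mul_div_assoc]
      have : 0 ≤ x ^ σ / Real.log x := by positivity
      nlinarith

lemma smooth_pnt : ∃ C : ℝ, 0 < C ∧ ∀ x : ℝ, 3 ≤ x → 
    ‖∑' n : ℕ, aco n * ((max (1 - n / x) 0 : ℝ) : ℂ) - ((x / 2 : ℝ) : ℂ)‖ ≤ C * x / Real.log x := by
  obtain ⟨C, hC, h⟩ := J_bound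
  refine ⟨3 * C + 2, by positivity, fun x hx => ?_⟩
  have hx0 : 0 < x := by linarith
  have hl1 : 1 ≤ Real.log x := by
    rw [Real.le_log_iff_exp_le hx0]
    linarith [Real.exp_one_lt_d9]
  have hl : 0 < Real.log x := by linarith
  have hσ : 1 < 1 + (Real.log x)⁻¹ := by have := inv_pos.2 hl; linarith
  have hσ2 : 1 + (Real.log x)⁻¹ ≤ 2 := by have := inv_le_one_of_one_le₀ hl1; linarith
  have h1 := h _ x hσ hσ2 (by linarith)
  rw [perron2 hσ hσ2 (by linarith)] at h1
  set S := ∑' n : ℕ, aco n * ((max (1 - n / x) 0 : ℝ) : ℂ)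
  have e : x ^ (1 + (Real.log x)⁻¹) = x * Real.exp 1 := by
    rw [Real.rpow_add hx0, Real.rpow_one, Real.rpow_def_of_pos hx0, mul_inv_cancel₀ hl.ne']
  rw [e, norm_mul, norm_mul, Complex.norm_real, Real.norm_of_nonneg Real.pi_pos.le, Complex.norm_ofNat] at h1
  have h2 : ‖S - ((x / 2 - 1 + x⁻¹ / 2 : ℝ) : ℂ)‖ ≤ 3 * C * x / Real.log x := by
    have a1 : C * (x * Real.exp 1) / Real.log x ≤ 3 * C * x / Real.log x := by
      gcongr ?_ / _
      have := Real.exp_one_lt_d9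
      have : 0 < C * x := by positivity
      nlinarith
    have := Real.pi_gt_three
    have := norm_nonneg (S - ((x / 2 - 1 + x⁻¹ / 2 : ℝ) : ℂ))
    nlinarith
  have e2 : S - ((x / 2 : ℝ) : ℂ) = (S - ((x / 2 - 1 + x⁻¹ / 2 : ℝ) : ℂ)) + ((-1 + x⁻¹ / 2 : ℝ) : ℂ) := by
    push_cast; ring
  rw [e2]
  refine (norm_add_le _ _).trans ?_
  have h3 : ‖((-1 + x⁻¹ / 2 : ℝ) : ℂ)‖ ≤ 1 := by
    rw [Complex.norm_real, Real.norm_eq_abs, abs_le]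
    have : 0 < x⁻¹ := by positivity
    have : x⁻¹ ≤ 1 := inv_le_one_of_one_le₀ (by linarith)
    constructor <;> linarith
  have h4 : 1 ≤ x / Real.log x := by
    rw [le_div_iff₀ hl]
    have := Real.log_le_sub_one_of_pos hx0
    linarith
  rw [mul_div_assoc] at h2 ⊢
  nlinarith

/-- primes congruent to 1 mod 3 up to y -/
noncomputable def Q1 (y : ℝ) : Finset ℕ := (Finset.Ioc 0 ⌊y⌋₊).filter (fun q => q.Prime ∧ q % 3 = 1)

/-- smoothed log-weighted count -/
noncomputable def Slog (y : ℝ) : ℝ := ∑ q ∈ Q1 y, Real.log q * (y - q)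

lemma aco_bound {n : ℕ} {r : ℝ} (hr0 : 0 ≤ r) (hr1 : r ≤ 1) :
    ‖aco n * (r : ℂ) - ((if n.Prime ∧ n % 3 = 1 then 2 * (Real.log n * r) else 0 : ℝ) : ℂ)‖ ≤ 
    (if ¬ n.Prime then 2 * ArithmeticFunction.vonMangoldt n else 0) + (if n = 3 then Real.log 3 else 0) := by
  have hL := ArithmeticFunction.vonMangoldt_nonneg (n := n)
  have h3 : 0 ≤ Real.log 3 := Real.log_nonneg (by norm_num)
  by_cases hp : n.Prime
  · have hv := ArithmeticFunction.vonMangoldt_apply_prime hp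
    have hmod : n % 3 = 0 ∨ n % 3 = 1 ∨ n % 3 = 2 := by omega
    have hc : (n : ZMod 3) = ((n % 3 : ℕ) : ZMod 3) := by simp
    rcases hmod with h | h | h
    · have : n = 3 := by
        have := (Nat.prime_dvd_prime_iff_eq Nat.prime_three hp).1 (Nat.dvd_of_mod_eq_zero h)
        exact this.symm
      subst this
      rw [h, Nat.cast_zero] at hc
      rw [aco, hc, chi3_zero, hv]
      rw [if_neg (by norm_num), if_neg (not_not.2 hp), if_pos rfl, zero_mul, add_zero, Complex.ofReal_zero, sub_zero, norm_mul,
        Complex.norm_real, Complex.norm_real, Real.norm_of_nonneg hr0, Real.norm_of_nonneg (by exact_mod_cast h3)]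
      push_cast
      nlinarith
    · rw [h, Nat.cast_one] at hc
      rw [aco, hc, chi3_one, hv, if_pos ⟨hp, h⟩]
      have : (Real.log n : ℂ) + 1 * (Real.log n : ℂ) = ((2 * Real.log n : ℝ) : ℂ) := by push_cast; ring
      rw [this, ← Complex.ofReal_mul, ← Complex.ofReal_sub]
      rw [show 2 * Real.log n * r - 2 * (Real.log n * r) = 0 by ring]
      simp only [Complex.ofReal_zero, norm_zero]
      split_ifs <;> linarith
    · rw [h] at hc
      have hc' : (n : ZMod 3) = 2 := hc
      rw [aco, hc', chi3_two, if_neg (by omega)]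
      simp only [neg_mul, one_mul, add_neg_cancel, zero_mul, Complex.ofReal_zero, sub_zero, norm_zero]
      split_ifs <;> linarith
  · rw [if_neg (fun h => hp h.1), if_pos hp, Complex.ofReal_zero, sub_zero, norm_mul, Complex.norm_real,
      Real.norm_of_nonneg hr0]
    have : ‖aco n‖ ≤ 2 * ArithmeticFunction.vonMangoldt n := by
      rw [aco]
      refine (norm_add_le _ _).trans ?_
      rw [norm_mul, Complex.norm_real, Real.norm_of_nonneg hL]
      have := DirichletCharacter.norm_le_one chi3 (n : ZMod 3)
      nlinarith
    have : ‖aco n‖ * r ≤ ‖aco n‖ := mul_le_of_le_one_right (norm_nonneg _) hr1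
    split_ifs <;> linarith

lemma Slog_pnt0 : ∃ C : ℝ, 0 < C ∧ ∀ x : ℝ, 3 ≤ x → |Slog x - x ^ 2 / 4| ≤ C * x ^ 2 / Real.log x := by
  obtain ⟨C, hC, h⟩ := smooth_pnt
  refine ⟨C + 100, by positivity, fun x hx => ?_⟩
  have hx0 : 0 < x := by linarith
  have hl1 : 1 ≤ Real.log x := by
    rw [Real.le_log_iff_exp_le hx0]
    linarith [Real.exp_one_lt_d9]
  have hl : 0 < Real.log x := by linarith
  have h1 := h x hx
  have e1 : ∑' n : ℕ, aco n * ((max (1 - n / x) 0 : ℝ) : ℂ) = ∑ n ∈ Finset.Ioc 0 ⌊x⌋₊, aco n * ((1 - n / x : ℝ) : ℂ) := by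
    rw [tsum_eq_sum (s := Finset.Ioc 0 ⌊x⌋₊)]
    · refine Finset.sum_congr rfl fun n hn => ?_
      rw [Finset.mem_Ioc, Nat.le_floor_iff hx0.le] at hn
      rw [max_eq_left]
      have := div_le_one_of_le₀ hn.2 hx0.le
      linarith
    · intro n hn
      rw [Finset.mem_Ioc, Nat.le_floor_iff hx0.le, not_and_or] at hn
      rcases hn with hn | hn
      · have : n = 0 := by omega
        simp [this, aco]
      · have : 1 ≤ n / x := by rw [le_div_iff₀ hx0]; linarith
        rw [max_eq_right (by linarith)]; simp
  rw [e1] at h1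
  have e2 : ((2 * Slog x / x : ℝ) : ℂ) = ∑ n ∈ Finset.Ioc 0 ⌊x⌋₊, ((if n.Prime ∧ n % 3 = 1 then 2 * (Real.log n * (1 - n / x)) else 0 : ℝ) : ℂ) := by
    rw [Slog, Q1, Finset.sum_filter, ← Complex.ofReal_sum, Finset.mul_sum, Finset.sum_div]
    congr 1
    refine Finset.sum_congr rfl fun n _ => ?_
    split_ifs
    · field_simp
    · simp
  have h2 : ‖∑ n ∈ Finset.Ioc 0 ⌊x⌋₊, aco n * ((1 - n / x : ℝ) : ℂ) - ((2 * Slog x / x : ℝ) : ℂ)‖ ≤ 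
      4 * Real.sqrt x * Real.log x + Real.log 3 := by
    rw [e2, ← Finset.sum_sub_distrib]
    refine (norm_sum_le _ _).trans ?_
    calc _ ≤ ∑ n ∈ Finset.Ioc 0 ⌊x⌋₊, ((if ¬ n.Prime then 2 * ArithmeticFunction.vonMangoldt n else 0) + (if n = 3 then Real.log 3 else 0)) := by
          refine Finset.sum_le_sum fun n hn => ?_
          rw [Finset.mem_Ioc, Nat.le_floor_iff hx0.le] at hn
          have := div_le_one_of_le₀ hn.2 hx0.le
          have : 0 ≤ n / x := by positivity
          exact aco_bound (by linarith) (by linarith)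
      _ ≤ _ := by
        rw [Finset.sum_add_distrib, ← Finset.sum_filter, ← Finset.mul_sum, ← Chebyshev.psi_sub_theta_eq_sum_not_prime, Finset.sum_ite_eq']
        have := Chebyshev.psi_sub_theta_le (x := x) (by linarith)
        have h3 : 0 ≤ Real.log 3 := Real.log_nonneg (by norm_num)
        split_ifs <;> linarith
  have h3 : ‖((2 * Slog x / x : ℝ) : ℂ) - ((x / 2 : ℝ) : ℂ)‖ ≤ C * x / Real.log x + (4 * Real.sqrt x * Real.log x + Real.log 3) := by
    have := norm_sub_le_norm_sub_add_norm_sub ((2 * Slog x / x : ℝ) : ℂ) (∑ n ∈ Finset.Ioc 0 ⌊x⌋₊, aco n * ((1 - n / x : ℝ) : ℂ)) ((x / 2 : ℝ) : ℂ)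
    rw [norm_sub_rev] at h2
    linarith
  rw [← Complex.ofReal_sub, Complex.norm_real, Real.norm_eq_abs] at h3
  have h4 : Real.log x ^ 2 ≤ 16 * Real.sqrt x := by
    have := Real.log_le_rpow_div hx0.le (ε := 1/4) (by norm_num)
    have e : Real.sqrt x = (x ^ (1/4 : ℝ)) ^ 2 := by
      rw [← Real.rpow_natCast, ← Real.rpow_mul hx0.le, Real.sqrt_eq_rpow]; norm_num
    rw [e]
    have : Real.log x ≤ 4 * x ^ (1/4 : ℝ) := by linarith
    calc Real.log x ^ 2 ≤ (4 * x ^ (1/4 : ℝ)) ^ 2 := by gcongr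
      _ = _ := by ring
  have h5 : 4 * Real.sqrt x * Real.log x ≤ 64 * x / Real.log x := by
    rw [le_div_iff₀ hl]
    have := Real.mul_self_sqrt hx0.le
    have := Real.sqrt_nonneg x
    nlinarith
  have h6 : Real.log 3 ≤ 2 * x / Real.log x := by
    rw [le_div_iff₀ hl]
    have a1 := Real.log_le_sub_one_of_pos hx0
    have a2 := Real.log_le_sub_one_of_pos (show (0:ℝ) < 3 by norm_num)
    nlinarith
  have e3 : Slog x - x ^ 2 / 4 = (x / 2) * (2 * Slog x / x - x / 2) := by field_simp; ring
  rw [e3, abs_mul, abs_of_nonneg (by positivity)]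
  have h7 : |2 * Slog x / x - x / 2| ≤ (C + 66) * (x / Real.log x) := by
    have a1 : C * x / Real.log x = C * (x / Real.log x) := by ring
    have a2 : 64 * x / Real.log x = 64 * (x / Real.log x) := by ring
    have a3 : 2 * x / Real.log x = 2 * (x / Real.log x) := by ring
    rw [a1] at h3; rw [a2] at h5; rw [a3] at h6
    linarith
  calc _ ≤ x / 2 * ((C + 66) * (x / Real.log x)) := by gcongr
    _ = ((C + 66) / 2) * (x ^ 2 / Real.log x) := by ring
    _ ≤ (C + 100) * (x ^ 2 / Real.log x) := by
      gcongr; linarith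
    _ = _ := by ring

/-- solutions -/
def ZZ (n : ℕ) : Set (ℤ × ℤ) := {p | p.1 ^ 2 + p.1 * p.2 + p.2 ^ 2 = (n : ℤ)}

/-- Multiplication by `a + b ω`. -/
def mE (a b : ℤ) (z : ℤ × ℤ) : ℤ × ℤ := (z.1 * a - z.2 * b, z.1 * b + z.2 * a + z.2 * b)

lemma mem_ZZ {n : ℕ} {z : ℤ × ℤ} : z ∈ ZZ n ↔ z.1 ^ 2 + z.1 * z.2 + z.2 ^ 2 = (n : ℤ) := Iff.rfl

lemma ZZ_finite (n : ℕ) : (ZZ n).Finite := by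
  refine Set.Finite.subset ((Set.finite_Icc (-(2 * n : ℤ)) (2 * n)).prod (Set.finite_Icc (-(2 * n : ℤ)) (2 * n))) ?_
  rintro ⟨x, y⟩ h
  rw [mem_ZZ] at h
  simp only at h
  have hn : (n : ℤ) ≤ n ^ 2 := by exact_mod_cast Nat.le_self_pow (by norm_num) n
  have h1 : x ^ 2 ≤ (2 * n : ℤ) ^ 2 := by nlinarith [sq_nonneg (x + 2 * y)]
  have h2 : y ^ 2 ≤ (2 * n : ℤ) ^ 2 := by nlinarith [sq_nonneg (2 * x + y)]
  have h0 : (0:ℤ) ≤ 2 * n := by positivity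
  exact ⟨abs_le.1 (abs_le_of_sq_le_sq h1 h0), abs_le.1 (abs_le_of_sq_le_sq h2 h0)⟩

/-- number of representations -/
noncomputable def rr (n : ℕ) : ℕ := (ZZ n).ncard

lemma mE_conj {a b : ℤ} {p : ℕ} (hp : a ^ 2 + a * b + b ^ 2 = p) (z : ℤ × ℤ) :
    mE (a + b) (-b) (mE a b z) = ((p : ℤ) * z.1, (p : ℤ) * z.2) := by
  simp only [mE, ← hp, Prod.mk.injEq]; constructor <;> ring

lemma mE_conj' {a b : ℤ} {p : ℕ} (hp : a ^ 2 + a * b + b ^ 2 = p) (z : ℤ × ℤ) :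
    mE a b (mE (a + b) (-b) z) = ((p : ℤ) * z.1, (p : ℤ) * z.2) := by
  simp only [mE, ← hp, Prod.mk.injEq]; constructor <;> ring

lemma conj_norm {a b : ℤ} {p : ℕ} (hp : a ^ 2 + a * b + b ^ 2 = p) : (a + b) ^ 2 + (a + b) * (-b) + (-b) ^ 2 = p := by
  rw [← hp]; ring

lemma mE_inj {a b : ℤ} {p : ℕ} (hp : a ^ 2 + a * b + b ^ 2 = p) (h0 : p ≠ 0) : Function.Injective (mE a b) := by
  intro z w h
  have h1 := mE_conj hp z
  rw [h, mE_conj hp w] at h1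
  have h0' : (p : ℤ) ≠ 0 := by exact_mod_cast h0
  have := Prod.mk.inj h1
  exact Prod.ext (mul_left_cancel₀ h0' this.1).symm (mul_left_cancel₀ h0' this.2).symm

lemma mE_mem {a b : ℤ} {p : ℕ} (hp : a ^ 2 + a * b + b ^ 2 = p) {n : ℕ} {z : ℤ × ℤ} (hz : z ∈ ZZ n) : mE a b z ∈ ZZ (p * n) := by
  rw [mem_ZZ] at *
  push_cast
  rw [← hz, ← hp, mE]; ring

lemma mem_image_of_dvd {a b : ℤ} {p : ℕ} (pp : p.Prime) (hp : a ^ 2 + a * b + b ^ 2 = p) {n : ℕ} {w : ℤ × ℤ} (hw : w ∈ ZZ (p * n))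
    (hd : (p : ℤ) ∣ b * w.1 - a * w.2) : w ∈ mE a b '' ZZ n := by
  have hw' := mE_mem (conj_norm hp) hw
  have hpp : Prime (p : ℤ) := Nat.prime_iff_prime_int.1 pp
  have h0' : (p : ℤ) ≠ 0 := hpp.ne_zero
  set v := mE (a + b) (-b) w with hv
  have h2 : (p : ℤ) ∣ v.2 := by
    have : v.2 = -(b * w.1 - a * w.2) := by rw [hv, mE]; ring
    rw [this]; exact hd.neg_right
  have hnv := mem_ZZ.1 hw'
  have h1 : (p : ℤ) ∣ v.1 := by
    refine hpp.dvd_of_dvd_pow (n := 2) ?_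
    have : v.1 ^ 2 = p * (p * n) - (v.1 + v.2) * v.2 := by push_cast at hnv; linear_combination hnv
    rw [this]
    exact dvd_sub (dvd_mul_right _ _) (h2.mul_left _)
  obtain ⟨x, hx⟩ := h1
  obtain ⟨y, hy⟩ := h2
  refine ⟨(x, y), ?_, ?_⟩
  · rw [mem_ZZ]
    rw [hx, hy] at hnv
    push_cast at hnv
    refine mul_left_cancel₀ (pow_ne_zero 2 h0') ?_
    simp only
    linear_combination hnv
  · have e := mE_conj' hp w
    rw [← hv] at e
    have e2 : v = ((p:ℤ) * x, (p:ℤ) * y) := Prod.ext hx hy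
    rw [e2, mE] at e
    have := Prod.mk.inj e
    refine Prod.ext (mul_left_cancel₀ h0' ?_) (mul_left_cancel₀ h0' ?_)
    · rw [mE, ← this.1]; ring
    · rw [mE, ← this.2]; ring

lemma rr_three (n : ℕ) : rr (3 * n) = rr n := by
  have hp : (1:ℤ) ^ 2 + 1 * 1 + 1 ^ 2 = (3 : ℕ) := by norm_num
  have : ZZ (3 * n) = mE 1 1 '' ZZ n := by
    ext w
    constructor
    · intro hw
      refine mem_image_of_dvd Nat.prime_three hp hw ?_
      rw [mem_ZZ] at hw
      have h3 : Prime ((3:ℕ) : ℤ) := Nat.prime_iff_prime_int.1 Nat.prime_three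
      refine h3.dvd_of_dvd_pow (n := 2) ⟨n - w.1 * w.2, ?_⟩
      push_cast at hw ⊢
      linear_combination hw
    · rintro ⟨z, hz, rfl⟩; exact mE_mem hp hz
  rw [rr, this, Set.ncard_image_of_injective _ (mE_inj hp (by norm_num)), rr]

lemma zmod_three {p : ℕ} [Fact p.Prime] (h3 : p ≠ 3) {t : ZMod p} (ht : t ^ 2 + t + 1 = 0) : p % 3 = 1 := by
  have pp : p.Prime := Fact.out
  have h1 : t ^ 3 = 1 := by linear_combination (t - 1) * ht
  have h2 : t ≠ 1 := by
    rintro rfl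
    have : ((3 : ℕ) : ZMod p) = 0 := by push_cast; linear_combination ht
    rw [ZMod.natCast_eq_zero_iff] at this
    exact h3 ((Nat.prime_dvd_prime_iff_eq pp Nat.prime_three).1 this)
  have h0 : t ≠ 0 := by rintro rfl; norm_num at h1
  have h4 : orderOf t = 3 := by
    have : Fact (Nat.Prime 3) := ⟨Nat.prime_three⟩
    exact orderOf_eq_prime h1 h2
  have := ZMod.orderOf_dvd_card_sub_one h0
  rw [h4] at this
  have := pp.two_le
  omega

lemma dvd_of_two {p : ℕ} (pp : p.Prime) (h2 : p % 3 = 2) {n : ℕ} (hn : p ∣ n) {w : ℤ × ℤ} (hw : w ∈ ZZ n) :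
    (p : ℤ) ∣ w.1 ∧ (p : ℤ) ∣ w.2 := by
  have : Fact p.Prime := ⟨pp⟩
  rw [mem_ZZ] at hw
  have h : ((w.1 : ZMod p)) ^ 2 + w.1 * w.2 + (w.2 : ZMod p) ^ 2 = 0 := by
    have := congrArg (Int.cast : ℤ → ZMod p) hw
    push_cast at this
    rw [this]; exact (ZMod.natCast_eq_zero_iff _ _).2 hn
  have hy : (w.2 : ZMod p) = 0 := by
    by_contra hy
    have : ((w.1 : ZMod p) / w.2) ^ 2 + (w.1 : ZMod p) / w.2 + 1 = 0 := by
      field_simp; linear_combination h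
    have := zmod_three (by rintro rfl; norm_num at h2) this
    omega
  have hx : (w.1 : ZMod p) = 0 := by
    rw [hy] at h
    simpa using h
  exact ⟨(ZMod.intCast_zmod_eq_zero_iff_dvd _ _).1 hx, (ZMod.intCast_zmod_eq_zero_iff_dvd _ _).1 hy⟩

lemma smul_mem {p n : ℕ} (hp : p ≠ 0) (x y : ℤ) : ((p:ℤ) * x, (p:ℤ) * y) ∈ ZZ (p * (p * n)) ↔ (x, y) ∈ ZZ n := by
  have h0 : (p : ℤ) ≠ 0 := by exact_mod_cast hp
  rw [mem_ZZ, mem_ZZ]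
  push_cast
  constructor
  · intro h
    refine mul_left_cancel₀ (pow_ne_zero 2 h0) ?_
    linear_combination h
  · intro h; linear_combination p ^ 2 * h

lemma smul_inj {p : ℕ} (hp : p ≠ 0) : Function.Injective (fun z : ℤ × ℤ => ((p:ℤ) * z.1, (p:ℤ) * z.2)) := by
  have h0 : (p : ℤ) ≠ 0 := by exact_mod_cast hp
  intro z w h
  have := Prod.mk.inj h
  exact Prod.ext (mul_left_cancel₀ h0 this.1) (mul_left_cancel₀ h0 this.2)

lemma rr_two {p : ℕ} (pp : p.Prime) (h2 : p % 3 = 2) (n : ℕ) : rr (p * (p * n)) = rr n := by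
  have : ZZ (p * (p * n)) = (fun z : ℤ × ℤ => ((p:ℤ) * z.1, (p:ℤ) * z.2)) '' ZZ n := by
    ext w
    constructor
    · intro hw
      obtain ⟨⟨x, hx⟩, ⟨y, hy⟩⟩ := dvd_of_two pp h2 (dvd_mul_right _ _) hw
      have : w = ((p:ℤ) * x, (p:ℤ) * y) := Prod.ext hx hy
      rw [this, smul_mem pp.ne_zero] at hw
      exact ⟨(x, y), hw, this.symm⟩
    · rintro ⟨z, hz, rfl⟩
      exact (smul_mem pp.ne_zero _ _).2 hz
  rw [rr, this, Set.ncard_image_of_injective _ (smul_inj pp.ne_zero), rr]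

lemma rr_two' {p : ℕ} (pp : p.Prime) (h2 : p % 3 = 2) {n : ℕ} (hn : ¬ p ∣ n) : rr (p * n) = 0 := by
  have : ZZ (p * n) = ∅ := by
    rw [Set.eq_empty_iff_forall_notMem]
    intro w hw
    obtain ⟨⟨x, hx⟩, ⟨y, hy⟩⟩ := dvd_of_two pp h2 (dvd_mul_right _ _) hw
    rw [mem_ZZ, hx, hy] at hw
    apply hn
    have h0 : (p : ℤ) ≠ 0 := by exact_mod_cast pp.ne_zero
    have : (p : ℤ) ∣ n := ⟨x ^ 2 + x * y + y ^ 2, by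
      refine mul_left_cancel₀ h0 ?_
      push_cast at hw
      linear_combination -hw⟩
    exact_mod_cast this
  rw [rr, this, Set.ncard_empty]

lemma exists_repr {p : ℕ} (pp : p.Prime) (h1 : p % 3 = 1) : ∃ a b : ℤ, a ^ 2 + a * b + b ^ 2 = p := by
  have : Fact p.Prime := ⟨pp⟩
  have : Fact (Nat.Prime 3) := ⟨Nat.prime_three⟩
  have hcard : 3 ∣ Fintype.card (ZMod p)ˣ := by
    rw [ZMod.card_units]; have := pp.two_le; omega
  obtain ⟨u, hu⟩ := exists_prime_orderOf_dvd_card 3 hcard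
  obtain ⟨c, hc⟩ : ∃ c : ZMod p, c = (u : (ZMod p)ˣ).val := ⟨_, rfl⟩
  have hc3 : c ^ 3 = 1 := by rw [hc, ← Units.val_pow_eq_pow_val, ← hu, pow_orderOf_eq_one]; rfl
  have hc1 : c ≠ 1 := by
    intro h
    have : u = 1 := Units.ext (hc.symm.trans h)
    rw [this, orderOf_one] at hu; norm_num at hu
  have hc2 : c ^ 2 + c + 1 = 0 := by
    have : (c - 1) * (c ^ 2 + c + 1) = 0 := by linear_combination hc3
    exact (mul_eq_zero.1 this).resolve_left (sub_ne_zero.2 hc1)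
  set k := Nat.sqrt p with hk
  have hk1 : p < (k + 1) * (k + 1) := Nat.lt_succ_sqrt p
  have hk2 : k * k < p := by
    refine lt_of_le_of_ne (Nat.sqrt_le p) ?_
    intro h
    exact (Nat.prime_iff_prime_int.1 pp).irreducible.not_isSquare ⟨k, by exact_mod_cast h.symm⟩
  obtain ⟨s, -, t, -, hne, heq⟩ := Finset.exists_ne_map_eq_of_card_lt_of_maps_to 
    (s := (Finset.univ : Finset (Fin (k+1) × Fin (k+1)))) (t := (Finset.univ : Finset (ZMod p)))
    (f := fun z => ((z.1 : ℕ) : ZMod p) - c * ((z.2 : ℕ) : ZMod p)) (by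
      rw [Finset.card_univ, Finset.card_univ, ZMod.card, Fintype.card_prod, Fintype.card_fin]; exact hk1) (fun _ _ => Finset.mem_coe.2 (Finset.mem_univ _))
  set x : ℤ := ((s.1 : ℕ) : ℤ) - ((t.1 : ℕ) : ℤ) with hx
  set y : ℤ := ((s.2 : ℕ) : ℤ) - ((t.2 : ℕ) : ℤ) with hy
  have hxy : (x : ZMod p) = c * (y : ZMod p) := by
    rw [hx, hy]; push_cast; linear_combination heq
  have hdvd : (p : ℤ) ∣ x ^ 2 + x * y + y ^ 2 := by
    rw [← ZMod.intCast_zmod_eq_zero_iff_dvd]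
    push_cast
    rw [hxy]; linear_combination (y : ZMod p) ^ 2 * hc2
  have hs1 := s.1.2
  have hs2 := s.2.2
  have ht1 := t.1.2
  have ht2 := t.2.2
  have bx : |x| ≤ k := by rw [abs_le, hx]; constructor <;> omega
  have hby : |y| ≤ k := by rw [abs_le, hy]; constructor <;> omega
  have bx2 : x ^ 2 ≤ (k:ℤ) ^ 2 := sq_le_sq' (abs_le.1 bx).1 (abs_le.1 bx).2
  have by2 : y ^ 2 ≤ (k:ℤ) ^ 2 := sq_le_sq' (abs_le.1 hby).1 (abs_le.1 hby).2
  have hkk : (k:ℤ) * k < p := by exact_mod_cast hk2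
  have hlt : x ^ 2 + x * y + y ^ 2 < 3 * p := by nlinarith [sq_nonneg (x - y)]
  have hpos : 0 < x ^ 2 + x * y + y ^ 2 := by
    have hne' : x ≠ 0 ∨ y ≠ 0 := by
      by_contra hh
      push Not at hh
      apply hne
      refine Prod.ext (Fin.ext ?_) (Fin.ext ?_)
      · have := hh.1; omega
      · have := hh.2; omega
    rcases hne' with h | h
    · have : 0 < x ^ 2 := by positivity
      nlinarith [sq_nonneg (x + 2 * y)]
    · have : 0 < y ^ 2 := by positivity
      nlinarith [sq_nonneg (2 * x + y)]
  obtain ⟨m, hm⟩ := hdvd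
  have hp0 : (0:ℤ) < p := by exact_mod_cast pp.pos
  have hm0 : 0 < m := by rw [hm] at hpos; exact pos_of_mul_pos_right hpos hp0.le
  have hm3 : m < 3 := by rw [hm] at hlt; nlinarith
  have hm2 : m = 1 ∨ m = 2 := by omega
  rcases hm2 with rfl | rfl
  · exact ⟨x, y, by rw [hm]; ring⟩
  · exfalso
    have hodd : p % 2 = 1 := by
      rcases pp.eq_two_or_odd with h | h
      · rw [h] at h1; norm_num at h1
      · exact h
    rcases Int.even_or_odd' x with ⟨x', hx' | hx'⟩ <;> rcases Int.even_or_odd' y with ⟨y', hy' | hy'⟩ <;> rw [hx', hy'] at hm <;> ring_nf at hm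
    · have : (p:ℤ) = 2 * (x' * y' + x' ^ 2 + y' ^ 2) := by linarith
      omega
    · generalize x' * y' = A at *; generalize x' ^ 2 = B at *; generalize y' ^ 2 = D at *; omega
    · generalize x' * y' = A at *; generalize x' ^ 2 = B at *; generalize y' ^ 2 = D at *; omega
    · generalize x' * y' = A at *; generalize x' ^ 2 = B at *; generalize y' ^ 2 = D at *; omega

lemma rr_one_step {p : ℕ} (pp : p.Prime) (h1 : p % 3 = 1) (n : ℕ) :
    rr (p * n) + (if p ∣ n then rr (n / p) else 0) = 2 * rr n := by
  obtain ⟨a, b, hp⟩ := exists_repr pp h1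
  have hpp : Prime (p : ℤ) := Nat.prime_iff_prime_int.1 pp
  have hc := conj_norm hp
  have hu : ZZ (p * n) = mE a b '' ZZ n ∪ mE (a + b) (-b) '' ZZ n := by
    ext w
    constructor
    · intro hw
      have hw' := mem_ZZ.1 hw
      push_cast at hw'
      have hd : (p : ℤ) ∣ (b * w.1 - a * w.2) * (b * w.1 + a * w.2 + b * w.2) := 
        ⟨b ^ 2 * n - w.2 ^ 2, by linear_combination b ^ 2 * hw' - w.2 ^ 2 * hp⟩
      rcases hpp.dvd_or_dvd hd with h | h
      · exact Or.inl (mem_image_of_dvd pp hp hw h)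
      · refine Or.inr (mem_image_of_dvd pp hc hw ?_)
        rw [← dvd_neg]; convert! h using 1; ring
    · rintro (⟨z, hz, rfl⟩ | ⟨z, hz, rfl⟩)
      · exact mE_mem hp hz
      · exact mE_mem hc hz
  have hb : ¬ (p : ℤ) ∣ b := by
    intro hb
    have ha : (p : ℤ) ∣ a := by
      refine hpp.dvd_of_dvd_pow (n := 2) ?_
      have : a ^ 2 = p - (a + b) * b := by linear_combination hp
      rw [this]; exact dvd_sub_self_left.2 (hb.mul_left _)
    obtain ⟨a', rfl⟩ := ha
    obtain ⟨b', rfl⟩ := hb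
    have : (p : ℤ) * (a' ^ 2 + a' * b' + b' ^ 2) = 1 := by
      refine mul_left_cancel₀ hpp.ne_zero ?_
      linear_combination hp
    exact hpp.not_isUnit (IsUnit.of_mul_eq_one _ this)
  have hp2 : ¬ (p : ℤ) ∣ 2 := by
    intro h
    have : p ∣ 2 := by exact_mod_cast h
    rw [Nat.prime_dvd_prime_iff_eq pp Nat.prime_two] at this
    rw [this] at h1; norm_num at h1
  have hp3 : ¬ (p : ℤ) ∣ 3 := by
    intro h
    have : p ∣ 3 := by exact_mod_cast h
    rw [Nat.prime_dvd_prime_iff_eq pp Nat.prime_three] at this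
    rw [this] at h1; norm_num at h1
  have hi : (mE a b '' ZZ n ∩ mE (a + b) (-b) '' ZZ n).ncard = if p ∣ n then rr (n / p) else 0 := by
    have key : ∀ w ∈ mE a b '' ZZ n ∩ mE (a + b) (-b) '' ZZ n, (p : ℤ) ∣ w.1 ∧ (p : ℤ) ∣ w.2 := by
      rintro w ⟨⟨z, hz, rfl⟩, ⟨z', hz', h⟩⟩
      have hw := mem_ZZ.1 (mE_mem hp hz)
      set w := mE a b z with hwd
      have d1 : (p : ℤ) ∣ b * w.1 - a * w.2 := ⟨-z.2, by rw [hwd, mE, ← hp]; ring⟩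
      have d2 : (p : ℤ) ∣ b * w.1 + a * w.2 + b * w.2 := ⟨z'.2, by rw [← h, mE, ← hp]; ring⟩
      have d3 : (p : ℤ) ∣ 2 * w.1 + w.2 := by
        have : (p : ℤ) ∣ b * (2 * w.1 + w.2) := by
          have := dvd_add d1 d2; convert! this using 1; ring
        exact (hpp.dvd_or_dvd this).resolve_left hb
      push_cast at hw
      have d4 : (p : ℤ) ∣ w.2 := by
        have : (p : ℤ) ∣ 3 * w.2 ^ 2 := by
          have : 3 * w.2 ^ 2 = p * (4 * n) - (2 * w.1 + w.2) * (2 * w.1 + w.2) := by linear_combination 4 * hw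
          rw [this]; exact dvd_sub (dvd_mul_right _ _) (d3.mul_left _)
        exact hpp.dvd_of_dvd_pow ((hpp.dvd_or_dvd this).resolve_left hp3)
      refine ⟨?_, d4⟩
      have : (p : ℤ) ∣ 2 * w.1 := by
        have := dvd_sub d3 d4; simpa using this
      exact (hpp.dvd_or_dvd this).resolve_left hp2
    split_ifs with hn
    · obtain ⟨m, rfl⟩ := hn
      rw [Nat.mul_div_cancel_left _ pp.pos]
      have : mE a b '' ZZ (p * m) ∩ mE (a + b) (-b) '' ZZ (p * m) = (fun z : ℤ × ℤ => ((p:ℤ) * z.1, (p:ℤ) * z.2)) '' ZZ m := by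
        ext w
        constructor
        · intro hw
          obtain ⟨⟨x, hx⟩, ⟨y, hy⟩⟩ := key w hw
          obtain ⟨⟨z, hz, rfl⟩, -⟩ := hw
          have h2 := mE_mem hp hz
          have : mE a b z = ((p:ℤ) * x, (p:ℤ) * y) := Prod.ext hx hy
          rw [this, smul_mem pp.ne_zero] at h2
          exact ⟨(x, y), h2, this.symm⟩
        · rintro ⟨z, hz, rfl⟩
          exact ⟨⟨_, mE_mem hc hz, mE_conj' hp z⟩, ⟨_, mE_mem hp hz, mE_conj hp z⟩⟩
      rw [this, Set.ncard_image_of_injective _ (smul_inj pp.ne_zero), rr]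
    · rw [Set.ncard_eq_zero ((((ZZ_finite n).image _)).inter_of_left _), Set.eq_empty_iff_forall_notMem]
      intro w hw
      obtain ⟨⟨x, hx⟩, ⟨y, hy⟩⟩ := key w hw
      obtain ⟨⟨z, hz, rfl⟩, -⟩ := hw
      have h2 := mem_ZZ.1 (mE_mem hp hz)
      rw [hx, hy] at h2
      apply hn
      have : (p : ℤ) ∣ n := ⟨x ^ 2 + x * y + y ^ 2, by
        refine mul_left_cancel₀ hpp.ne_zero ?_
        push_cast at h2
        linear_combination -h2⟩
      exact_mod_cast this
  have := Set.ncard_union_add_ncard_inter (mE a b '' ZZ n) (mE (a + b) (-b) '' ZZ n) ((ZZ_finite n).image _) ((ZZ_finite n).image _)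
  rw [← hu, hi, Set.ncard_image_of_injective _ (mE_inj hp pp.ne_zero), Set.ncard_image_of_injective _ (mE_inj hc pp.ne_zero)] at this
  rw [two_mul]; exact this

lemma rr_one : rr 1 = 6 := by
  have : ZZ 1 = ({(1,0), (-1,0), (0,1), (0,-1), (1,-1), (-1,1)} : Finset (ℤ × ℤ)) := by
    ext ⟨x, y⟩
    rw [mem_ZZ]
    simp only [Finset.coe_insert, Finset.coe_singleton, Set.mem_insert_iff, Set.mem_singleton_iff, Prod.mk.injEq]
    constructor
    · intro h
      push_cast at h
      have h1 : -1 ≤ x ∧ x ≤ 1 := by constructor <;> nlinarith [sq_nonneg (x + 2 * y)]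
      have h2 : -1 ≤ y ∧ y ≤ 1 := by constructor <;> nlinarith [sq_nonneg (2 * x + y)]
      obtain ⟨a1, a2⟩ := h1
      obtain ⟨b1, b2⟩ := h2
      interval_cases x <;> interval_cases y <;> simp_all
    · rintro (⟨rfl, rfl⟩ | ⟨rfl, rfl⟩ | ⟨rfl, rfl⟩ | ⟨rfl, rfl⟩ | ⟨rfl, rfl⟩ | ⟨rfl, rfl⟩) <;> norm_num
  rw [rr, this, Set.ncard_coe_finset]; rfl

lemma rr_pow_one {p : ℕ} (pp : p.Prime) (h1 : p % 3 = 1) {m : ℕ} (hm : ¬ p ∣ m) (a : ℕ) :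
    rr (p ^ a * m) = (a + 1) * rr m ∧ rr (p ^ (a + 1) * m) = (a + 2) * rr m := by
  induction a with
  | zero =>
    refine ⟨by simp, ?_⟩
    have := rr_one_step pp h1 m
    rw [if_neg hm] at this
    simpa using this
  | succ a ih =>
    refine ⟨ih.2, ?_⟩
    have := rr_one_step pp h1 (p ^ (a + 1) * m)
    have e : p ^ (a + 1) * m = p * (p ^ a * m) := by ring
    rw [if_pos (by rw [e]; exact dvd_mul_right _ _)] at this
    rw [show p ^ (a + 1) * m / p = p ^ a * m by rw [e, Nat.mul_div_cancel_left _ pp.pos], ih.1, ih.2, 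
      show p * (p ^ (a + 1) * m) = p ^ (a + 1 + 1) * m by ring] at this
    have e2 : (a + 1 + 2) * rr m + (a + 1) * rr m = 2 * ((a + 2) * rr m) := by ring
    omega

lemma rr_pow_two {p : ℕ} (pp : p.Prime) (h2 : p % 3 = 2) {m : ℕ} (hm : ¬ p ∣ m) (a : ℕ) :
    (rr (p ^ a * m) = rr m ∨ rr (p ^ a * m) = 0) ∧ (rr (p ^ (a + 1) * m) = rr m ∨ rr (p ^ (a + 1) * m) = 0) := by
  induction a with
  | zero => exact ⟨by simp, Or.inr (by simpa using rr_two' pp h2 hm)⟩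
  | succ a ih =>
    refine ⟨ih.2, ?_⟩
    rw [show p ^ (a + 1 + 1) * m = p * (p * (p ^ a * m)) by ring, rr_two pp h2]
    exact ih.1

lemma rr_pow_three (m a : ℕ) : rr (3 ^ a * m) = rr m := by
  induction a with
  | zero => simp
  | succ a ih => rw [show 3 ^ (a + 1) * m = 3 * (3 ^ a * m) by ring, rr_three, ih]

/-- the divisor-type function -/
noncomputable def DD (n : ℕ) : ℕ := n.factorization.prod (fun p a => if p % 3 = 1 then a + 1 else 1)

lemma DD_mul {p : ℕ} (pp : p.Prime) {m : ℕ} (hm : ¬ p ∣ m) (a : ℕ) (ha : a ≠ 0) : 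
    DD (p ^ a * m) = (if p % 3 = 1 then a + 1 else 1) * DD m := by
  have hc : Nat.Coprime (p ^ a) m := (Nat.Prime.coprime_iff_not_dvd pp).2 hm |>.pow_left a
  have hdis : Disjoint (p^a).factorization.support m.factorization.support := by
    rw [Nat.support_factorization, Nat.support_factorization]; exact hc.disjoint_primeFactors
  rw [DD, Nat.factorization_mul_of_coprime hc, Finsupp.prod_add_index_of_disjoint hdis, pp.factorization_pow,
    Finsupp.prod_single_index, DD]
  simp

lemma rr_formula (n : ℕ) (hn : n ≠ 0) : rr n = 6 * DD n ∨ (rr n = 0 ∧ ∃ p, p.Prime ∧ p ∣ n ∧ p % 3 ≠ 1) := by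
  induction n using Nat.strong_induction_on with
  | _ n ih =>
    by_cases h1 : n = 1
    · left; rw [h1, rr_one, DD]; simp
    · set p := n.minFac with hp
      have pp : p.Prime := Nat.minFac_prime h1
      obtain ⟨a, m, hm, hnm⟩ := Nat.exists_eq_pow_mul_and_not_dvd hn p pp.ne_one
      have ha : a ≠ 0 := by
        rintro rfl
        apply hm
        have : p ∣ n := Nat.minFac_dvd n
        rw [hnm] at this; simpa using this
      have hm0 : m ≠ 0 := by rintro rfl; simp at hm
      have hlt : m < n := by
        rw [hnm]
        have : 1 < p ^ a := Nat.one_lt_pow ha pp.one_lt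
        nlinarith [Nat.pos_of_ne_zero hm0]
      have hpn : p ∣ n := Nat.minFac_dvd n
      have hmn : m ∣ n := ⟨p ^ a, by rw [hnm]; ring⟩
      have IH := ih m hlt hm0
      have hD := DD_mul pp hm a ha
      rw [← hnm] at hD
      have hmod : p % 3 = 0 ∨ p % 3 = 1 ∨ p % 3 = 2 := by omega
      rcases hmod with h | h | h
      · have h3 : p = 3 := ((Nat.prime_dvd_prime_iff_eq Nat.prime_three pp).1 (Nat.dvd_of_mod_eq_zero h)).symm
        have hr : rr n = rr m := by rw [hnm, h3, rr_pow_three]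
        rw [if_neg (by omega), one_mul] at hD
        rw [hr, hD]
        rcases IH with IH | ⟨IH, -⟩
        · exact Or.inl IH
        · exact Or.inr ⟨IH, p, pp, hpn, by omega⟩
      · have hr : rr n = (a + 1) * rr m := by rw [hnm]; exact (rr_pow_one pp h hm a).1
        rw [if_pos h] at hD
        rw [hr, hD]
        rcases IH with IH | ⟨IH, q, hq, hqm, hq3⟩
        · left; rw [IH]; ring
        · right; exact ⟨by rw [IH, mul_zero], q, hq, hqm.trans hmn, hq3⟩
      · rw [if_neg (by omega), one_mul] at hD
        have hr := (rr_pow_two pp h hm a).1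
        rw [← hnm] at hr
        rcases hr with hr | hr
        · rw [hr, hD]
          rcases IH with IH | ⟨IH, -⟩
          · exact Or.inl IH
          · exact Or.inr ⟨IH, p, pp, hpn, by omega⟩
        · exact Or.inr ⟨hr, p, pp, hpn, by omega⟩

noncomputable def uu (l : ℕ) : ℝ := Real.log (1 + 1 / ((l : ℝ) + 1))
noncomputable def Sg : ℝ := ∑' l : ℕ, uu l ^ 2
noncomputable def Kg : ℝ := ∑' l : ℕ, uu l * √(uu l)

lemma uu_pos (l : ℕ) : 0 < uu l := by
  apply Real.log_pos
  have : (0:ℝ) < 1 / ((l : ℝ) + 1) := by positivity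
  linarith

lemma uu_le (l : ℕ) : uu l ≤ 1 / ((l : ℝ) + 1) := by
  have : (0:ℝ) < 1 / ((l : ℝ) + 1) := by positivity
  have := Real.log_le_sub_one_of_pos (x := 1 + 1 / ((l : ℝ) + 1)) (by positivity)
  unfold uu; linarith

lemma uu_le_one (l : ℕ) : uu l ≤ 1 := by
  refine (uu_le l).trans ?_
  rw [div_le_one (by positivity)]
  have : (0:ℝ) ≤ l := by positivity
  linarith

lemma uu_anti {k l : ℕ} (h : k ≤ l) : uu l ≤ uu k := by
  unfold uu
  have h' : (k:ℝ) ≤ l := by exact_mod_cast h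
  apply Real.log_le_log (by positivity)
  gcongr

lemma uu_sum (b : ℕ) : ∑ l ∈ Finset.range b, uu l = Real.log ((b:ℝ) + 1) := by
  induction b with
  | zero => simp
  | succ b ih =>
    rw [Finset.sum_range_succ, ih, uu, ← Real.log_mul (by positivity) (by positivity)]
    congr 1
    push_cast
    field_simp

lemma K_summable : Summable (fun l => uu l * √(uu l)) := by
  have h : Summable (fun l : ℕ => 1 / ((l:ℝ) + 1) ^ (3/2:ℝ)) := by
    have := (summable_nat_add_iff 1).2 (Real.summable_one_div_nat_rpow (p := 3/2) |>.2 (by norm_num))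
    simpa using this
  refine Summable.of_nonneg_of_le (fun l => by have := uu_pos l; positivity) (fun l => ?_) h
  have h1 := uu_le l
  have h0 : (0:ℝ) < (l:ℝ) + 1 := by positivity
  calc uu l * √(uu l) ≤ 1 / ((l : ℝ) + 1) * √(1 / ((l : ℝ) + 1)) := by
        have := uu_pos l
        gcongr
    _ = 1 / ((l:ℝ) + 1) ^ (3/2:ℝ) := by
        rw [show (3/2:ℝ) = 1 + 1/2 by norm_num, Real.rpow_add h0, Real.rpow_one, ← Real.sqrt_eq_rpow,
          Real.sqrt_div zero_le_one, Real.sqrt_one]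
        field_simp

lemma sq_le_K {u : ℝ} (h0 : 0 ≤ u) (h1 : u ≤ 1) : u ^ 2 ≤ u * √u := by
  have : u ≤ √u := Real.le_sqrt_of_sq_le (by nlinarith)
  nlinarith

lemma S_summable : Summable (fun l => uu l ^ 2) :=
  Summable.of_nonneg_of_le (fun l => by positivity) (fun l => sq_le_K (uu_pos l).le (uu_le_one l)) K_summable

lemma Sg_pos : 0 < Sg := S_summable.tsum_pos (fun l => by positivity) 0 (by have := uu_pos 0; positivity)
lemma Kg_pos : 0 < Kg := K_summable.tsum_pos (fun l => by have := uu_pos l; positivity) 0 (by have := uu_pos 0; positivity)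

lemma S_part (N : ℕ) : ∑ l ∈ Finset.range N, uu l ^ 2 ≤ Sg := S_summable.sum_le_tsum _ (fun l _ => by positivity)
lemma K_part (N : ℕ) : ∑ l ∈ Finset.range N, uu l * √(uu l) ≤ Kg := 
  K_summable.sum_le_tsum _ (fun l _ => by have := uu_pos l; positivity)

lemma S_tail (N : ℕ) (hN : 0 < N) : Sg - 1 / N ≤ ∑ l ∈ Finset.range N, uu l ^ 2 := by
  have hN' : (0:ℝ) < N := by exact_mod_cast hN
  have key : ∀ M : ℕ, ∑ l ∈ Finset.range (N + M), uu l ^ 2 ≤ ∑ l ∈ Finset.range N, uu l ^ 2 + 1 / N - 1 / ((N:ℝ) + M) := by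
    intro M
    induction M with
    | zero => simp
    | succ M ih =>
      rw [← add_assoc, Finset.sum_range_succ]
      have h1 : uu (N + M) ^ 2 ≤ 1 / ((N:ℝ) + M) - 1 / ((N:ℝ) + M + 1) := by
        have h2 := uu_le (N + M)
        have h3 := (uu_pos (N + M)).le
        push_cast at h2
        calc uu (N + M) ^ 2 ≤ (1 / ((N:ℝ) + M + 1)) ^ 2 := by gcongr
          _ ≤ _ := by
            rw [div_sub_div _ _ (by positivity) (by positivity), div_pow, div_le_div_iff₀ (by positivity) (by positivity)]
            have : (0:ℝ) ≤ M := by positivity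
            nlinarith
      push_cast
      rw [← add_assoc]
      linarith
  have : Sg ≤ ∑ l ∈ Finset.range N, uu l ^ 2 + 1 / N := by
    have hlim := (tendsto_add_atTop_iff_nat N).2 S_summable.hasSum.tendsto_sum_nat
    refine le_of_tendsto' hlim (fun M => ?_)
    have := key M
    rw [add_comm M N]
    have h : (0:ℝ) ≤ 1 / ((N:ℝ) + M) := by positivity
    linarith
  linarith

lemma mem_Q1 {y : ℝ} {q : ℕ} : q ∈ Q1 y ↔ (q:ℝ) ≤ y ∧ q.Prime ∧ q % 3 = 1 := by
  unfold Q1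
  rw [Finset.mem_filter, Finset.mem_Ioc]
  constructor
  · rintro ⟨⟨h1, h2⟩, h3⟩
    exact ⟨(Nat.le_floor_iff' (by omega)).1 h2, h3⟩
  · rintro ⟨h1, h2, h3⟩
    exact ⟨⟨h2.pos, (Nat.le_floor_iff' h2.ne_zero).2 h1⟩, h2, h3⟩

lemma Q1_card {y : ℝ} (hy : 0 ≤ y) : ((Q1 y).card : ℝ) ≤ y := by
  have h : (Q1 y).card ≤ ⌊y⌋₊ := by
    refine (Finset.card_filter_le _ _).trans ?_
    simp
  calc ((Q1 y).card : ℝ) ≤ ⌊y⌋₊ := by exact_mod_cast h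
    _ ≤ y := Nat.floor_le hy

noncomputable def TT (y : ℝ) : ℝ := ∑ q ∈ Q1 y, (y - q)

lemma Slog_nonneg (y : ℝ) : 0 ≤ Slog y := by
  refine Finset.sum_nonneg (fun q hq => ?_)
  have h := mem_Q1.1 hq
  have : (1:ℝ) ≤ q := by exact_mod_cast h.2.1.pos
  exact mul_nonneg (Real.log_nonneg this) (by linarith [h.1])

lemma Slog_triv {y M : ℝ} (hy : 0 ≤ y) (hyM : y ≤ M) (hM : 1 ≤ M) : Slog y ≤ y ^ 2 * Real.log M := by
  have hlog : 0 ≤ Real.log M := Real.log_nonneg hM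
  calc Slog y ≤ ∑ q ∈ Q1 y, Real.log M * y := by
        refine Finset.sum_le_sum (fun q hq => ?_)
        have h := mem_Q1.1 hq
        have h1 : (1:ℝ) ≤ q := by exact_mod_cast h.2.1.pos
        have := h.1
        have h3 : Real.log q ≤ Real.log M := Real.log_le_log (by linarith) (by linarith)
        exact mul_le_mul h3 (by linarith) (by linarith) hlog
    _ = (Q1 y).card * (Real.log M * y) := by rw [Finset.sum_const, nsmul_eq_mul]
    _ ≤ y * (Real.log M * y) := mul_le_mul_of_nonneg_right (Q1_card hy) (by positivity)
    _ = _ := by ring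

lemma Slog_unif : ∃ C : ℝ, 0 < C ∧ ∀ᶠ a : ℝ in atTop, ∀ u : ℝ, 0 ≤ u → u ≤ 1 →
    |Slog (a * u) - (a * u) ^ 2 / 4| ≤ C * a ^ 2 * (u * √u) / Real.log a := by
  obtain ⟨C, hC, h⟩ := Slog_pnt0
  refine ⟨2 * C + 2, by positivity, ?_⟩
  have hlit : ∀ᶠ a : ℝ in atTop, Real.log a ≤ a ^ (1/8:ℝ) := by
    have := (isLittleO_log_rpow_atTop (r := 1/8) (by norm_num)).bound (c := 1) one_pos
    filter_upwards [this, eventually_ge_atTop 1] with a h1 h2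
    rw [Real.norm_of_nonneg (Real.log_nonneg h2), Real.norm_of_nonneg (by positivity), one_mul] at h1
    exact h1
  filter_upwards [hlit, eventually_ge_atTop 9] with a ha ha9 u hu0 hu1
  have ha0 : (0:ℝ) < a := by linarith
  have hsa : 3 ≤ √a := Real.le_sqrt_of_sq_le (by linarith)
  have hla : 1 ≤ Real.log a := by
    rw [Real.le_log_iff_exp_le ha0]
    linarith [Real.exp_one_lt_d9]
  have hK := sq_le_K hu0 hu1
  rcases le_or_gt (√a) (a * u) with hc | hc
  · have h1 := h (a * u) (by linarith)
    have h2 : Real.log a / 2 ≤ Real.log (a * u) := by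
      rw [← Real.log_sqrt ha0.le]
      exact Real.log_le_log (by linarith) hc
    refine h1.trans ?_
    rw [div_le_div_iff₀ (by linarith) (by linarith)]
    have h3 : C * (a * u) ^ 2 ≤ C * a ^ 2 * (u * √u) := by
      have : C * a ^ 2 * u ^ 2 ≤ C * a ^ 2 * (u * √u) := by gcongr
      linarith
    have h5 : 0 ≤ a ^ 2 * (u * √u) := by positivity
    calc C * (a * u) ^ 2 * Real.log a ≤ (C * a ^ 2 * (u * √u)) * (2 * Real.log (a * u)) := by
          apply mul_le_mul h3 (by linarith) (by linarith) (by positivity)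
      _ = (2 * C) * (a ^ 2 * (u * √u)) * Real.log (a * u) := by ring
      _ ≤ (2 * C + 2) * (a ^ 2 * (u * √u)) * Real.log (a * u) := by
          gcongr
          · linarith
          · linarith
      _ = _ := by ring
  · have hau : 0 ≤ a * u := by positivity
    have h1 := Slog_triv hau (M := a) (by nlinarith) (by linarith)
    have h0 := Slog_nonneg (a * u)
    have h2 : |Slog (a * u) - (a * u) ^ 2 / 4| ≤ 2 * (a * u) ^ 2 * Real.log a := by
      rw [abs_le]
      have : (a * u) ^ 2 ≤ (a * u) ^ 2 * Real.log a := le_mul_of_one_le_right (by positivity) hla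
      have h9 : 0 ≤ (a * u) ^ 2 := by positivity
      constructor <;> linarith
    refine h2.trans ?_
    rw [le_div_iff₀ (by linarith)]
    -- (a u)^2 log^2 a ≤ a^2 u √u
    have h4 : √u * Real.log a ^ 2 ≤ 1 := by
      have e1 : √u ≤ a ^ (-(1/4):ℝ) := by
        have : u ≤ a ^ (-(1/2):ℝ) := by
          rw [Real.rpow_neg ha0.le, ← Real.sqrt_eq_rpow, ← one_div, le_div_iff₀ (by linarith)]
          have hs := Real.mul_self_sqrt ha0.le
          nlinarith
        calc √u ≤ √(a ^ (-(1/2):ℝ)) := Real.sqrt_le_sqrt this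
          _ = _ := by rw [Real.sqrt_eq_rpow, ← Real.rpow_mul ha0.le]; norm_num
      have e2 : Real.log a ^ 2 ≤ a ^ (1/4:ℝ) := by
        calc Real.log a ^ 2 ≤ (a ^ (1/8:ℝ)) ^ 2 := by gcongr
          _ = _ := by rw [← Real.rpow_natCast, ← Real.rpow_mul ha0.le]; norm_num
      calc √u * Real.log a ^ 2 ≤ a ^ (-(1/4):ℝ) * a ^ (1/4:ℝ) := by gcongr
        _ = 1 := by rw [← Real.rpow_add ha0]; norm_num
    have hs := Real.mul_self_sqrt hu0
    have e5 : 0 ≤ a ^ 2 * (u * √u) := by positivity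
    calc 2 * (a * u) ^ 2 * Real.log a * Real.log a = 2 * (a ^ 2 * (u * √u)) * (√u * Real.log a ^ 2) := by
          linear_combination (-2 * a ^ 2 * u * Real.log a ^ 2) * hs
      _ ≤ 2 * (a ^ 2 * (u * √u)) * 1 := by gcongr
      _ ≤ _ := by nlinarith

lemma TT_upper {y z : ℝ} (hy : 0 ≤ y) (hz : 1 < z) : TT y ≤ √z * (y * √y) + Slog y / Real.log z := by
  have hlz := Real.log_pos hz
  have h1 : TT y ≤ ∑ q ∈ (Q1 y).filter (fun q : ℕ => (q:ℝ) ≤ z), y + ∑ q ∈ Q1 y, Real.log q * (y - q) / Real.log z := by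
    rw [Finset.sum_filter, ← Finset.sum_add_distrib]
    refine Finset.sum_le_sum (fun q hq => ?_)
    have h := mem_Q1.1 hq
    have hq1 : (1:ℝ) ≤ q := by exact_mod_cast h.2.1.pos
    have h2 := Real.log_nonneg hq1
    have h3 : 0 ≤ y - q := by linarith [h.1]
    split_ifs with hqz
    · have : 0 ≤ Real.log q * (y - q) / Real.log z := by positivity
      linarith
    · rw [zero_add, le_div_iff₀ hlz, mul_comm]
      gcongr
      linarith
  have h2 : ∑ q ∈ (Q1 y).filter (fun q : ℕ => (q:ℝ) ≤ z), y ≤ √z * (y * √y) := by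
    rw [Finset.sum_const, nsmul_eq_mul]
    have c1 : (((Q1 y).filter (fun q : ℕ => (q:ℝ) ≤ z)).card : ℝ) ≤ y :=
      le_trans (by exact_mod_cast Finset.card_filter_le _ _) (Q1_card hy)
    have c2 : (((Q1 y).filter (fun q : ℕ => (q:ℝ) ≤ z)).card : ℝ) ≤ z := by
      refine le_trans ?_ (Q1_card (y := z) (by linarith))
      norm_cast
      apply Finset.card_le_card
      intro q hq
      rw [Finset.mem_filter, mem_Q1] at hq
      exact mem_Q1.2 ⟨hq.2, hq.1.2⟩
    have : (((Q1 y).filter (fun q : ℕ => (q:ℝ) ≤ z)).card : ℝ) ≤ √z * √y := by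
      rw [← Real.sqrt_mul (by linarith)]
      apply Real.le_sqrt_of_sq_le
      rw [sq]
      exact mul_le_mul c2 c1 (by positivity) (by linarith)
    calc _ ≤ (√z * √y) * y := by gcongr
      _ = _ := by ring
  rw [Slog, Finset.sum_div]
  linarith

lemma TT_lower {y M : ℝ} (hyM : y ≤ M) (hM : 1 < M) : Slog y / Real.log M ≤ TT y := by
  rw [div_le_iff₀ (Real.log_pos hM), TT, Finset.sum_mul]
  refine Finset.sum_le_sum (fun q hq => ?_)
  have h := mem_Q1.1 hq
  have hq1 : (1:ℝ) ≤ q := by exact_mod_cast h.2.1.pos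
  have h3 : 0 ≤ y - q := by linarith [h.1]
  rw [mul_comm]
  apply mul_le_mul_of_nonneg_left _ h3
  exact Real.log_le_log (by linarith) (by linarith [h.1])

lemma G_upper0 : ∃ C : ℝ, 0 < C ∧ ∀ᶠ a : ℝ in atTop, ∀ z : ℝ, 1 < z → ∀ N : ℕ, ∀ Qs : Finset ℕ,
    (∀ q ∈ Qs, q.Prime ∧ q % 3 = 1) → ∑ q ∈ Qs, ∑ l ∈ Finset.range N, max (uu l - q / a) 0 ≤
      C * √z * √a + a / Real.log z * (Sg / 4 + C / Real.log a) := by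
  obtain ⟨C, hC, h⟩ := Slog_unif
  have hKp := Kg_pos
  refine ⟨(C + 1) * Kg, by positivity, ?_⟩
  filter_upwards [h, eventually_gt_atTop 1] with a ha ha1 z hz N Qs hQs
  have ha0 : 0 < a := by linarith
  have hlz := Real.log_pos hz
  have hla := Real.log_pos ha1
  rw [Finset.sum_comm]
  have hl : ∀ l ∈ Finset.range N, ∑ q ∈ Qs, max (uu l - q / a) 0 ≤
      √z * √a * (uu l * √(uu l)) + a / Real.log z * (uu l ^ 2 / 4 + C / Real.log a * (uu l * √(uu l))) := by
    intro l _
    have hu := uu_pos l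
    have e1 : ∑ q ∈ Qs, max (uu l - q / a) 0 ≤ TT (a * uu l) / a := by
      have : ∑ q ∈ Qs, max (uu l - q / a) 0 = ∑ q ∈ Qs.filter (fun q : ℕ => (q:ℝ) ≤ a * uu l), (a * uu l - q) / a := by
        rw [Finset.sum_filter]
        refine Finset.sum_congr rfl (fun q _ => ?_)
        split_ifs with hh
        · rw [max_eq_left]
          · field_simp
          · rw [sub_nonneg, div_le_iff₀ ha0]; linarith
        · rw [max_eq_right]
          rw [sub_nonpos, le_div_iff₀ ha0]; linarith
      rw [this, TT, Finset.sum_div]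
      refine Finset.sum_le_sum_of_subset_of_nonneg ?_ ?_
      · intro q hq
        rw [Finset.mem_filter] at hq
        exact mem_Q1.2 ⟨hq.2, hQs q hq.1⟩
      · intro q hq _
        have := (mem_Q1.1 hq).1
        exact div_nonneg (by linarith) ha0.le
    have e2 := TT_upper (y := a * uu l) (by positivity) hz
    have e3 := (abs_le.1 (ha (uu l) hu.le (uu_le_one l))).2
    have e4 : Slog (a * uu l) ≤ a ^ 2 * (uu l ^ 2 / 4 + C / Real.log a * (uu l * √(uu l))) := by
      have : C * a ^ 2 * (uu l * √(uu l)) / Real.log a = a ^ 2 * (C / Real.log a * (uu l * √(uu l))) := by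
        field_simp
      rw [this] at e3
      linarith
    refine e1.trans ?_
    rw [div_le_iff₀ ha0]
    refine e2.trans ?_
    rw [Real.sqrt_mul ha0.le]
    have e5 : Slog (a * uu l) / Real.log z ≤ a ^ 2 * (uu l ^ 2 / 4 + C / Real.log a * (uu l * √(uu l))) / Real.log z := by
      gcongr
    refine (add_le_add_right e5 _).trans (le_of_eq ?_)
    field_simp
  refine (Finset.sum_le_sum hl).trans ?_
  rw [Finset.sum_add_distrib, ← Finset.mul_sum, ← Finset.mul_sum, Finset.sum_add_distrib, ← Finset.mul_sum, ← Finset.sum_div]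
  have k1 := K_part N
  have k2 := S_part N
  have t1 : √z * √a * ∑ l ∈ Finset.range N, uu l * √(uu l) ≤ (C + 1) * Kg * √z * √a := by
    calc _ ≤ √z * √a * Kg := by gcongr
      _ ≤ √z * √a * ((C + 1) * Kg) := by gcongr; nlinarith
      _ = _ := by ring
  have t2 : C / Real.log a * ∑ l ∈ Finset.range N, uu l * √(uu l) ≤ (C + 1) * Kg / Real.log a := by
    calc _ ≤ C / Real.log a * Kg := by gcongr
      _ = C * Kg / Real.log a := by ring
      _ ≤ _ := by gcongr; linarith
  gcongr

lemma G_lower0 : ∃ C : ℝ, 0 < C ∧ ∀ᶠ a : ℝ in atTop, ∀ N : ℕ, 0 < N → ∀ R : ℝ, a ≤ R →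
    a / Real.log a * (Sg / 4 - 1 / N - C / Real.log a) ≤ 
      ∑ e ∈ Q1 R ×ˢ Finset.range N, max (uu e.2 - 1 / a * e.1) 0 := by
  obtain ⟨C, hC, h⟩ := Slog_unif
  have hKp := Kg_pos
  refine ⟨C * Kg, by positivity, ?_⟩
  filter_upwards [h, eventually_gt_atTop 1] with a ha ha1 N hN R hR
  have ha0 : 0 < a := by linarith
  have hla := Real.log_pos ha1
  rw [Finset.sum_product_right]
  have hl : ∀ l ∈ Finset.range N, a / Real.log a * (uu l ^ 2 / 4 - C / Real.log a * (uu l * √(uu l))) ≤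
      ∑ q ∈ Q1 R, max (uu l - 1 / a * q) 0 := by
    intro l _
    have hu := uu_pos l
    have hau : a * uu l ≤ a := by nlinarith [uu_le_one l]
    have e1 : TT (a * uu l) / a ≤ ∑ q ∈ Q1 R, max (uu l - 1 / a * q) 0 := by
      rw [TT, Finset.sum_div]
      calc ∑ q ∈ Q1 (a * uu l), (a * uu l - q) / a ≤ ∑ q ∈ Q1 (a * uu l), max (uu l - 1 / a * q) 0 := by
            refine Finset.sum_le_sum (fun q _ => ?_)
            refine le_trans (le_of_eq ?_) (le_max_left _ _)
            field_simp
        _ ≤ _ := by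
            refine Finset.sum_le_sum_of_subset_of_nonneg ?_ (fun _ _ _ => le_max_right _ _)
            intro q hq
            have := mem_Q1.1 hq
            exact mem_Q1.2 ⟨by linarith [this.1], this.2⟩
    have e2 := TT_lower hau ha1
    have e3 := (abs_le.1 (ha (uu l) hu.le (uu_le_one l))).1
    have e4 : a ^ 2 * (uu l ^ 2 / 4 - C / Real.log a * (uu l * √(uu l))) ≤ Slog (a * uu l) := by
      have : C * a ^ 2 * (uu l * √(uu l)) / Real.log a = a ^ 2 * (C / Real.log a * (uu l * √(uu l))) := by
        field_simp
      rw [this] at e3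
      linarith
    refine le_trans ?_ e1
    rw [le_div_iff₀ ha0]
    refine le_trans ?_ e2
    rw [le_div_iff₀ hla]
    refine le_trans (le_of_eq ?_) e4
    field_simp
  refine le_trans ?_ (Finset.sum_le_sum hl)
  rw [← Finset.mul_sum, Finset.sum_sub_distrib, ← Finset.mul_sum, ← Finset.sum_div]
  have k1 := K_part N
  have k2 := S_tail N hN
  have t2 : C / Real.log a * ∑ l ∈ Finset.range N, uu l * √(uu l) ≤ C * Kg / Real.log a := by
    calc _ ≤ C / Real.log a * Kg := by gcongr
      _ = C * Kg / Real.log a := by ring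
  apply mul_le_mul_of_nonneg_left _ (by positivity)
  have : (0:ℝ) ≤ 1 / N := by positivity
  linarith

noncomputable def hD (p a : ℕ) : ℕ := if p % 3 = 1 then a + 1 else 1

lemma hD_pos (p a : ℕ) : 0 < hD p a := by unfold hD; split_ifs <;> omega

lemma DD_eq {n : ℕ} {s : Finset ℕ} (hs : n.primeFactors ⊆ s) : DD n = ∏ p ∈ s, hD p (n.factorization p) := by
  unfold DD
  rw [Finsupp.prod_of_support_subset n.factorization (s := s) (by simpa using hs)]
  · rfl
  · intro i _; simp

lemma DD_filter (n : ℕ) : DD n = ∏ p ∈ n.primeFactors.filter (fun p => p % 3 = 1), (n.factorization p + 1) := by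
  rw [DD_eq (subset_refl _), Finset.prod_filter]
  rfl

lemma DD_mul_le {a b : ℕ} (ha : a ≠ 0) (hb : b ≠ 0) : DD (a * b) ≤ DD a * DD b := by
  have h : (a * b).primeFactors = a.primeFactors ∪ b.primeFactors := Nat.primeFactors_mul ha hb
  rw [DD_eq (n := a * b) (s := (a*b).primeFactors) (subset_refl _), DD_eq (n := a) (s := (a*b).primeFactors) (by rw [h]; exact Finset.subset_union_left),
    DD_eq (n := b) (s := (a*b).primeFactors) (by rw [h]; exact Finset.subset_union_right), ← Finset.prod_mul_distrib]
  refine Finset.prod_le_prod' (fun p _ => ?_)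
  rw [Nat.factorization_mul ha hb]
  unfold hD
  simp only [Finsupp.add_apply]
  split_ifs <;> nlinarith

lemma DD_le {a : ℕ} (ha : a ≠ 0) : DD a ≤ a := by
  rw [DD_eq (n := a) (s := a.primeFactors) (subset_refl _)]
  conv_rhs => rw [← Nat.prod_factorization_pow_eq_self ha]
  rw [Finsupp.prod, Nat.support_factorization]
  refine Finset.prod_le_prod' (fun p hp => ?_)
  have pp := Nat.prime_of_mem_primeFactors hp
  have h1 : a.factorization p < 2 ^ a.factorization p := Nat.lt_two_pow_self
  have h2 : 2 ^ a.factorization p ≤ p ^ a.factorization p := Nat.pow_le_pow_left pp.two_le _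
  unfold hD
  split_ifs <;> omega

lemma DD_pos (n : ℕ) : 0 < DD n := by
  rw [DD_eq (subset_refl _)]
  exact Finset.prod_pos (fun p _ => hD_pos _ _)

lemma sum_q1 (n : ℕ) (hn : n ≠ 0) (s : Finset ℕ) (hs : ∀ q ∈ s, q.Prime) :
    ∑ q ∈ s, (n.factorization q : ℝ) * ((q:ℝ) - 1) ≤ (n:ℝ) - 1 := by
  induction n using Nat.recOnPrimePow generalizing s with
  | zero => exact absurd rfl hn
  | one => simp
  | prime_pow_mul a p k pp hpa hk ih =>
    have ha : a ≠ 0 := by rintro rfl; simp at hn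
    have IH := ih ha s hs
    have hpk : p ^ k ≠ 0 := pow_ne_zero _ pp.ne_zero
    rw [Nat.factorization_mul hpk ha]
    have e : ∑ q ∈ s, ((p ^ k).factorization q : ℝ) * ((q:ℝ) - 1) ≤ (p:ℝ) ^ k - 1 := by
      have hp1 : (1:ℝ) ≤ p := by exact_mod_cast pp.pos
      have hb := one_add_mul_le_pow (a := (p:ℝ) - 1) (by linarith) k
      have h2 : ∑ q ∈ s, ((p ^ k).factorization q : ℝ) * ((q:ℝ) - 1) ≤ k * ((p:ℝ) - 1) := by
        rw [pp.factorization_pow]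
        by_cases hps : p ∈ s
        · rw [Finset.sum_eq_single_of_mem p hps]
          · simp
          · intro b _ hb; simp [hb.symm]
        · rw [Finset.sum_eq_zero]
          · have : (0:ℝ) ≤ p - 1 := by linarith
            positivity
          · intro b hb
            have : p ≠ b := by rintro rfl; exact hps hb
            simp [this]
      have : (1 + ((p:ℝ) - 1)) = p := by ring
      rw [this] at hb
      linarith
    simp only [Finsupp.add_apply, Nat.cast_add, add_mul, Finset.sum_add_distrib]
    push_cast
    have h3 : (1:ℝ) ≤ p ^ k := by exact_mod_cast Nat.pos_of_ne_zero hpk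
    have h4 : (1:ℝ) ≤ a := by exact_mod_cast Nat.pos_of_ne_zero ha
    nlinarith

lemma log_nat (n : ℕ) : Real.log n = ∑ p ∈ n.primeFactors, (n.factorization p : ℝ) * Real.log p := by
  rw [Real.log_nat_eq_sum_factorization, Finsupp.sum, Nat.support_factorization]

lemma prime_ge_7 {p : ℕ} (pp : p.Prime) (h : p % 3 = 1) : 7 ≤ p := by
  by_contra hh
  have h2 := pp.two_le
  have : p = 4 := by omega
  subst this
  norm_num at pp

lemma one_le_log7 {p : ℕ} (h : 7 ≤ p) : 1 ≤ Real.log p := by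
  have : (7:ℝ) ≤ p := by exact_mod_cast h
  rw [Real.le_log_iff_exp_le (by linarith)]
  linarith [Real.exp_one_lt_d9]

lemma dual_one (b N : ℕ) (hb : b ≤ N) (c : ℝ) : Real.log ((b:ℝ) + 1) ≤ b * c + ∑ l ∈ Finset.range N, max (uu l - c) 0 := by
  rw [← uu_sum]
  calc ∑ l ∈ Finset.range b, uu l ≤ ∑ l ∈ Finset.range b, (c + max (uu l - c) 0) := by
        refine Finset.sum_le_sum (fun l _ => ?_)
        have := le_max_left (uu l - c) 0
        linarith
    _ = b * c + ∑ l ∈ Finset.range b, max (uu l - c) 0 := by rw [Finset.sum_add_distrib]; simp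
    _ ≤ _ := by
        apply add_le_add_right
        exact Finset.sum_le_sum_of_subset_of_nonneg (Finset.range_mono hb) (fun _ _ _ => le_max_right _ _)

lemma smallp_sum {s : Finset ℕ} {y L : ℝ} (hy : 0 ≤ y) (hL : 0 ≤ L) (b : ℕ → ℕ) 
    (hs : ∀ p ∈ s, p.Prime ∧ (p:ℝ) ≤ y ∧ (b p : ℝ) ≤ L) :
    ∑ p ∈ s, Real.log ((b p : ℝ) + 1) ≤ y * Real.log (L + 1) := by
  have hc : (s.card : ℝ) ≤ y := by
    refine le_trans ?_ (Nat.floor_le hy)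
    have : s ⊆ Finset.Ioc 0 ⌊y⌋₊ := by
      intro p hp
      obtain ⟨h1, h2, _⟩ := hs p hp
      exact Finset.mem_Ioc.2 ⟨h1.pos, (Nat.le_floor_iff' h1.ne_zero).2 h2⟩
    have := Finset.card_le_card this
    simp at this
    exact_mod_cast this
  have hlog : 0 ≤ Real.log (L + 1) := Real.log_nonneg (by linarith)
  calc _ ≤ ∑ p ∈ s, Real.log (L + 1) := by
        refine Finset.sum_le_sum (fun p hp => ?_)
        obtain ⟨_, _, h3⟩ := hs p hp
        exact Real.log_le_log (by positivity) (by linarith)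
    _ = s.card * Real.log (L + 1) := by simp
    _ ≤ _ := by gcongr

lemma upper_core {n : ℕ} (hn : n ≠ 0) {L P S a Gs : ℝ} (hL : Real.log n ≤ L) (hP : 1 < P) (hS : 1 < S) (ha : 0 < a)
    (hG : ∀ N : ℕ, ∀ Qs : Finset ℕ, (∀ q ∈ Qs, q.Prime ∧ q % 3 = 1) →
      ∑ q ∈ Qs, ∑ l ∈ Finset.range N, max (uu l - q / a) 0 ≤ Gs) :
    Real.log (DD (DD n)) ≤ P * Real.log (L + 1) + S * Real.log (L + 1) + S / (S - 1) * (L / Real.log P) / a + Gs := by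
  have hL0 : 0 ≤ L := le_trans (Real.log_natCast_nonneg n) hL
  have hlogP := Real.log_pos hP
  set F := n.primeFactors.filter (fun p => p % 3 = 1) with hF
  have hFp : ∀ p ∈ F, p.Prime ∧ p % 3 = 1 := by
    intro p hp
    rw [hF, Finset.mem_filter] at hp
    exact ⟨Nat.prime_of_mem_primeFactors hp.1, hp.2⟩
  have hlogp : ∀ p ∈ F, 1 ≤ Real.log p := fun p hp => one_le_log7 (prime_ge_7 (hFp p hp).1 (hFp p hp).2)
  have hsum : ∑ p ∈ F, (n.factorization p : ℝ) * Real.log p ≤ L := by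
    refine le_trans ?_ hL
    rw [log_nat]
    refine Finset.sum_le_sum_of_subset_of_nonneg (Finset.filter_subset _ _) (fun p _ _ => ?_)
    exact mul_nonneg (by positivity) (Real.log_natCast_nonneg _)
  set E := F.filter (fun p : ℕ => (p:ℝ) ≤ P) with hE
  set I := F.filter (fun p : ℕ => ¬ (p:ℝ) ≤ P) with hI
  set m1 := ∏ p ∈ E, (n.factorization p + 1) with hm1
  set m2 := ∏ p ∈ I, (n.factorization p + 1) with hm2
  have hm10 : m1 ≠ 0 := Finset.prod_ne_zero_iff.2 (fun p _ => by omega)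
  have hm20 : m2 ≠ 0 := Finset.prod_ne_zero_iff.2 (fun p _ => by omega)
  have hDn : DD n = m1 * m2 := by
    rw [DD_filter, hm1, hm2, ← Finset.prod_filter_mul_prod_filter_not F (fun p : ℕ => (p:ℝ) ≤ P)]
  have hal : ∀ p ∈ F, (n.factorization p : ℝ) ≤ (n.factorization p : ℝ) * Real.log p := fun p hp =>
    le_mul_of_one_le_right (by positivity) (hlogp p hp)
  have step1 : Real.log (DD (DD n)) ≤ Real.log m1 + Real.log (DD m2) := by
    rw [← Real.log_mul (by exact_mod_cast hm10) (by exact_mod_cast (DD_pos _).ne')]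
    apply Real.log_le_log (by exact_mod_cast DD_pos _)
    rw [hDn]
    exact_mod_cast (DD_mul_le hm10 hm20).trans (Nat.mul_le_mul_right _ (DD_le hm10))
  have step2 : Real.log m1 ≤ P * Real.log (L + 1) := by
    rw [hm1]
    push_cast
    rw [Real.log_prod (fun p _ => by positivity)]
    refine smallp_sum (by linarith) hL0 _ (fun p hp => ?_)
    rw [hE, Finset.mem_filter] at hp
    refine ⟨(hFp p hp.1).1, hp.2, (hal p hp.1).trans ?_⟩
    refine le_trans ?_ hsum
    exact Finset.single_le_sum (f := fun p : ℕ => (n.factorization p : ℝ) * Real.log p)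
      (fun p _ => mul_nonneg (by positivity) (Real.log_natCast_nonneg _)) hp.1
  -- second part
  have hlm2 : Real.log m2 ≤ L := by
    rw [hm2]
    push_cast
    rw [Real.log_prod (fun p _ => by positivity)]
    refine le_trans ?_ hsum
    refine le_trans (Finset.sum_le_sum (fun p hp => ?_)) (Finset.sum_le_sum_of_subset_of_nonneg (Finset.filter_subset (fun p : ℕ => ¬ (p:ℝ) ≤ P) F) (fun p _ _ => mul_nonneg (by positivity) (Real.log_natCast_nonneg _)))
    have := Real.log_le_sub_one_of_pos (x := (n.factorization p : ℝ) + 1) (by positivity)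
    have h2 := hal p (Finset.mem_filter.1 hp).1
    linarith
  set F2 := m2.primeFactors.filter (fun p => p % 3 = 1) with hF2
  have hF2p : ∀ p ∈ F2, p.Prime ∧ p % 3 = 1 := by
    intro p hp
    rw [hF2, Finset.mem_filter] at hp
    exact ⟨Nat.prime_of_mem_primeFactors hp.1, hp.2⟩
  have step3 : Real.log (DD m2) = ∑ q ∈ F2.filter (fun q : ℕ => (q:ℝ) ≤ S), Real.log ((m2.factorization q : ℝ) + 1) +
      ∑ q ∈ F2.filter (fun q : ℕ => ¬ (q:ℝ) ≤ S), Real.log ((m2.factorization q : ℝ) + 1) := by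
    rw [DD_filter]
    push_cast
    rw [Real.log_prod (fun p _ => by positivity), Finset.sum_filter_add_sum_filter_not]
  have step4 : ∑ q ∈ F2.filter (fun q : ℕ => (q:ℝ) ≤ S), Real.log ((m2.factorization q : ℝ) + 1) ≤ S * Real.log (L + 1) := by
    refine smallp_sum (by linarith) hL0 _ (fun p hp => ?_)
    rw [Finset.mem_filter] at hp
    refine ⟨(hF2p p hp.1).1, hp.2, ?_⟩
    refine le_trans ?_ hlm2
    rw [log_nat]
    have h1 : 1 ≤ Real.log p := one_le_log7 (prime_ge_7 (hF2p p hp.1).1 (hF2p p hp.1).2)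
    refine le_trans (le_mul_of_one_le_right (by positivity) h1) ?_
    exact Finset.single_le_sum (f := fun p : ℕ => (m2.factorization p : ℝ) * Real.log p)
      (fun p _ => mul_nonneg (by positivity) (Real.log_natCast_nonneg _)) (Finset.mem_filter.1 hp.1).1
  set J := F2.filter (fun q : ℕ => ¬ (q:ℝ) ≤ S) with hJ
  have hJp : ∀ q ∈ J, q.Prime ∧ q % 3 = 1 := fun q hq => hF2p q (Finset.mem_filter.1 hq).1
  have hcost1 : ∑ q ∈ J, (m2.factorization q : ℝ) * ((q:ℝ) - 1) ≤ L / Real.log P := by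
    have hfac : ∀ q, (m2.factorization q : ℝ) = ∑ p ∈ I, ((n.factorization p + 1).factorization q : ℝ) := by
      intro q
      rw [hm2, Nat.factorization_prod (fun p _ => by omega), Finsupp.finsetSum_apply]
      push_cast; rfl
    simp_rw [hfac, Finset.sum_mul]
    rw [Finset.sum_comm, le_div_iff₀ hlogP, Finset.sum_mul]
    refine le_trans (Finset.sum_le_sum (fun p hp => ?_)) (le_trans (Finset.sum_le_sum_of_subset_of_nonneg (Finset.filter_subset (fun p : ℕ => ¬ (p:ℝ) ≤ P) F) (fun p _ _ => mul_nonneg (by positivity) (Real.log_natCast_nonneg _))) hsum)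
    have h1 := sum_q1 (n.factorization p + 1) (by omega) J (fun q hq => (hJp q hq).1)
    push_cast at h1
    have h2 : P ≤ p := le_of_lt (not_le.1 (Finset.mem_filter.1 hp).2)
    have h3 : Real.log P ≤ Real.log p := Real.log_le_log (by linarith) h2
    exact mul_le_mul (by linarith) h3 hlogP.le (by positivity)
  have hcost : ∑ q ∈ J, (m2.factorization q : ℝ) * q ≤ S / (S - 1) * (L / Real.log P) := by
    refine le_trans ?_ (mul_le_mul_of_nonneg_left hcost1 (div_nonneg (by linarith) (by linarith)))
    rw [Finset.mul_sum]
    refine Finset.sum_le_sum (fun q hq => ?_)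
    have h2 : S ≤ q := le_of_lt (not_le.1 (Finset.mem_filter.1 hq).2)
    have h3 : (q:ℝ) ≤ S / (S - 1) * (q - 1) := by
      rw [div_mul_eq_mul_div, le_div_iff₀ (by linarith)]
      nlinarith
    calc (m2.factorization q : ℝ) * q ≤ (m2.factorization q : ℝ) * (S / (S - 1) * (q - 1)) := by gcongr
      _ = _ := by ring
  have step5 : ∑ q ∈ J, Real.log ((m2.factorization q : ℝ) + 1) ≤ S / (S - 1) * (L / Real.log P) / a + Gs := by
    have hN : ∀ q ∈ J, m2.factorization q ≤ ∑ q ∈ J, m2.factorization q := fun q hq =>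
      Finset.single_le_sum (f := fun q => m2.factorization q) (fun _ _ => Nat.zero_le _) hq
    calc _ ≤ ∑ q ∈ J, ((m2.factorization q : ℝ) * (q / a) + ∑ l ∈ Finset.range (∑ q ∈ J, m2.factorization q), max (uu l - q / a) 0) :=
          Finset.sum_le_sum (fun q hq => dual_one _ _ (hN q hq) _)
      _ = (∑ q ∈ J, (m2.factorization q : ℝ) * q) / a + ∑ q ∈ J, ∑ l ∈ Finset.range (∑ q ∈ J, m2.factorization q), max (uu l - q / a) 0 := by
          rw [Finset.sum_add_distrib, Finset.sum_div]
          congr 1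
          exact Finset.sum_congr rfl (fun q _ => by ring)
      _ ≤ _ := add_le_add (by gcongr) (hG _ J hJp)
  linarith

lemma threshold {ι : Type} [DecidableEq ι] (P : Finset ι) (v c : ι → ℝ) (hv : ∀ e ∈ P, 0 < v e) (hv1 : ∀ e ∈ P, v e ≤ 1)
    (hc : ∀ e ∈ P, 0 < c e) (B : ℝ) (hB : 0 ≤ B) :
    ∃ A ⊆ P, ∑ e ∈ A, c e ≤ B ∧ (A = P ∨ ∃ r : ℝ, 0 < r ∧ 
      r * B + ∑ e ∈ P, max (v e - r * c e) 0 - 1 ≤ ∑ e ∈ A, v e) := by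
  classical
  set 𝒜 := P.powerset.filter (fun A => (∀ a ∈ A, ∀ b ∈ P \ A, v b / c b ≤ v a / c a) ∧ ∑ e ∈ A, c e ≤ B) with h𝒜
  have hne : 𝒜.Nonempty := ⟨∅, by rw [h𝒜, Finset.mem_filter]; simp [hB]⟩
  obtain ⟨A, hA, hmax⟩ := Finset.exists_max_image 𝒜 Finset.card hne
  rw [h𝒜, Finset.mem_filter, Finset.mem_powerset] at hA
  obtain ⟨hAP, hAu, hAB⟩ := hA
  refine ⟨A, hAP, hAB, ?_⟩
  by_cases hAe : A = P
  · exact Or.inl hAe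
  right
  have hne2 : (P \ A).Nonempty := by
    rw [Finset.sdiff_nonempty]
    intro h; exact hAe (Finset.Subset.antisymm hAP h)
  obtain ⟨e, he, hemax⟩ := Finset.exists_max_image (P \ A) (fun b => v b / c b) hne2
  have heP := (Finset.mem_sdiff.1 he).1
  have heA := (Finset.mem_sdiff.1 he).2
  set r := v e / c e with hr
  have hrpos : 0 < r := div_pos (hv e heP) (hc e heP)
  refine ⟨r, hrpos, ?_⟩
  have hsubs : insert e A ⊆ P := Finset.insert_subset heP hAP
  have hup : ∀ a ∈ insert e A, ∀ b ∈ P \ insert e A, v b / c b ≤ v a / c a := by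
    intro a ha b hb
    have hb' : b ∈ P \ A := by
      rw [Finset.mem_sdiff] at hb ⊢
      exact ⟨hb.1, fun h => hb.2 (Finset.mem_insert_of_mem h)⟩
    rcases Finset.mem_insert.1 ha with rfl | ha
    · exact hemax b hb'
    · exact hAu a ha b hb'
  have hcost : B < ∑ e ∈ insert e A, c e := by
    by_contra hcon
    have hmem : insert e A ∈ 𝒜 := by
      rw [h𝒜, Finset.mem_filter, Finset.mem_powerset]
      exact ⟨hsubs, hup, not_lt.1 hcon⟩
    have := hmax _ hmem
    rw [Finset.card_insert_of_notMem heA] at this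
    omega
  have hg : ∑ e ∈ P, max (v e - r * c e) 0 = ∑ e ∈ insert e A, (v e - r * c e) := by
    rw [← Finset.sum_sdiff hsubs]
    have z1 : ∑ x ∈ P \ insert e A, max (v x - r * c x) 0 = 0 := by
      refine Finset.sum_eq_zero (fun b hb => max_eq_right ?_)
      have h1 := hup e (Finset.mem_insert_self _ _) b hb
      have h2 := hc b (Finset.mem_sdiff.1 hb).1
      rw [← hr, div_le_iff₀ h2] at h1
      linarith
    rw [z1, zero_add]
    refine Finset.sum_congr rfl (fun a ha => max_eq_left ?_)
    have h2 := hc a (hsubs ha)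
    have h1 : r ≤ v a / c a := by
      rcases Finset.mem_insert.1 ha with rfl | ha
      · exact le_refl _
      · exact hAu a ha e he
    rw [le_div_iff₀ h2] at h1
    linarith
  rw [hg, Finset.sum_sub_distrib, ← Finset.mul_sum, Finset.sum_insert heA (f := v)]
  have := mul_lt_mul_of_pos_left hcost hrpos
  have := hv1 e heP
  linarith

lemma uu_set_le (T : Finset ℕ) : ∑ l ∈ T, uu l ≤ Real.log ((T.card : ℝ) + 1) := by
  rw [← uu_sum]
  induction T using Finset.induction_on_max with
  | empty => simp
  | insert a s ha ih =>
    have hn : a ∉ s := fun h => lt_irrefl _ (ha a h)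
    rw [Finset.sum_insert hn, Finset.card_insert_of_notMem hn, Finset.sum_range_succ]
    have hcard : s.card ≤ a := by
      have : s ⊆ Finset.range a := fun x hx => Finset.mem_range.2 (ha x hx)
      simpa using Finset.card_le_card this
    have := uu_anti hcard
    linarith

lemma DD_prod {ι : Type} [DecidableEq ι] (A : Finset ι) (φ : ι → ℕ) (k : ι → ℕ) (hφ : ∀ e ∈ A, (φ e).Prime ∧ φ e % 3 = 1)
    (hinj : ∀ e ∈ A, ∀ e' ∈ A, φ e = φ e' → e = e') (hk : ∀ e ∈ A, k e ≠ 0) :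
    DD (∏ e ∈ A, φ e ^ k e) = ∏ e ∈ A, (k e + 1) := by
  induction A using Finset.induction_on with
  | empty => simp [DD]
  | insert a s ha ih =>
    rw [Finset.prod_insert ha, Finset.prod_insert ha]
    have h1 := hφ a (Finset.mem_insert_self _ _)
    rw [DD_mul h1.1 _ _ (hk a (Finset.mem_insert_self _ _)), if_pos h1.2, ih]
    · exact fun e he => hφ e (Finset.mem_insert_of_mem he)
    · exact fun e he e' he' => hinj e (Finset.mem_insert_of_mem he) e' (Finset.mem_insert_of_mem he')
    · exact fun e he => hk e (Finset.mem_insert_of_mem he)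
    · intro hdvd
      rw [h1.1.prime.dvd_finsetProd_iff] at hdvd
      obtain ⟨e, he, hd⟩ := hdvd
      have h2 := h1.1.dvd_of_dvd_pow hd
      rw [Nat.prime_dvd_prime_iff_eq h1.1 (hφ e (Finset.mem_insert_of_mem he)).1] at h2
      have := hinj a (Finset.mem_insert_self _ _) e (Finset.mem_insert_of_mem he) h2
      exact ha (this ▸ he)

lemma lower_core {R Y B L : ℝ} {N : ℕ} (hB : 0 ≤ B) (hY : 1 ≤ Y) (hcard : (Q1 R).card * N ≤ (Q1 Y).card)
    (hBL : B * Real.log Y ≤ L) :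
    ∃ n : ℕ, n ≠ 0 ∧ Real.log n ≤ L ∧ (∀ p, p.Prime → p ∣ n → p % 3 = 1) ∧ (∀ p, p.Prime → p ∣ DD n → p % 3 = 1) ∧
      ((∀ r : ℝ, 0 ≤ r → ∑ e ∈ Q1 R ×ˢ Finset.range N, max (uu e.2 - r * e.1) 0 ≤ Real.log (DD (DD n))) ∨
       ∃ r : ℝ, 0 < r ∧ r * B + ∑ e ∈ Q1 R ×ˢ Finset.range N, max (uu e.2 - r * e.1) 0 - 1 ≤ Real.log (DD (DD n))) := by
  classical
  set P := Q1 R ×ˢ Finset.range N with hP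
  have hPq : ∀ e ∈ P, e.1.Prime ∧ e.1 % 3 = 1 := fun e he => (mem_Q1.1 (Finset.mem_product.1 he).1).2
  obtain ⟨A, hAP, hAB, hAv⟩ := threshold P (fun e => uu e.2) (fun e => (e.1:ℝ)) (fun e _ => uu_pos _) (fun e _ => uu_le_one _)
    (fun e he => by exact_mod_cast (hPq e he).1.pos) B hB
  have hPc : P.card ≤ (Q1 Y).card := by rw [hP, Finset.card_product, Finset.card_range]; exact hcard
  obtain ⟨φ, hφm, hφi⟩ : ∃ φ : ℕ × ℕ → ℕ, (∀ e ∈ P, φ e ∈ Q1 Y) ∧ ∀ e ∈ P, ∀ e' ∈ P, φ e = φ e' → e = e' := by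
    obtain ⟨t, ht, htc⟩ := Finset.exists_subset_card_eq hPc
    let ψ := Finset.equivOfCardEq htc.symm
    refine ⟨fun e => if h : e ∈ P then (ψ ⟨e, h⟩ : ℕ) else 0, ?_, ?_⟩
    · intro e he
      simp only [he, dif_pos]
      exact ht (ψ ⟨e, he⟩).2
    · intro e he e' he' h
      simp only [he, he', dif_pos] at h
      have := ψ.injective (Subtype.ext h)
      simpa using this
  have hφp : ∀ e ∈ A, (φ e).Prime ∧ φ e % 3 = 1 := fun e he => (mem_Q1.1 (hφm e (hAP he))).2
  set n := ∏ e ∈ A, φ e ^ (e.1 - 1) with hn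
  have hDn : DD n = ∏ e ∈ A, e.1 := by
    rw [hn, DD_prod A φ (fun e => e.1 - 1) hφp (fun e he e' he' => hφi e (hAP he) e' (hAP he'))
      (fun e he => by have := (hPq e (hAP he)).1.two_le; omega)]
    refine Finset.prod_congr rfl (fun e he => ?_)
    have := (hPq e (hAP he)).1.two_le; omega
  have hlogY : 0 ≤ Real.log Y := Real.log_nonneg hY
  have hval : ∑ e ∈ A, uu e.2 ≤ Real.log (DD (DD n)) := by
    rw [hDn, Finset.prod_comp (fun q : ℕ => q) (fun e : ℕ × ℕ => e.1)]
    have hpos : ∀ q ∈ A.image (fun e : ℕ × ℕ => e.1), (A.filter (fun e => e.1 = q)).card ≠ 0 := by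
      intro q hq
      obtain ⟨e, he, rfl⟩ := Finset.mem_image.1 hq
      exact Finset.card_ne_zero_of_mem (a := e) (Finset.mem_filter.2 ⟨he, rfl⟩)
    rw [DD_prod (A.image (fun e : ℕ × ℕ => e.1)) (fun q => q) (fun q => (A.filter (fun e => e.1 = q)).card) ?_ (fun _ _ _ _ h => h) hpos]
    · push_cast
      rw [Real.log_prod (fun p _ => by positivity)]
      rw [← Finset.sum_fiberwise_of_maps_to (t := A.image (fun e : ℕ × ℕ => e.1)) (g := fun e : ℕ × ℕ => e.1)
        (fun e he => Finset.mem_image_of_mem _ he)]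
      refine Finset.sum_le_sum (fun q _ => ?_)
      have hinj : Set.InjOn (fun e : ℕ × ℕ => e.2) (A.filter (fun e => e.1 = q) : Finset (ℕ × ℕ)) := by
        intro e he e' he' h
        have h1 := (Finset.mem_filter.1 (Finset.mem_coe.1 he)).2
        have h2 := (Finset.mem_filter.1 (Finset.mem_coe.1 he')).2
        exact Prod.ext (h1.trans h2.symm) h
      have := uu_set_le ((A.filter (fun e => e.1 = q)).image (fun e : ℕ × ℕ => e.2))
      rw [Finset.card_image_of_injOn hinj, Finset.sum_image hinj] at this
      exact this
    · intro q hq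
      obtain ⟨e, he, rfl⟩ := Finset.mem_image.1 hq
      exact hPq e (hAP he)
  refine ⟨n, ?_, ?_, ?_, ?_, ?_⟩
  · rw [hn]
    exact Finset.prod_ne_zero_iff.2 (fun e he => pow_ne_zero _ (hφp e he).1.ne_zero)
  · refine le_trans ?_ hBL
    rw [hn]
    push_cast
    rw [Real.log_prod (fun e he => pow_ne_zero _ (by exact_mod_cast (hφp e he).1.ne_zero))]
    refine le_trans ?_ (mul_le_mul_of_nonneg_right hAB hlogY)
    rw [Finset.sum_mul]
    refine Finset.sum_le_sum (fun e he => ?_)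
    rw [Real.log_pow]
    have h1 : (1:ℝ) ≤ φ e := by exact_mod_cast (hφp e he).1.pos
    have h2 := (mem_Q1.1 (hφm e (hAP he))).1
    have h3 : Real.log (φ e) ≤ Real.log Y := Real.log_le_log (by linarith) h2
    have h4 : ((e.1 - 1 : ℕ) : ℝ) ≤ e.1 := by exact_mod_cast Nat.sub_le _ _
    exact mul_le_mul h4 h3 (Real.log_nonneg h1) (by positivity)
  · intro p pp hp
    rw [hn, pp.prime.dvd_finsetProd_iff] at hp
    obtain ⟨e, he, hd⟩ := hp
    have h2 := pp.dvd_of_dvd_pow hd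
    rw [Nat.prime_dvd_prime_iff_eq pp (hφp e he).1] at h2
    rw [h2]; exact (hφp e he).2
  · intro p pp hp
    rw [hDn, pp.prime.dvd_finsetProd_iff] at hp
    obtain ⟨e, he, h2⟩ := hp
    rw [Nat.prime_dvd_prime_iff_eq pp (hPq e (hAP he)).1] at h2
    rw [h2]; exact (hPq e (hAP he)).2
  · rcases hAv with hAv | ⟨r, hr, h⟩
    · left
      intro r hr
      refine le_trans ?_ hval
      rw [hAv]
      refine Finset.sum_le_sum (fun e _ => max_le ?_ (uu_pos _).le)
      have : 0 ≤ r * e.1 := by positivity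
      linarith
    · right
      exact ⟨r, hr, h.trans hval⟩

lemma ev_facts (κ : ℝ) : ∀ᶠ L : ℝ in atTop, ∃ X t w : ℝ, X = √L ∧ t = Real.log L ∧ w = Real.log t ∧ L = X ^ 2 ∧
    Real.log X = t / 2 ∧ 1 ≤ w ∧ κ ≤ w ∧ 100 * w ≤ t ∧ κ ≤ t ∧ t ^ 6 ≤ X ∧ 1 < X := by
  have h1 : ∀ᶠ t : ℝ in atTop, t ^ 6 ≤ Real.exp (t / 2) := by
    have := (Real.tendsto_exp_div_pow_atTop 6).eventually_ge_atTop (2 ^ 6)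
    have h2 : Tendsto (fun t : ℝ => t / 2) atTop atTop := tendsto_id.atTop_div_const (by norm_num)
    filter_upwards [h2.eventually this, eventually_gt_atTop 0] with t ht ht0
    rw [le_div_iff₀ (by positivity)] at ht
    calc t ^ 6 = 2 ^ 6 * (t / 2) ^ 6 := by ring
      _ ≤ _ := ht
  have h2 : ∀ᶠ t : ℝ in atTop, 100 * Real.log t ≤ t := by
    have := (Real.isLittleO_log_id_atTop).bound (c := 1 / 100) (by norm_num)
    filter_upwards [this, eventually_ge_atTop 1] with t ht ht1
    rw [Real.norm_of_nonneg (Real.log_nonneg ht1), id, Real.norm_of_nonneg (by linarith)] at ht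
    linarith
  have h3 : ∀ᶠ t : ℝ in atTop, max 1 κ ≤ Real.log t := Real.tendsto_log_atTop.eventually_ge_atTop _
  have hl := Real.tendsto_log_atTop
  filter_upwards [hl.eventually h1, hl.eventually h2, hl.eventually h3, hl.eventually_ge_atTop κ, eventually_gt_atTop 1] with L e1 e2 e3 e4 e5
  have hL0 : 0 < L := by linarith
  have hX : Real.exp (Real.log L / 2) = √L := by
    rw [← Real.log_sqrt hL0.le, Real.exp_log (Real.sqrt_pos.2 hL0)]
  refine ⟨_, _, _, rfl, rfl, rfl, (Real.sq_sqrt hL0.le).symm, Real.log_sqrt hL0.le, (le_max_left _ _).trans e3, (le_max_right _ _).trans e3, e2, e4, hX ▸ e1, ?_⟩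
  rw [Real.lt_sqrt (by norm_num)]; linarith

lemma inv_up {t y e : ℝ} (ht : 0 < t) (he0 : 0 ≤ e) (he : e ≤ 1 / 2) (hy : t / 2 * (1 - e) ≤ y) : 1 / y ≤ 2 / t * (1 + 2 * e) := by
  have h0 : 0 < t / 2 * (1 - e) := mul_pos (by positivity) (by linarith)
  have h1 : 0 < y := by linarith
  rw [div_mul_eq_mul_div, div_le_div_iff₀ h1 ht]
  have : t / 2 * (1 - e) * (1 + 2 * e) ≤ y * (1 + 2 * e) := mul_le_mul_of_nonneg_right hy (by linarith)
  have h3 : 0 ≤ t * (e * (1 - 2 * e)) := mul_nonneg ht.le (mul_nonneg he0 (by linarith))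
  nlinarith

set_option maxHeartbeats 1000000 in
lemma D_upper : ∃ C : ℝ, 0 < C ∧ ∀ᶠ L : ℝ in atTop, ∀ n : ℕ, n ≠ 0 → Real.log n ≤ L →
    Real.log (DD (DD n)) ≤ 2 * √Sg * (√L / Real.log L) +
      C * (√L / Real.log L) * (Real.log (Real.log L) / Real.log L) := by
  obtain ⟨C, hC, hG⟩ := G_upper0
  obtain ⟨s, hs⟩ : ∃ s, s = √Sg := ⟨_, rfl⟩
  have hs0 : 0 < s := hs ▸ Real.sqrt_pos.2 Sg_pos
  have hsq : Sg = s ^ 2 := by rw [hs, Real.sq_sqrt Sg_pos.le]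
  obtain ⟨ρ, hρ⟩ : ∃ ρ, ρ = 2 / s := ⟨_, rfl⟩
  have hρ0 : 0 < ρ := by rw [hρ]; positivity
  refine ⟨2 + 1 + 38 * s + 20 * s + C * ρ + 168 * ρ * C, by positivity, ?_⟩
  have hsqrt : Tendsto (fun L : ℝ => ρ * √L) atTop atTop := Real.tendsto_sqrt_atTop.const_mul_atTop hρ0
  filter_upwards [ev_facts (|Real.log ρ|), hsqrt.eventually hG] with L ⟨X, t, w, hX, ht, hw, hL, hlX, hw1, hκ, hwt, _, htX, hX1⟩ hGL n hn hnL
  rw [← hX] at hGL 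
  rw [← ht, ← hw, ← hX, ← hs]
  have hXt' : t ≤ X := le_trans (le_self_pow₀ (by linarith) (by norm_num)) htX
  have hL2 : 2 ≤ L := by rw [hL]; nlinarith
  have hlog : L + 1 ≤ L ^ 2 := by nlinarith
  have ht100 : 100 ≤ t := by linarith
  have ht0 : 0 < t := by linarith
  have hX0 : 0 < X := by linarith
  have hL0 : 0 < L := by rw [hL]; positivity
  have hlogL1 : Real.log (L + 1) ≤ 2 * t := by
    calc Real.log (L + 1) ≤ Real.log (L ^ 2) := Real.log_le_log (by linarith) hlog
      _ = 2 * t := by rw [Real.log_pow, ← ht]; norm_num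
  have hlogL0 : 0 ≤ Real.log (L + 1) := Real.log_nonneg (by linarith)
  have hlt3 : Real.log (X / t ^ 3) = t / 2 - 3 * w := by
    rw [Real.log_div (by positivity) (by positivity), Real.log_pow, ← hw, hlX]; norm_num
  have hla : Real.log (ρ * X) = t / 2 + Real.log ρ := by
    rw [Real.log_mul (by positivity) (by positivity), hlX]; ring
  have hlz : Real.log (ρ * X / t ^ 4) = t / 2 + Real.log ρ - 4 * w := by
    rw [Real.log_div (by positivity) (by positivity), Real.log_pow, ← hw, hla]; norm_num
  have habs := abs_le.1 (le_refl |Real.log ρ|)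
  have hP1 : 1 < X / t ^ 3 := by
    rw [lt_div_iff₀ (by positivity), one_mul]
    exact lt_of_lt_of_le (pow_lt_pow_right₀ (by linarith) (by norm_num)) htX
  have hz1 : 1 < ρ * X / t ^ 4 := by
    rw [← Real.log_pos_iff (by positivity), hlz]
    linarith
  obtain ⟨e, he⟩ : ∃ e, e = w / t := ⟨_, rfl⟩
  have hwe : w = e * t := by rw [he]; field_simp
  have he0 : 0 < e := by rw [he]; positivity
  have he1 : e ≤ 1 / 100 := by rw [he, div_le_iff₀ ht0]; linarith
  have hte : 1 / t ≤ e := by rw [he]; gcongr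
  have main := upper_core hn hnL hP1 (S := t) (by linarith) (a := ρ * X) (by positivity) (hGL _ hz1)
  rw [← he]
  have hXt : 0 < X / t := by positivity
  have T1 : X / t ^ 3 * Real.log (L + 1) ≤ X / t * (2 * e) := by
    calc X / t ^ 3 * Real.log (L + 1) ≤ X / t ^ 3 * (2 * t) := by gcongr
      _ = X / t * (2 * (1 / t)) := by field_simp
      _ ≤ _ := by gcongr
  have T2 : t * Real.log (L + 1) ≤ X / t * e := by
    calc t * Real.log (L + 1) ≤ t * (2 * t) := by gcongr
      _ ≤ t ^ 6 / t * (1 / t) := by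
        rw [show t ^ 6 / t * (1 / t) = t ^ 4 by field_simp]
        have q2 : 2 ≤ t ^ 2 := le_trans (by linarith) (le_self_pow₀ (by linarith : 1 ≤ t) two_ne_zero)
        calc t * (2 * t) = 2 * t ^ 2 := by ring
          _ ≤ t ^ 2 * t ^ 2 := by gcongr
          _ = t ^ 4 := by ring
      _ ≤ _ := by gcongr
  have T3 : t / (t - 1) * (L / Real.log (X / t ^ 3)) / (ρ * X) ≤ X / t * (s * (1 + 38 * e)) := by
    have i1 : 1 / (t / 2 - 3 * w) ≤ 2 / t * (1 + 2 * (6 * e)) := by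
      apply inv_up ht0 (by positivity) (by linarith)
      rw [hwe]; linarith
    have i2 : t / (t - 1) ≤ 1 + 2 * e := by
      have : t / (t - 1) ≤ 1 + 2 * (1 / t) := by
        rw [div_le_iff₀ (by linarith)]
        have : t * (1 / t) = 1 := by field_simp
        have h5 : 1 / t ≤ 1 / 100 := by gcongr
        have h6 : (1 + 2 * (1 / t)) * (t - 1) = t - 1 + 2 * (t * (1 / t)) - 2 * (1 / t) := by ring
        rw [h6, this]
        linarith
      linarith
    have i0 : 0 < 1 / (t / 2 - 3 * w) := by apply one_div_pos.2; linarith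
    rw [hlt3, hL, hρ]
    calc t / (t - 1) * (X ^ 2 / (t / 2 - 3 * w)) / (2 / s * X) = X * s / 2 * (t / (t - 1) * (1 / (t / 2 - 3 * w))) := by
          field_simp
      _ ≤ X * s / 2 * ((1 + 2 * e) * (2 / t * (1 + 2 * (6 * e)))) := by
          apply mul_le_mul_of_nonneg_left _ (by positivity)
          exact mul_le_mul i2 i1 i0.le (by positivity)
      _ = X / t * (s * ((1 + 2 * e) * (1 + 12 * e))) := by field_simp; ring
      _ ≤ _ := by
          have h9 : e * e ≤ e * 1 := mul_le_mul_of_nonneg_left (by linarith) he0.le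
          gcongr
          linarith
  have T4 : C * √(ρ * X / t ^ 4) * √(ρ * X) + ρ * X / Real.log (ρ * X / t ^ 4) * (Sg / 4 + C / Real.log (ρ * X)) ≤
      X / t * (C * ρ * e + s * (1 + 20 * e) + 168 * ρ * C * e) := by
    have j1 : √(ρ * X / t ^ 4) * √(ρ * X) = X / t * (ρ * (1 / t)) := by
      rw [Real.sqrt_div (by positivity), show t ^ 4 = (t ^ 2) ^ 2 by ring, Real.sqrt_sq (by positivity), div_mul_eq_mul_div,
        Real.mul_self_sqrt (by positivity)]
      field_simp
    have j2 : 1 / Real.log (ρ * X / t ^ 4) ≤ 2 / t * (1 + 2 * (10 * e)) := by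
      rw [hlz]
      apply inv_up ht0 (by positivity) (by linarith)
      have : t / 2 * (1 - 10 * e) = t / 2 - 5 * w := by rw [hwe]; ring
      linarith
    have j3 : C / Real.log (ρ * X) ≤ 4 * C * e := by
      have : t / 4 ≤ Real.log (ρ * X) := by rw [hla]; linarith
      calc C / Real.log (ρ * X) ≤ C / (t / 4) := by gcongr
        _ = 4 * C * (1 / t) := by field_simp
        _ ≤ _ := by gcongr
    have j0 : 0 < 1 / Real.log (ρ * X / t ^ 4) := one_div_pos.2 (Real.log_pos hz1)
    have k1 : C * √(ρ * X / t ^ 4) * √(ρ * X) ≤ X / t * (C * ρ * e) := by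
      rw [mul_assoc, j1]
      calc C * (X / t * (ρ * (1 / t))) = X / t * (C * ρ * (1 / t)) := by ring
        _ ≤ _ := by gcongr
    have k2 : ρ * X / Real.log (ρ * X / t ^ 4) * (Sg / 4 + C / Real.log (ρ * X)) ≤ X / t * (s * (1 + 20 * e) + 168 * ρ * C * e) := by
      calc _ = ρ * X * (1 / Real.log (ρ * X / t ^ 4)) * (Sg / 4 + C / Real.log (ρ * X)) := by ring
        _ ≤ ρ * X * (2 / t * (1 + 2 * (10 * e))) * (Sg / 4 + 4 * C * e) := by
            have : 0 < C / Real.log (ρ * X) := by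
              apply div_pos hC; rw [hla]; linarith
            have := Sg_pos
            apply mul_le_mul _ (by linarith) (by positivity) (by positivity)
            apply mul_le_mul_of_nonneg_left j2 (by positivity)
        _ = X / t * (ρ * s ^ 2 / 2 * (1 + 20 * e) + 8 * ρ * C * e * (1 + 20 * e)) := by rw [hsq]; field_simp; ring
        _ ≤ _ := by
            have : ρ * s ^ 2 / 2 = s := by rw [hρ]; field_simp
            rw [this]
            have h7 : 0 < ρ * C * e := by positivity
            have h8 : 8 * ρ * C * e * (1 + 20 * e) ≤ 168 * ρ * C * e := by
              calc 8 * ρ * C * e * (1 + 20 * e) ≤ 8 * ρ * C * e * 21 := by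
                    apply mul_le_mul_of_nonneg_left _ (by positivity)
                    linarith
                _ = _ := by ring
            apply mul_le_mul_of_nonneg_left _ hXt.le
            linarith
    linarith
  calc _ ≤ _ := main
    _ ≤ X / t * (2 * e) + X / t * e + X / t * (s * (1 + 38 * e)) + X / t * (C * ρ * e + s * (1 + 20 * e) + 168 * ρ * C * e) := by
        linarith
    _ = _ := by ring

lemma Q1_card_lower : ∀ᶠ y : ℝ in atTop, y ≤ 8 * Real.log y * (Q1 y).card := by
  obtain ⟨C, hC, h⟩ := Slog_pnt0
  filter_upwards [eventually_ge_atTop 3, Real.tendsto_log_atTop.eventually_ge_atTop (8 * C)] with y hy hl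
  have hl0 : 0 < Real.log y := by linarith
  have h1 := (abs_le.1 (h y hy)).1
  have h2 : C * y ^ 2 / Real.log y ≤ y ^ 2 / 8 := by
    rw [div_le_iff₀ hl0]
    have : 0 ≤ y ^ 2 := by positivity
    nlinarith
  have h3 : Slog y ≤ (Q1 y).card * (Real.log y * y) := by
    calc Slog y ≤ ∑ q ∈ Q1 y, Real.log y * y := by
          refine Finset.sum_le_sum (fun q hq => ?_)
          have h := mem_Q1.1 hq
          have h1 : (1:ℝ) ≤ q := by exact_mod_cast h.2.1.pos
          have := h.1
          have h3 : Real.log q ≤ Real.log y := Real.log_le_log (by linarith) (by linarith)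
          exact mul_le_mul h3 (by linarith) (by linarith) hl0.le
      _ = _ := by rw [Finset.sum_const, nsmul_eq_mul]
  have h4 : y * y ≤ (8 * Real.log y * (Q1 y).card) * y := by nlinarith
  exact le_of_mul_le_mul_right h4 (by linarith)

lemma g_anti {P : Finset (ℕ × ℕ)} {r r' : ℝ} (h : r ≤ r') : 
    ∑ e ∈ P, max (uu e.2 - r' * e.1) 0 ≤ ∑ e ∈ P, max (uu e.2 - r * e.1) 0 := by
  refine Finset.sum_le_sum (fun e _ => max_le_max ?_ le_rfl)
  have : r * e.1 ≤ r' * e.1 := by gcongr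
  linarith

lemma mid_case {X a s ℓ δ : ℝ} (hX : 0 < X) (ha : 0 < a) (hℓ : 0 < ℓ) (hδ0 : 0 ≤ δ) (hδ1 : δ ≤ 1) :
    X * s / ℓ * (1 - δ) ≤ 1 / a * (X ^ 2 / ℓ) + a / ℓ * (s ^ 2 / 4 * (1 - δ)) := by
  have h1 : X * s ≤ X ^ 2 / a + a * s ^ 2 / 4 := by
    have : X ^ 2 / a + a * s ^ 2 / 4 - X * s = (X - a * s / 2) ^ 2 / a := by field_simp; ring
    have h2 : 0 ≤ (X - a * s / 2) ^ 2 / a := by positivity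
    linarith
  have h2 : 0 ≤ X ^ 2 / a := by positivity
  have h3 : X * s * (1 - δ) ≤ X ^ 2 / a + a * s ^ 2 / 4 * (1 - δ) := by
    have := mul_le_mul_of_nonneg_right h1 (sub_nonneg.2 hδ1)
    have := mul_nonneg h2 hδ0
    linarith
  calc X * s / ℓ * (1 - δ) = X * s * (1 - δ) / ℓ := by ring
    _ ≤ (X ^ 2 / a + a * s ^ 2 / 4 * (1 - δ)) / ℓ := by gcongr
    _ = _ := by field_simp

set_option maxHeartbeats 1000000 in
lemma D_lower : ∃ C : ℝ, 0 < C ∧ ∀ᶠ L : ℝ in atTop, ∃ n : ℕ, n ≠ 0 ∧ Real.log n ≤ L ∧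
    (∀ p, p.Prime → p ∣ n → p % 3 = 1) ∧ (∀ p, p.Prime → p ∣ DD n → p % 3 = 1) ∧
    2 * √Sg * (√L / Real.log L) - C * (√L / Real.log L) * (Real.log (Real.log L) / Real.log L) ≤ Real.log (DD (DD n)) := by
  obtain ⟨C, hC, hG⟩ := G_lower0
  obtain ⟨a0, hG⟩ := eventually_atTop.1 hG
  obtain ⟨y0, hQ⟩ := eventually_atTop.1 Q1_card_lower
  obtain ⟨s, hs⟩ : ∃ s, s = √Sg := ⟨_, rfl⟩
  have hs0 : 0 < s := hs ▸ Real.sqrt_pos.2 Sg_pos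
  have hsq : Sg = s ^ 2 := by rw [hs, Real.sq_sqrt Sg_pos.le]
  obtain ⟨D, hD⟩ : ∃ D, D = 4 * (1 + 4 * C) / s ^ 2 := ⟨_, rfl⟩
  have hD0 : 0 < D := by rw [hD]; positivity
  refine ⟨2 * s * (D + 8) + 1, by positivity, ?_⟩
  filter_upwards [ev_facts (|a0| + |y0| + 2 * D + 16 / s ^ 2 + 32 / s + 4 * s)] with L ⟨X, t, w, hX, ht, hw, hL, hlX, hw1, _, hwt, hκ, htX, hX1⟩
  have ht100 : 100 ≤ t := by linarith
  have ht0 : 0 < t := by linarith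
  have hX0 : 0 < X := by linarith
  have hL0 : 0 < L := by rw [hL]; positivity
  have p1 : 0 < 16 / s ^ 2 := by positivity
  have p2 : 0 < 32 / s := by positivity
  have p3 := abs_nonneg a0
  have p4 := abs_nonneg y0
  have q1 : a0 ≤ t := by linarith [le_abs_self a0]
  have q2 : y0 ≤ t := by linarith [le_abs_self y0]
  have q3 : 2 * D ≤ t := by linarith
  have q4 : 16 / s ^ 2 ≤ t := by linarith
  have q5 : 32 / s ≤ t := by linarith
  have q6 : 4 * s ≤ t := by linarith
  clear hκ p1 p2 p3 p4
  rw [← ht, ← hw, ← hX, ← hs]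
  have ht1 : 1 ≤ t := by linarith
  have htX1 : t ≤ X := le_trans (le_self_pow₀ ht1 (by norm_num)) htX
  have htX2 : t ^ 2 ≤ X := le_trans (pow_le_pow_right₀ ht1 (by norm_num)) htX
  obtain ⟨ℓ, hℓ⟩ : ∃ ℓ, ℓ = t / 2 + 4 * w := ⟨_, rfl⟩
  have hℓ0 : 0 < ℓ := by rw [hℓ]; linarith
  have hℓt : ℓ ≤ t := by rw [hℓ]; linarith
  have hlY : Real.log (X * t ^ 4) = ℓ := by
    rw [Real.log_mul (by positivity) (by positivity), Real.log_pow, ← hw, hlX, hℓ]; norm_num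
  have hlR : Real.log (X * t) = t / 2 + w := by
    rw [Real.log_mul (by positivity) (by positivity), ← hw, hlX]
  obtain ⟨N, hN⟩ : ∃ N : ℕ, N = ⌈t⌉₊ := ⟨_, rfl⟩
  have hNt : t ≤ N := hN ▸ Nat.le_ceil t
  have hNt1 : (N:ℝ) ≤ t + 1 := hN ▸ (Nat.ceil_lt_add_one ht0.le).le
  have hN0 : 0 < N := by have : (0:ℝ) < N := by linarith
                         exact_mod_cast this
  have hN1 : 1 / (N:ℝ) ≤ 1 / t := by gcongr
  have hXY : X ≤ X * t ^ 4 := le_mul_of_one_le_right hX0.le (one_le_pow₀ ht1)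
  have hcard : (Q1 (X * t)).card * N ≤ (Q1 (X * t ^ 4)).card := by
    have h1 : ((Q1 (X * t)).card : ℝ) ≤ X * t := Q1_card (by positivity)
    have h2 := hQ (X * t ^ 4) (by linarith)
    rw [hlY] at h2
    have h3 : X * t ^ 4 ≤ 8 * t * (Q1 (X * t ^ 4)).card := by
      refine h2.trans (mul_le_mul_of_nonneg_right (by linarith) (Nat.cast_nonneg _))
    have h4 : X * t ^ 3 ≤ 8 * (Q1 (X * t ^ 4)).card := by
      have : t * (X * t ^ 3) ≤ t * (8 * (Q1 (X * t ^ 4)).card) := by linarith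
      exact le_of_mul_le_mul_left this ht0
    have h5 : ((Q1 (X * t)).card : ℝ) * N ≤ (X * t) * (2 * t) := mul_le_mul h1 (by linarith) (by positivity) (by positivity)
    have h6 : 8 * ((X * t) * (2 * t)) ≤ X * t ^ 3 := by
      calc 8 * ((X * t) * (2 * t)) = X * t ^ 2 * 16 := by ring
        _ ≤ X * t ^ 2 * t := by gcongr; linarith
        _ = _ := by ring
    have : ((Q1 (X * t)).card : ℝ) * N ≤ (Q1 (X * t ^ 4)).card := by linarith
    exact_mod_cast this
  obtain ⟨n, hn0, hnL, hn1, hn2, hn3⟩ := lower_core (R := X * t) (Y := X * t ^ 4) (B := L / ℓ) (L := L) (N := N)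
    (by positivity) (by linarith) hcard (by rw [hlY]; apply le_of_eq; field_simp)
  refine ⟨n, hn0, hnL, hn1, hn2, ?_⟩
  obtain ⟨V, hV⟩ : ∃ V, V = Real.log (DD (DD n)) := ⟨_, rfl⟩
  rw [← hV] at hn3 ⊢
  obtain ⟨e, he⟩ : ∃ e, e = w / t := ⟨_, rfl⟩
  have he0 : 0 < e := by rw [he]; positivity
  have hte : 1 / t ≤ e := by rw [he]; gcongr
  have hwe : w = e * t := by rw [he]; field_simp
  rw [← he]
  have hXt : 0 < X / t := by positivity
  -- weak target
  have weak : 2 * s * (X / t) ≤ V → 2 * s * (X / t) - (2 * s * (D + 8) + 1) * (X / t) * e ≤ V := by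
    intro h
    have : 0 ≤ (2 * s * (D + 8) + 1) * (X / t) * e := by positivity
    linarith
  have hDt : D * (1 / t) ≤ 1 / 2 := by
    rw [mul_one_div, div_le_iff₀ ht0]; linarith
  have hDs : s ^ 2 / 4 * (D * (1 / t)) = (1 + 4 * C) * (1 / t) := by rw [hD]; field_simp
  have hgen : ∀ a : ℝ, X / t ≤ a → a ≤ X * t → a / ℓ * (s ^ 2 / 4 * (1 - D * (1 / t))) ≤
      ∑ e ∈ Q1 (X * t) ×ˢ Finset.range N, max (uu e.2 - 1 / a * e.1) 0 := by
    intro a ha1 ha2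
    have ha0 : 0 < a := by linarith
    have hta : t ≤ a := by
      refine le_trans ?_ ha1
      rw [le_div_iff₀ ht0, ← sq]; exact htX2
    refine le_trans ?_ (hG a (by linarith) N hN0 (X * t) ha2)
    have l1 : t / 4 ≤ Real.log a := by
      have := Real.log_le_log hXt ha1
      rw [Real.log_div (by positivity) (by positivity), hlX, ← hw] at this
      linarith
    have l2 : Real.log a ≤ ℓ := by
      have := Real.log_le_log ha0 ha2
      rw [hlR] at this
      linarith
    have l3 : C / Real.log a ≤ 4 * C * (1 / t) := by
      calc C / Real.log a ≤ C / (t / 4) := by gcongr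
        _ = _ := by field_simp
    have l0 : 0 < Real.log a := by linarith
    have b1 : s ^ 2 / 4 * (1 - D * (1 / t)) ≤ Sg / 4 - 1 / N - C / Real.log a := by
      rw [hsq]; linarith
    have b2 : a / ℓ ≤ a / Real.log a := by gcongr
    have b3 : 0 ≤ s ^ 2 / 4 * (1 - D * (1 / t)) := mul_nonneg (by positivity) (by linarith)
    exact mul_le_mul b2 b1 b3 (by positivity)
  have hbig : 2 * s * (X / t) + 1 ≤ ∑ e ∈ Q1 (X * t) ×ˢ Finset.range N, max (uu e.2 - 1 / (X * t) * e.1) 0 := by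
    refine le_trans ?_ (hgen (X * t) ?_ le_rfl)
    · have b1 : s ^ 2 / 8 ≤ s ^ 2 / 4 * (1 - D * (1 / t)) := by
        have h9 := mul_le_mul_of_nonneg_left hDt (show 0 ≤ s ^ 2 / 4 by positivity)
        linarith
      have b2 : X ≤ X * t / ℓ := by rw [le_div_iff₀ hℓ0]; gcongr
      have b3 : X * (s ^ 2 / 8) ≤ X * t / ℓ * (s ^ 2 / 4 * (1 - D * (1 / t))) := mul_le_mul b2 b1 (by positivity) (by positivity)
      have b4 : 2 * s * (X / t) ≤ X * (s ^ 2 / 16) := by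
        have : 2 * s ≤ t * (s ^ 2 / 16) := by
          rw [div_le_iff₀ hs0] at q5
          have h9 := mul_le_mul_of_nonneg_right q5 hs0.le
          linarith
        calc 2 * s * (X / t) ≤ t * (s ^ 2 / 16) * (X / t) := by gcongr
          _ = _ := by field_simp
      have b5 : 1 ≤ X * (s ^ 2 / 16) := by
        have := q4.trans htX1
        rw [div_le_iff₀ (by positivity)] at this
        linarith
      linarith
    · rw [div_le_iff₀ ht0]
      have : X ≤ X * (t * t) := le_mul_of_one_le_right hX0.le (one_le_mul_of_one_le_of_one_le ht1 ht1)
      linarith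
  rcases hn3 with h | ⟨r, hr, h⟩
  · apply weak
    have := h (1 / (X * t)) (by positivity)
    linarith
  · have hrB : 0 ≤ r * (L / ℓ) := by positivity
    rcases le_or_gt r (1 / (X * t)) with hc | hc
    · apply weak
      have := g_anti (P := Q1 (X * t) ×ˢ Finset.range N) hc
      linarith
    rcases le_or_gt (t / X) r with hc2 | hc2
    · apply weak
      have g0 : 0 ≤ ∑ e ∈ Q1 (X * t) ×ˢ Finset.range N, max (uu e.2 - r * e.1) 0 :=
        Finset.sum_nonneg (fun _ _ => le_max_right _ _)
      have c1 : X ≤ r * (L / ℓ) := by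
        calc X = t / X * (X ^ 2 / t) := by field_simp
          _ ≤ r * (L / ℓ) := by rw [hL]; gcongr
      have c2 : 2 * s * (X / t) ≤ X / 2 := by
        have : 2 * s ≤ t / 2 := by linarith
        calc 2 * s * (X / t) ≤ t / 2 * (X / t) := by gcongr
          _ = _ := by field_simp
      linarith
    · have ha0 : 0 < 1 / r := by positivity
      have a1 : X / t ≤ 1 / r := by
        rw [le_div_iff₀ hr]
        calc X / t * r ≤ X / t * (t / X) := by gcongr
          _ = 1 := by field_simp
      have a2 : 1 / r ≤ X * t := by
        rw [div_le_iff₀ hr]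
        rw [div_lt_iff₀ (by positivity)] at hc
        linarith
      have hg := hgen (1 / r) a1 a2
      have hm := mid_case (s := s) hX0 ha0 hℓ0 (δ := D * (1 / t)) (by positivity) (by linarith)
      rw [one_div_one_div] at hg hm
      rw [hL] at h
      have k1 : X * s / ℓ * (1 - D * (1 / t)) - 1 ≤ V := by linarith
      have k2 : 2 * s * (X / t) * (1 - 8 * e) ≤ X * s / ℓ := by
        rw [le_div_iff₀ hℓ0, hℓ, hwe]
        have : 2 * s * (X / t) * (1 - 8 * e) * (t / 2 + 4 * (e * t)) = X * s * (1 - 64 * e ^ 2) := by field_simp; ring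
        rw [this]
        have : 0 ≤ X * s * e ^ 2 := by positivity
        linarith
      have k3 : 1 ≤ X / t * e := by
        calc 1 ≤ X / t * (1 / t) := by
              rw [show X / t * (1 / t) = X / t ^ 2 by field_simp, le_div_iff₀ (by positivity)]; linarith
          _ ≤ _ := by gcongr
      have k4 : 2 * s * (X / t) * (1 - 8 * e) * (1 - D * (1 / t)) ≤ X * s / ℓ * (1 - D * (1 / t)) :=
        mul_le_mul_of_nonneg_right k2 (by linarith)
      have k5 : 1 - 8 * e - D * e ≤ (1 - 8 * e) * (1 - D * (1 / t)) := by
        have h1 : D * (1 / t) ≤ D * e := by gcongr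
        have h2 : 0 ≤ e * (D * (1 / t)) := by positivity
        linarith
      have k6 : 2 * s * (X / t) * (1 - 8 * e - D * e) ≤ 2 * s * (X / t) * ((1 - 8 * e) * (1 - D * (1 / t))) := by gcongr
      linarith

lemma fForm_cases (n : ℕ) (hn : n ≠ 0) : fForm n = DD n ∨ (fForm n = 0 ∧ ∃ p, p.Prime ∧ p ∣ n ∧ p % 3 ≠ 1) := by
  have h : fForm n = rr n / 6 := by
    unfold fForm
    rw [if_neg hn]
    rfl
  rcases rr_formula n hn with h1 | ⟨h1, h2⟩
  · left; rw [h, h1]; omega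
  · right; exact ⟨by rw [h, h1], h2⟩

lemma fForm_eq (n : ℕ) (hn : n ≠ 0) (h : ∀ p, p.Prime → p ∣ n → p % 3 = 1) : fForm n = DD n := by
  rcases fForm_cases n hn with h1 | ⟨_, p, pp, hp, h3⟩
  · exact h1
  · exact absurd (h p pp hp) h3

lemma cBEFS_eq : cBEFS / √2 = 2 * √Sg := by
  have : cBEFS = √(8 * Sg) := rfl
  rw [this, ← Real.sqrt_div' _ (by norm_num), show 8 * Sg / 2 = 2 ^ 2 * Sg by ring, Real.sqrt_mul (by norm_num), Real.sqrt_sq (by norm_num)]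

theorem maxOrder_iterated_form_eisenstein :
    ∃ C : ℝ, 0 < C ∧ ∀ᶠ x : ℕ in atTop,
      |(⨆ n ∈ Finset.Icc 1 x, Real.log (fForm (fForm n))) -
          Real.sqrt (Real.log x) / Real.log (Real.log x) * (cBEFS / Real.sqrt 2)| ≤
        C * (Real.sqrt (Real.log x) / Real.log (Real.log x)) *
          (Real.log (Real.log (Real.log x)) / Real.log (Real.log x)) := by
  obtain ⟨C1, hC1, hU⟩ := D_upper
  obtain ⟨C2, hC2, hL⟩ := D_lower
  refine ⟨C1 + C2, by positivity, ?_⟩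
  have hlim : Tendsto (fun x : ℕ => Real.log (x:ℝ)) atTop atTop := Real.tendsto_log_atTop.comp tendsto_natCast_atTop_atTop
  filter_upwards [hlim.eventually hU, hlim.eventually hL, hlim.eventually (ev_facts 1), eventually_gt_atTop 0] with x hU hL hev hx0
  rw [cBEFS_eq]
  obtain ⟨X, t, w, hX, ht, hw, _, _, hw1, _, hwt, _, _, hX1⟩ := hev
  rw [← ht, ← hw, ← hX] at hU hL ⊢
  have ht0 : 0 < t := by linarith
  have hE : 0 < X / t * (w / t) := by positivity
  have hM : 0 ≤ 2 * √Sg * (X / t) := by positivity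
  have hA0 : 0 ≤ 2 * √Sg * (X / t) + C1 * (X / t) * (w / t) := by positivity
  have hpt : ∀ n ∈ Finset.Icc 1 x, Real.log (fForm (fForm n)) ≤ 2 * √Sg * (X / t) + C1 * (X / t) * (w / t) := by
    intro n hn
    rw [Finset.mem_Icc] at hn
    have hn0 : n ≠ 0 := by omega
    rcases fForm_cases n hn0 with h1 | ⟨h1, _⟩
    · rw [h1]
      rcases fForm_cases (DD n) (DD_pos n).ne' with h2 | ⟨h2, _⟩
      · rw [h2]
        apply hU n hn0
        exact Real.log_le_log (by exact_mod_cast hn.1) (by exact_mod_cast hn.2)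
      · rw [h2]; simpa using hA0
    · rw [h1]
      have : fForm 0 = 1 := by simp [fForm]
      rw [this]; simpa using hA0
  have hin : ∀ n : ℕ, (⨆ (_ : n ∈ Finset.Icc 1 x), Real.log (fForm (fForm n))) ≤ 2 * √Sg * (X / t) + C1 * (X / t) * (w / t) :=
    fun n => Real.iSup_le (fun h => hpt n h) hA0
  have hup : (⨆ n ∈ Finset.Icc 1 x, Real.log (fForm (fForm n))) ≤ 2 * √Sg * (X / t) + C1 * (X / t) * (w / t) :=
    Real.iSup_le hin hA0
  have hlow : 2 * √Sg * (X / t) - C2 * (X / t) * (w / t) ≤ ⨆ n ∈ Finset.Icc 1 x, Real.log (fForm (fForm n)) := by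
    obtain ⟨n, hn0, hnx, hp1, hp2, hv⟩ := hL
    have hmem : n ∈ Finset.Icc 1 x := by
      rw [Finset.mem_Icc]
      refine ⟨Nat.pos_of_ne_zero hn0, ?_⟩
      have h1 : (0:ℝ) < n := by exact_mod_cast Nat.pos_of_ne_zero hn0
      have h2 : (0:ℝ) < x := by exact_mod_cast hx0
      have := (Real.log_le_log_iff h1 h2).1 hnx
      exact_mod_cast this
    refine le_ciSup_of_le ⟨_, Set.forall_mem_range.2 hin⟩ n ?_
    rw [ciSup_pos hmem, fForm_eq n hn0 hp1, fForm_eq (DD n) (DD_pos n).ne' hp2]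
    exact hv
  have g1 : 0 < C1 * (X / t) * (w / t) := by positivity
  have g2 : 0 < C2 * (X / t) * (w / t) := by positivity
  rw [abs_le]
  constructor <;> linarith
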